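/- arXiv:2206.00072 — 6 statements merged into one kernel-verified Lean document; each statement's English description precedes it below -/
import Mathlib

section
/- Let F be a finite field with q elements and let M be an n×n matrix over F[x] with det(M) ≠ 0 and deg(det(M)) = t. Then for every integer k ≥ t, the number of matrices X in the orbit GL_n(F[x])·M = {gM : g ∈ GL_n(F[x])} all of whose entries have degree at most k equals #GL_n(F) · q^{(n-1)(nk−t)}, where #GL_n(F) is the number of invertible n×n matrices over F. -/
open Polynomial Matrix

namespace UCount
variable {F : Type*} [Field F] {ι : Type*} [Fintype ι] [DecidableEq ι]

/-- the matrix of leading row coefficients with respect to the row degree bounds `e` -/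
def lead (e : ι → ℕ) (A : Matrix ι ι F[X]) : Matrix ι ι F := Matrix.of fun i j => (A i j).coeff (e i)

lemma coeff_prod_bd {ι : Type*} [DecidableEq ι] (s : Finset ι) (f : ι → F[X]) (e : ι → ℕ) (h : ∀ i ∈ s, (f i).natDegree ≤ e i) :
    (∏ i ∈ s, f i).natDegree ≤ ∑ i ∈ s, e i ∧
    (∏ i ∈ s, f i).coeff (∑ i ∈ s, e i) = ∏ i ∈ s, (f i).coeff (e i) := by
  induction s using Finset.induction_on with
  | empty => simp
  | insert a s ha ih =>
    obtain ⟨h1, h2⟩ := ih (fun i hi => h i (Finset.mem_insert_of_mem hi))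
    have h3 := h a (Finset.mem_insert_self _ _)
    simp only [Finset.prod_insert ha, Finset.sum_insert ha]
    refine ⟨natDegree_mul_le_of_le h3 h1, ?_⟩
    rw [coeff_mul_add_eq_of_natDegree_le h3 h1, h2]

lemma det_bd (e : ι → ℕ) (A : Matrix ι ι F[X]) (h : ∀ i j, (A i j).natDegree ≤ e i) :
    A.det.natDegree ≤ ∑ i, e i ∧ A.det.coeff (∑ i, e i) = (lead e A).det := by
  have key : ∀ σ : Equiv.Perm ι, (∏ i, A (σ i) i).natDegree ≤ ∑ i, e i ∧
      (∏ i, A (σ i) i).coeff (∑ i, e i) = ∏ i, (A (σ i) i).coeff (e (σ i)) := by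
    intro σ
    have := coeff_prod_bd Finset.univ (fun i => A (σ i) i) (fun i => e (σ i)) (fun i _ => h _ _)
    rwa [Equiv.sum_comp σ e] at this
  rw [det_apply, det_apply]
  constructor
  · apply natDegree_sum_le_of_forall_le
    intro σ _
    exact (natDegree_smul_le _ _).trans (key σ).1
  · rw [finsetSum_coeff]
    refine Finset.sum_congr rfl fun σ _ => ?_
    rw [coeff_smul, (key σ).2]
    rfl

lemma red (e : ι → ℕ) (A : Matrix ι ι F[X]) (h : ∀ i j, (A i j).natDegree ≤ e i)
    (c : ι → F) (hc : c ≠ 0) (hl : c ᵥ* lead e A = 0) (hdet : A.det ≠ 0) :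
    ∃ i, c i ≠ 0 ∧ 0 < e i ∧ ∃ p : ι → F[X], p i = 1 ∧ (∀ j, c j = 0 → p j = 0) ∧
      ∀ j, ((p ᵥ* A) j).natDegree ≤ e i - 1 := by
  classical
  obtain ⟨i0, hi0⟩ := Function.ne_iff.1 hc
  obtain ⟨i, hi, hmax⟩ := Finset.exists_max_image (Finset.univ.filter fun i => c i ≠ 0) e
    ⟨i0, by simpa using hi0⟩
  simp only [Finset.mem_filter, Finset.mem_univ, true_and] at hi hmax
  set p : ι → F[X] := fun j => C (c j / c i) * X ^ (e i - e j) with hp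
  have hpi : p i = 1 := by simp [hp, hi]
  have hterm : ∀ j l, (p l * A l j).natDegree ≤ e i ∧
      (p l * A l j).coeff (e i) = (c l / c i) * (A l j).coeff (e l) := by
    intro j l
    by_cases hcl : c l = 0
    · simp [hp, hcl]
    · have hle := hmax l hcl
      have h1 : (p l).natDegree ≤ e i - e l := natDegree_C_mul_X_pow_le _ _
      have h2 : e i - e l + e l = e i := by omega
      constructor
      · rw [← h2]; exact natDegree_mul_le_of_le h1 (h l j)
      · conv_lhs => rw [← h2]
        rw [coeff_mul_add_eq_of_natDegree_le h1 (h l j)]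
        simp [hp]
  have hdeg : ∀ j, ((p ᵥ* A) j).natDegree ≤ e i := by
    intro j
    simp only [vecMul, dotProduct]
    exact natDegree_sum_le_of_forall_le _ _ fun l _ => (hterm j l).1
  have hco : ∀ j, ((p ᵥ* A) j).coeff (e i) = 0 := by
    intro j
    simp only [vecMul, dotProduct, finsetSum_coeff, (hterm j _).2]
    have := congrFun hl j
    simp only [vecMul, dotProduct, lead, Matrix.of_apply, Pi.zero_apply] at this
    calc _ = (c i)⁻¹ * ∑ l, c l * (A l j).coeff (e l) := by
            rw [Finset.mul_sum]; refine Finset.sum_congr rfl fun l _ => ?_; ring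
      _ = 0 := by rw [this, mul_zero]
  refine ⟨i, hi, ?_, p, hpi, fun j hj => by simp [hp, hj], fun j => ?_⟩
  · by_contra h0
    have h0 : e i = 0 := by omega
    apply hdet
    apply Matrix.exists_vecMul_eq_zero_iff.1
    refine ⟨p, fun hp0 => by simp [hp0] at hpi, ?_⟩
    ext1 j
    have h1 := hdeg j
    have h2 := hco j
    rw [h0] at h1 h2
    rw [eq_C_of_natDegree_le_zero h1, h2]; simp
  · rw [natDegree_le_iff_coeff_eq_zero]
    intro N hN
    rcases Nat.lt_or_ge (e i) N with h1 | h1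
    · exact coeff_eq_zero_of_natDegree_lt ((hdeg j).trans_lt h1)
    · have : N = e i := by omega
      rw [this]; exact hco j

lemma det_elem (i : ι) (p : ι → F[X]) (hp : p i = 1) : (updateRow (1 : Matrix ι ι F[X]) i p).det = 1 := by
  have := cramer_transpose_apply (1 : Matrix ι ι F[X]) p i
  rw [← this]; simp [hp]

lemma elem_mul (i : ι) (p : ι → F[X]) (A : Matrix ι ι F[X]) :
    updateRow (1 : Matrix ι ι F[X]) i p * A = updateRow A i (p ᵥ* A) := by
  ext a b
  by_cases h : a = i
  · subst h; simp [Matrix.mul_apply, vecMul, dotProduct]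
  · simp [Matrix.mul_apply, h, Matrix.one_apply]

lemma exists_reduced : ∀ (N : ℕ) (e : ι → ℕ) (A : Matrix ι ι F[X]), ∑ i, e i = N →
    (∀ i j, (A i j).natDegree ≤ e i) → A.det ≠ 0 →
    ∃ (P : Matrix ι ι F[X]) (e' : ι → ℕ), P.det = 1 ∧ (∀ i j, ((P * A) i j).natDegree ≤ e' i) ∧
      (lead e' (P * A)).det ≠ 0 := by
  intro N
  induction N using Nat.strong_induction_on with
  | _ N ih =>
  intro e A hN h hdet
  by_cases hl : (lead e A).det = 0
  · obtain ⟨c, hc, hcl⟩ := Matrix.exists_vecMul_eq_zero_iff.2 hl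
    obtain ⟨i, hci, hei, p, hpi, -, hp⟩ := red e A h c hc hcl hdet
    set Q := updateRow (1 : Matrix ι ι F[X]) i p with hQ
    have hQd : Q.det = 1 := det_elem i p hpi
    have hlt : ∑ l, Function.update e i (e i - 1) l < N := by
      rw [← hN]
      apply Finset.sum_lt_sum
      · intro l _
        by_cases hli : l = i
        · subst hli; simp
        · simp [hli]
      · exact ⟨i, Finset.mem_univ _, by simp; omega⟩
    obtain ⟨P, e', hP, hb, hl'⟩ := ih _ hlt (Function.update e i (e i - 1)) (Q * A) rfl (by
      intro a b
      rw [hQ, elem_mul]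
      by_cases ha : a = i
      · subst ha; simpa using hp b
      · simpa [ha] using h a b) (by rw [det_mul, hQd, one_mul]; exact hdet)
    exact ⟨P * Q, e', by rw [det_mul, hP, hQd, one_mul], by rwa [Matrix.mul_assoc],
      by rwa [Matrix.mul_assoc]⟩
  · exact ⟨1, e, det_one, by simpa using h, by simpa using hl⟩

/-- completions of row `i0` of degree at most `d` -/
def T (A : Matrix ι ι F[X]) (i0 : ι) (d : ℕ) : Set (ι → F[X]) :=
  {v | IsUnit (updateRow A i0 v).det ∧ ∀ j, (v j).natDegree ≤ d}

lemma T_elem (A : Matrix ι ι F[X]) (i0 i : ι) (hi : i ≠ i0) (d : ℕ) (p : ι → F[X]) (hpi : p i = 1)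
    (hp0 : p i0 = 0) : T (updateRow A i (p ᵥ* A)) i0 d = T A i0 d := by
  ext v
  have hv : p ᵥ* updateRow A i0 v = p ᵥ* A := by
    ext1 b
    simp only [vecMul, dotProduct]
    refine Finset.sum_congr rfl fun l _ => ?_
    by_cases hl : l = i0
    · subst hl; simp [hp0]
    · simp [hl]
  have : updateRow (updateRow A i (p ᵥ* A)) i0 v =
      updateRow (1 : Matrix ι ι F[X]) i p * updateRow A i0 v := by
    rw [elem_mul, hv]
    ext a b
    by_cases ha : a = i0
    · subst ha; simp [hi.symm]
    · by_cases ha' : a = i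
      · subst ha'
        simp [ha]
      · simp [ha, ha']
  simp only [T, Set.mem_ofPred_eq]
  rw [this, det_mul, det_elem i p hpi, one_mul]

/-- the translation vector -/
noncomputable def trans (e : ι → ℕ) (A : Matrix ι ι F[X]) (i0 : ι) (d : ℕ) (α : {i // i ≠ i0} → F) : ι → F[X] :=
  fun j => ∑ i : {i // i ≠ i0}, C (α i) * X ^ (d - e i) * A i j

lemma trans_deg (e : ι → ℕ) (A : Matrix ι ι F[X]) (i0 : ι) (d : ℕ) (α : {i // i ≠ i0} → F)
    (h : ∀ i j, i ≠ i0 → (A i j).natDegree ≤ e i) (he : ∀ i, i ≠ i0 → e i ≤ d) (j : ι) :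
    (trans e A i0 d α j).natDegree ≤ d ∧
    (trans e A i0 d α j).coeff d = ∑ i : {i // i ≠ i0}, α i * lead e A i j := by
  have hterm : ∀ i : {i // i ≠ i0}, (C (α i) * X ^ (d - e i) * A i j).natDegree ≤ d ∧
      (C (α i) * X ^ (d - e i) * A i j).coeff d = α i * lead e A i j := by
    intro i
    have h2 : d - e i + e i = d := Nat.sub_add_cancel (he i i.2)
    have h1 : (C (α i) * X ^ (d - e i)).natDegree ≤ d - e i := natDegree_C_mul_X_pow_le _ _
    constructor
    · conv_rhs => rw [← h2]
      exact natDegree_mul_le_of_le h1 (h i j i.2)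
    · have := coeff_mul_add_eq_of_natDegree_le h1 (h i j i.2)
      rw [h2] at this
      rw [this]; simp [lead]
  constructor
  · exact natDegree_sum_le_of_forall_le _ _ fun l _ => (hterm l).1
  · simp only [trans, finsetSum_coeff, (hterm _).2]

lemma det_trans (e : ι → ℕ) (A : Matrix ι ι F[X]) (i0 : ι) (d : ℕ) (α : {i // i ≠ i0} → F) (w : ι → F[X]) :
    (updateRow A i0 (w + trans e A i0 d α)).det = (updateRow A i0 w).det := by
  rw [det_updateRow_add]
  have : (updateRow A i0 (trans e A i0 d α)).det = 0 := by
    by_contra hne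
    have h2 : trans e A i0 d α = ∑ i : {i // i ≠ i0}, (C (α i) * X ^ (d - e i)) • A i := by
      ext1 j; simp [trans, Finset.sum_apply]
    apply hne
    apply Matrix.exists_vecMul_eq_zero_iff.1
    refine ⟨fun i => if h : i ≠ i0 then C (α ⟨i, h⟩) * X ^ (d - e i) else -1, ?_, ?_⟩
    · intro h0
      have := congrFun h0 i0
      simp at this
    · ext1 j
      simp only [vecMul, dotProduct, Pi.zero_apply]
      rw [← Fintype.sum_subtype_add_sum_subtype (fun i => i ≠ i0)]
      have e1 : ∀ i : {i // i ≠ i0}, updateRow A i0 (trans e A i0 d α) i j = A i j := fun i => by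
        simp [i.2]
      have e2 : ∀ i : {i // ¬ i ≠ i0}, updateRow A i0 (trans e A i0 d α) i j = trans e A i0 d α j := by
        rintro ⟨i, hi⟩
        have : i = i0 := by simpa using hi
        subst this; simp
      have : Unique {i // ¬ i ≠ i0} := ⟨⟨⟨i0, by simp⟩⟩, fun ⟨i, hi⟩ => by
        ext; simpa using hi⟩
      simp only [e1, e2, Fintype.sum_unique]
      have h3 := (default : {i // ¬ i ≠ i0}).2
      rw [dif_neg h3]
      simp only [trans]
      rw [Finset.sum_congr rfl (fun i _ => by rw [dif_pos i.2])]
      ring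
  rw [this, add_zero]

lemma step_reduced (e : ι → ℕ) (A : Matrix ι ι F[X]) (i0 : ι) (d : ℕ)
    (h : ∀ i j, i ≠ i0 → (A i j).natDegree ≤ e i) (he : ∀ i, i ≠ i0 → e i ≤ d + 1)
    (hli : ∀ c : ι → F, c i0 = 0 → c ᵥ* lead e A = 0 → c = 0) :
    Nonempty (T A i0 (d + 1) ≃ ({i // i ≠ i0} → F) × T A i0 d) := by
  have hli' : ∀ α : {i // i ≠ i0} → F, (∀ j, ∑ i : {i // i ≠ i0}, α i * lead e A i j = 0) → α = 0 := by
    intro α hα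
    have := hli (fun i => if h : i ≠ i0 then α ⟨i, h⟩ else 0) (by simp) (by
      ext1 j
      simp only [vecMul, dotProduct, Pi.zero_apply]
      rw [Fintype.sum_eq_add_sum_subtype_ne _ i0, dif_neg (by simp), zero_mul, zero_add,
        Finset.sum_congr rfl (fun (i : {i // i ≠ i0}) _ => by rw [dif_pos i.2])]
      exact hα j)
    ext1 i
    have h2 := congrFun this i
    simpa [i.2] using h2
  refine ⟨(Equiv.ofBijective (fun x : ({i // i ≠ i0} → F) × T A i0 d =>
    (⟨x.2.1 + trans e A i0 (d + 1) x.1, by rw [det_trans]; exact x.2.2.1, fun j =>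
      natDegree_add_le_of_degree_le ((x.2.2.2 j).trans (Nat.le_succ _))
        (trans_deg e A i0 (d+1) x.1 h he j).1⟩ : T A i0 (d + 1))) ⟨?_, ?_⟩).symm⟩
  · rintro ⟨α, w, hw⟩ ⟨β, u, hu⟩ hxy
    replace hxy : w + trans e A i0 (d + 1) α = u + trans e A i0 (d + 1) β := congrArg Subtype.val hxy
    have hab : α = β := by
      rw [← sub_eq_zero]
      apply hli'
      intro j
      have h1 := congrArg (fun f : F[X] => f.coeff (d + 1)) (congrFun hxy j)
      simp only [Pi.add_apply, coeff_add, (trans_deg e A i0 (d+1) _ h he j).2,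
        coeff_eq_zero_of_natDegree_lt (Nat.lt_succ_of_le (hw.2 j)),
        coeff_eq_zero_of_natDegree_lt (Nat.lt_succ_of_le (hu.2 j)), zero_add] at h1
      simp [sub_mul, Finset.sum_sub_distrib, h1]
    subst hab
    simpa using hxy
  · rintro ⟨v, hv1, hv2⟩
    -- leading coefficient lies in the span
    have hdet : (lead (Function.update e i0 (d+1)) (updateRow A i0 v)).det = 0 := by
      rw [← (det_bd _ _ _).2]
      · apply coeff_eq_zero_of_natDegree_lt
        rw [natDegree_eq_zero_of_isUnit hv1]
        apply Finset.sum_pos'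
        · intros; exact Nat.zero_le _
        · exact ⟨i0, Finset.mem_univ _, by simp⟩
      · intro i j
        by_cases hi : i = i0
        · subst hi; simpa using hv2 j
        · simpa [hi] using h i j hi
    obtain ⟨c, hc, hcl⟩ := Matrix.exists_vecMul_eq_zero_iff.2 hdet
    have hsum : ∀ j, c i0 * (v j).coeff (d+1) + ∑ i : {i // i ≠ i0}, c i * lead e A i j = 0 := by
      intro j
      have := congrFun hcl j
      simp only [vecMul, dotProduct, Pi.zero_apply] at this
      rw [Fintype.sum_eq_add_sum_subtype_ne _ i0] at this
      rw [← this]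
      congr 1
      · simp [lead]
      · refine Finset.sum_congr rfl fun i _ => ?_
        simp [lead, i.2]
    have hc0 : c i0 ≠ 0 := by
      intro h0
      have h2 := hli' (fun i => c i) (fun j => by simpa [h0] using hsum j)
      apply hc
      ext1 i
      by_cases hi : i = i0
      · rw [hi, h0]; rfl
      · exact congrFun h2 ⟨i, hi⟩
    set α : {i // i ≠ i0} → F := fun i => - c i / c i0 with hα
    have hco : ∀ j, (trans e A i0 (d+1) α j).coeff (d+1) = (v j).coeff (d+1) := by
      intro j
      rw [(trans_deg e A i0 (d+1) _ h he j).2]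
      have h1 : ∑ i : {i // i ≠ i0}, α i * lead e A i j =
          - (c i0)⁻¹ * ∑ i : {i // i ≠ i0}, c i * lead e A i j := by
        rw [Finset.mul_sum]; refine Finset.sum_congr rfl fun i _ => ?_
        rw [hα]; ring
      rw [h1, eq_neg_of_add_eq_zero_right (hsum j)]
      field_simp
    refine ⟨⟨α, v - trans e A i0 (d+1) α, ?_, ?_⟩, ?_⟩
    · rw [← det_trans e A i0 (d+1) α, sub_add_cancel]; exact hv1
    · intro j
      rw [natDegree_le_iff_coeff_eq_zero]
      intro N hN
      rw [Pi.sub_apply, coeff_sub]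
      rcases Nat.lt_or_ge (d+1) N with h1 | h1
      · rw [coeff_eq_zero_of_natDegree_lt ((hv2 j).trans_lt h1),
          coeff_eq_zero_of_natDegree_lt (((trans_deg e A i0 (d+1) α h he j).1).trans_lt h1), sub_zero]
      · have : N = d + 1 := by omega
        rw [this, hco, sub_self]
    · simp

lemma step_aux (i0 : ι) (d : ℕ) : ∀ (N : ℕ) (e : ι → ℕ) (A : Matrix ι ι F[X]), ∑ i, e i = N →
    (∀ i j, (A i j).natDegree ≤ e i) → (∀ i, i ≠ i0 → e i ≤ d + 1) → A.det ≠ 0 →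
    Nonempty (T A i0 (d + 1) ≃ ({i // i ≠ i0} → F) × T A i0 d) := by
  intro N
  induction N using Nat.strong_induction_on with
  | _ N ih =>
  intro e A hN h he hdet
  by_cases hl : ∀ c : ι → F, c i0 = 0 → c ᵥ* lead e A = 0 → c = 0
  · exact step_reduced e A i0 d (fun i j _ => h i j) he hl
  · push Not at hl
    obtain ⟨c, hc0, hcl, hc⟩ := hl
    obtain ⟨i, hci, hei, p, hpi, hpz, hp⟩ := red e A h c hc hcl hdet
    have hi : i ≠ i0 := fun hh => hci (hh ▸ hc0)
    have hlt : ∑ l, Function.update e i (e i - 1) l < N := by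
      rw [← hN]
      apply Finset.sum_lt_sum
      · intro l _
        by_cases hli : l = i
        · subst hli; simp
        · simp [hli]
      · exact ⟨i, Finset.mem_univ _, by simp; omega⟩
    have := ih _ hlt (Function.update e i (e i - 1)) (updateRow A i (p ᵥ* A)) rfl (by
      intro a b
      by_cases ha : a = i
      · subst ha; simpa using hp b
      · simpa [ha] using h a b) (by
      intro a ha
      by_cases hai : a = i
      · subst hai; have := he a ha; simp; omega
      · simpa [hai] using he a ha) (by
      rw [← elem_mul, det_mul, det_elem i p hpi, one_mul]; exact hdet)
    rwa [T_elem A i0 i hi _ p hpi (hpz i0 hc0), T_elem A i0 i hi _ p hpi (hpz i0 hc0)] at this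

lemma T_mono (A : Matrix ι ι F[X]) (i0 : ι) (d : ℕ) : T A i0 d ⊆ T A i0 (d+1) :=
  fun _ hv => ⟨hv.1, fun j => (hv.2 j).trans (Nat.le_succ d)⟩

lemma step (i0 : ι) (d : ℕ) (A : Matrix ι ι F[X])
    (h : ∀ i j, i ≠ i0 → (A i j).natDegree ≤ d + 1) :
    Nonempty (T A i0 (d + 1) ≃ ({i // i ≠ i0} → F) × T A i0 d) := by
  by_cases hne : (T A i0 (d+1)).Nonempty
  · obtain ⟨v, hv⟩ := hne
    have hT : ∀ k, T (updateRow A i0 v) i0 k = T A i0 k := by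
      intro k; ext w; simp [T]
    have := step_aux i0 d _ (fun _ => d + 1) (updateRow A i0 v) rfl (by
      intro i j
      by_cases hi : i = i0
      · subst hi; simpa using hv.2 j
      · simpa [hi] using h i j hi) (fun _ _ => le_rfl) hv.1.ne_zero
    rwa [hT, hT] at this
  · have h1 : IsEmpty (T A i0 (d+1)) := by
      rw [Set.not_nonempty_iff_eq_empty] at hne
      rw [hne]; infer_instance
    have h2 : IsEmpty (T A i0 d) := ⟨fun x => h1.false ⟨x.1, T_mono A i0 d x.2⟩⟩
    exact ⟨Equiv.equivOfIsEmpty _ _⟩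

/-- unimodular matrices with row degree bounds -/
def S (m : ι → ℕ) : Set (Matrix ι ι F[X]) := {A | IsUnit A.det ∧ ∀ i j, (A i j).natDegree ≤ m i}

/-- the possible remaining rows -/
def Bs (F : Type*) [Field F] (m : ι → ℕ) (i0 : ι) : Set (Matrix ι ι F[X]) :=
  {A | A i0 = 0 ∧ ∀ i j, i ≠ i0 → (A i j).natDegree ≤ m i}

noncomputable def sEquiv (m : ι → ℕ) (i0 : ι) : (S m : Set (Matrix ι ι F[X])) ≃ Σ B : Bs F m i0, T B.1 i0 (m i0) where
  toFun A := ⟨⟨updateRow A.1 i0 0, by simp, fun i j hi => by simpa [hi] using A.2.2 i j⟩,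
    ⟨A.1 i0, by rw [updateRow_idem, updateRow_eq_self]; exact A.2.1, fun j => A.2.2 i0 j⟩⟩
  invFun x := ⟨updateRow x.1.1 i0 x.2.1, x.2.2.1, fun i j => by
    by_cases hi : i = i0
    · subst hi; simpa using x.2.2.2 j
    · simpa [hi] using x.1.2.2 i j hi⟩
  left_inv A := by simp
  right_inv := by
    rintro ⟨⟨B, hB⟩, v, hv⟩
    have : updateRow B i0 0 = B := by rw [← hB.1]; simp
    have h2 : (⟨updateRow (updateRow B i0 v) i0 0, by simp, fun i j hi => by simpa [hi] using hB.2 i j hi⟩ : Bs F m i0) = ⟨B, hB⟩ := by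
      ext1; simpa using this
    refine Sigma.ext h2 ?_
    refine (Subtype.heq_iff_coe_eq ?_).2 ?_
    · intro x; simp [T]
    · simp

lemma card_step [Fintype F] (m : ι → ℕ) (i0 : ι) (d : ℕ) (hd : m i0 = d + 1) (hmax : ∀ i, m i ≤ m i0) :
    Nat.card (S m : Set (Matrix ι ι F[X])) = Fintype.card F ^ (Fintype.card ι - 1) *
      Nat.card (S (Function.update m i0 d) : Set (Matrix ι ι F[X])) := by
  have hB : Bs F (Function.update m i0 d) i0 = Bs F m i0 := by
    ext A
    simp only [Bs, Set.mem_ofPred_eq]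
    refine and_congr_right fun _ => forall_congr' fun i => forall_congr' fun j => forall_congr' fun hi => ?_
    simp [hi]
  have e1 := sEquiv (F := F) m i0
  have e2 := sEquiv (F := F) (Function.update m i0 d) i0
  rw [hB, Function.update_self] at e2
  rw [hd] at e1
  have e3 : ∀ B : Bs F m i0, Nonempty (T B.1 i0 (d + 1) ≃ ({i // i ≠ i0} → F) × T B.1 i0 d) :=
    fun B => step i0 d B.1 fun i j hi => (B.2.2 i j hi).trans (hd ▸ hmax i)
  have e4 : (S m : Set (Matrix ι ι F[X])) ≃ ({i // i ≠ i0} → F) × (S (Function.update m i0 d) : Set (Matrix ι ι F[X])) :=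
    e1.trans ((Equiv.sigmaCongrRight fun B => (e3 B).some).trans
      ((Equiv.mk (fun x => (x.2.1, ⟨x.1, x.2.2⟩)) (fun y => ⟨y.2.1, y.1, y.2.2⟩) (fun _ => rfl) (fun _ => rfl) :
        (Σ B : Bs F m i0, ({i // i ≠ i0} → F) × T B.1 i0 d) ≃
          ({i // i ≠ i0} → F) × Σ B : Bs F m i0, T B.1 i0 d).trans
      (Equiv.prodCongr (Equiv.refl _) e2.symm)))
  rw [Nat.card_congr e4, Nat.card_prod]
  congr 1
  simp [Fintype.card_subtype_compl]

lemma card_zero (m : ι → ℕ) (hm : ∀ i, m i = 0) :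
    Nat.card (S m : Set (Matrix ι ι F[X])) = Nat.card (GL ι F) := by
  symm
  apply Nat.card_congr
  refine Equiv.ofBijective (fun g => (⟨(g : Matrix ι ι F).map C, ?_, ?_⟩ : (S m : Set (Matrix ι ι F[X])))) ⟨?_, ?_⟩
  · have := RingHom.map_det (C : F →+* F[X]) (g : Matrix ι ι F)
    rw [RingHom.mapMatrix_apply] at this
    rw [← this]
    exact ((Matrix.isUnit_iff_isUnit_det _).1 g.isUnit).map C
  · intro i j; simp
  · intro g g' hgg
    apply Units.ext
    have := congrArg Subtype.val hgg
    exact Matrix.map_injective C_injective this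
  · rintro ⟨A, hA, hb⟩
    have hAC : A = (A.map (fun p => p.coeff 0)).map C := by
      ext1 i j
      have := hb i j
      rw [hm] at this
      simpa using eq_C_of_natDegree_le_zero this
    have hu : IsUnit (A.map (fun p => p.coeff 0)).det := by
      have := RingHom.map_det (C : F →+* F[X]) (A.map (fun p => p.coeff 0))
      rw [RingHom.mapMatrix_apply, ← hAC] at this
      rw [← this, Polynomial.isUnit_C] at hA
      exact hA
    refine ⟨((Matrix.isUnit_iff_isUnit_det _).2 hu).unit, ?_⟩
    ext1
    exact hAC.symm

lemma card_S [Fintype F] : ∀ (N : ℕ) (m : ι → ℕ), ∑ i, m i = N →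
    Nat.card (S m : Set (Matrix ι ι F[X])) =
      Nat.card (GL ι F) * Fintype.card F ^ ((Fintype.card ι - 1) * N) := by
  intro N
  induction N with
  | zero =>
    intro m hm
    rw [card_zero m (by simpa using hm)]; simp
  | succ N ih =>
    intro m hm
    have hne : (Finset.univ : Finset ι).Nonempty := by
      by_contra h
      rw [Finset.not_nonempty_iff_eq_empty] at h
      rw [h] at hm; simp at hm
    obtain ⟨i0, -, hmax⟩ := Finset.exists_max_image Finset.univ m hne
    obtain ⟨d, hd⟩ : ∃ d, m i0 = d + 1 := by
      apply Nat.exists_eq_succ_of_ne_zero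
      intro h0
      have : ∑ i, m i = 0 := Finset.sum_eq_zero fun i hi => by have := hmax i hi; omega
      omega
    rw [card_step m i0 d hd (fun i => hmax i (Finset.mem_univ _)), ih]
    · ring
    · rw [Finset.sum_update_of_mem (Finset.mem_univ _)]
      rw [← Finset.add_sum_erase _ _ (Finset.mem_univ i0)] at hm
      rw [← Finset.erase_eq]; omega

/-- predictable degree property -/
lemma predictable (e : ι → ℕ) (A : Matrix ι ι F[X]) (h : ∀ i j, (A i j).natDegree ≤ e i)
    (hl : (lead e A).det ≠ 0) (k : ℕ) (hk : ∀ i, e i ≤ k) (p : ι → F[X]) :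
    (∀ j, ((p ᵥ* A) j).natDegree ≤ k) ↔ ∀ i, (p i).natDegree ≤ k - e i := by
  have easy : ∀ K, (∀ i, e i ≤ K) → (∀ i, (p i).natDegree ≤ K - e i) →
      ∀ j, ((p ᵥ* A) j).natDegree ≤ K ∧ ((p ᵥ* A) j).coeff K =
        ((fun i => (p i).coeff (K - e i)) ᵥ* lead e A) j := by
    intro K hK hp j
    have hterm : ∀ l, (p l * A l j).natDegree ≤ K ∧
        (p l * A l j).coeff K = (p l).coeff (K - e l) * lead e A l j := by
      intro l
      have h2 : K - e l + e l = K := Nat.sub_add_cancel (hK l)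
      constructor
      · have := natDegree_mul_le_of_le (hp l) (h l j)
        rwa [h2] at this
      · have := coeff_mul_add_eq_of_natDegree_le (hp l) (h l j)
        rwa [h2] at this
    simp only [vecMul, dotProduct]
    refine ⟨natDegree_sum_le_of_forall_le _ _ fun l _ => (hterm l).1, ?_⟩
    simp only [finsetSum_coeff, (hterm _).2]
  refine ⟨fun hp => ?_, fun hp j => (easy k hk hp j).1⟩
  have key : ∀ D, (∀ i, (p i).natDegree ≤ k + D - e i) → ∀ i, (p i).natDegree ≤ k - e i := by
    intro D
    induction D with
    | zero => intro h; simpa using h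
    | succ D ih =>
      intro hD
      apply ih
      have hz : (fun i => (p i).coeff (k + (D + 1) - e i)) = 0 := by
        by_contra hne
        apply hl
        apply Matrix.exists_vecMul_eq_zero_iff.1
        refine ⟨_, hne, ?_⟩
        ext1 j
        rw [← (easy _ (fun i => (hk i).trans (by omega)) hD j).2]
        exact coeff_eq_zero_of_natDegree_lt ((hp j).trans_lt (by omega))
      intro i
      rw [natDegree_le_iff_coeff_eq_zero]
      intro N hN
      have hki := hk i
      rcases Nat.lt_or_ge (k + (D + 1) - e i) N with h1 | h1
      · exact coeff_eq_zero_of_natDegree_lt ((hD i).trans_lt h1)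
      · have : N = k + (D + 1) - e i := by omega
        rw [this]; exact congrFun hz i
  apply key (∑ i, (p i).natDegree)
  intro i
  have := Finset.single_le_sum (f := fun i => (p i).natDegree) (fun _ _ => Nat.zero_le _) (Finset.mem_univ i)
  have hki := hk i
  omega

end UCount

open UCount

theorem stmt_0 (F : Type*) [Field F] [Fintype F] (q : ℕ) (hq : Fintype.card F = q)
    (n t : ℕ) (M : Matrix (Fin n) (Fin n) F[X])
    (hdet : M.det ≠ 0) (ht : M.det.natDegree = t)
    (k : ℕ) (hk : t ≤ k) :
    {X : Matrix (Fin n) (Fin n) F[X] |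
        (∃ g : GL (Fin n) F[X], X = (g : Matrix (Fin n) (Fin n) F[X]) * M) ∧
        ∀ i j, (X i j).degree ≤ (k : ℕ)}.ncard
      = Nat.card (GL (Fin n) F) * q ^ ((n - 1) * (n * k - t)) := by
  classical
  obtain ⟨P, e, hP, hb, hl⟩ := exists_reduced _ (fun i => ∑ j, (M i j).natDegree) M rfl
    (fun i j => Finset.single_le_sum (f := fun j => (M i j).natDegree) (fun _ _ => Nat.zero_le _)
      (Finset.mem_univ j)) hdet
  have hPM : (P * M).det = M.det := by rw [det_mul, hP, one_mul]
  have hPu : IsUnit P := (Matrix.isUnit_iff_isUnit_det _).2 (by rw [hP]; exact isUnit_one)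
  have hsum : ∑ i, e i = t := by
    obtain ⟨h1, h2⟩ := det_bd e (P * M) hb
    rw [hPM] at h1 h2
    rw [← h2] at hl
    have := le_natDegree_of_ne_zero hl
    omega
  have hek : ∀ i, e i ≤ k := fun i => by
    have := Finset.single_le_sum (f := e) (fun _ _ => Nat.zero_le _) (Finset.mem_univ i)
    omega
  have hms : ∑ i, (k - e i) = n * k - t := by
    have : ∑ i, (k - e i) + ∑ i, e i = n * k := by
      rw [← Finset.sum_add_distrib, Finset.sum_congr rfl (fun i _ => Nat.sub_add_cancel (hek i))]
      simp
    omega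
  have hcard := card_S (F := F) _ (fun i => k - e i) hms
  rw [Fintype.card_fin, hq] at hcard
  rw [← hcard, Nat.card_coe_set_eq]
  symm
  apply Set.ncard_congr (fun A _ => Aᵀ * (P * M))
  · rintro A ⟨hA, hA2⟩
    have hAu : IsUnit (Aᵀ * P) := ((Matrix.isUnit_iff_isUnit_det _).2 (by rwa [det_transpose])).mul hPu
    refine ⟨⟨hAu.unit, by simp [Matrix.mul_assoc]⟩, fun i j => ?_⟩
    rw [← natDegree_le_iff_degree_le]
    exact (predictable e (P * M) hb hl k hek (Aᵀ i)).2 (fun l => hA2 l i) j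
  · intro A B _ _ hAB
    have h0 : (P * M).det ≠ 0 := by rwa [hPM]
    have h2 : (Aᵀ - Bᵀ) * (P * M) = 0 := by rw [Matrix.sub_mul]; exact sub_eq_zero.2 hAB
    have h3 : Aᵀ - Bᵀ = 0 := by
      refine funext fun i => ?_
      by_contra hne
      exact h0 (Matrix.exists_vecMul_eq_zero_iff.1 ⟨_, hne, congrFun h2 i⟩)
    exact transpose_injective (sub_eq_zero.1 h3)
  · rintro X ⟨⟨g, rfl⟩, hX⟩
    obtain ⟨u, hu⟩ := hPu
    have hgu : (((g * u⁻¹ : GL (Fin n) F[X])) : Matrix (Fin n) (Fin n) F[X]) * (P * M) = g * M := by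
      rw [← hu, ← Matrix.mul_assoc, ← Units.val_mul, inv_mul_cancel_right]
    refine ⟨((g * u⁻¹ : GL (Fin n) F[X]) : Matrix (Fin n) (Fin n) F[X])ᵀ, ⟨?_, ?_⟩, ?_⟩
    · rw [det_transpose]
      exact (Matrix.isUnit_iff_isUnit_det _).1 (g * u⁻¹).isUnit
    · intro l i
      refine (predictable e (P * M) hb hl k hek
        (((g * u⁻¹ : GL (Fin n) F[X]) : Matrix (Fin n) (Fin n) F[X]) i)).1 (fun j => ?_) l
      have := hX i j
      rw [← hgu, ← natDegree_le_iff_degree_le] at this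
      exact this
    · rw [transpose_transpose, hgu]
end

section
/- Let F be a finite field with q elements and let t ≥ 0, n ≥ 1. For every integer k ≥ t, the number of n×n matrices X over F[x] with det(X) ≠ 0, deg(det(X)) = t, and all entries of degree at most k equals c_{n,t} · #GL_n(F) · q^{(n-1)(nk−t)}, where c_{n,t} = Σ_{t_1+t_2+⋯+t_n = t, t_i ≥ 0} q^{t_1 + 2t_2 + ⋯ + n t_n} and #GL_n(F) is the number of invertible n×n matrices over F. -/
open Polynomial Matrix

namespace MatCount
variable {F : Type*} [Field F] {n : ℕ}

/-- unimodular matrices with row degree bounds and independent leading rows on `J` -/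
def SS (F : Type*) [Field F] {n : ℕ} (e : Fin n → ℕ) (J : Finset (Fin n)) :
    Set (Matrix (Fin n) (Fin n) F[X]) :=
  {U | IsUnit U.det ∧ (∀ i j, (U i j).natDegree ≤ e i) ∧
    LinearIndepOn F (fun i j => (U i j).coeff (e i)) (J : Set (Fin n))}

theorem finite_deg [Fintype F] (d : ℕ) : {p : F[X] | p.natDegree ≤ d}.Finite := by
  have : {p : F[X] | p.natDegree ≤ d} = (degreeLT F (d+1) : Set F[X]) := by
    ext p
    simp only [Set.mem_ofPred_eq, SetLike.mem_coe, mem_degreeLT]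
    rw [Polynomial.natDegree_le_iff_degree_le]
    exact (Order.lt_succ_iff (a := p.degree) (b := (d : WithBot ℕ))).symm
  rw [this]
  have : Finite (degreeLT F (d+1)) := Finite.of_equiv _ (degreeLTEquiv F (d+1)).toEquiv.symm
  exact Set.toFinite _

theorem finite_mat [Fintype F] (e : Fin n → Fin n → ℕ) :
    {U : Matrix (Fin n) (Fin n) F[X] | ∀ i j, (U i j).natDegree ≤ e i j}.Finite := by
  exact Set.Finite.pi' (t := fun i => {r : Fin n → F[X] | ∀ j, r j ∈ {p : F[X] | p.natDegree ≤ e i j}})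
    fun i => Set.Finite.pi' fun j => finite_deg _

theorem finite_SS [Fintype F] (e : Fin n → ℕ) (J : Finset (Fin n)) : (SS F e J).Finite :=
  (finite_mat (fun i _ => e i)).subset fun _ h => h.2.1

/-- row operation coefficients -/
noncomputable def rc (e : Fin n → ℕ) (j : Fin n) (c : Fin n → F) (k : Fin n) : F[X] :=
  if k = j then 1 else C (c k) * X ^ (e j - e k)

noncomputable def rop (e : Fin n → ℕ) (j : Fin n) (c : Fin n → F)
    (V : Matrix (Fin n) (Fin n) F[X]) : Matrix (Fin n) (Fin n) F[X] :=
  V.updateRow j (∑ k, rc e j c k • V k)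

theorem det_rop (e : Fin n → ℕ) (j : Fin n) (c : Fin n → F) (V : Matrix (Fin n) (Fin n) F[X]) :
    (rop e j c V).det = V.det := by
  rw [rop, Matrix.det_updateRow_sum]; simp [rc]

theorem rop_ne (e : Fin n → ℕ) {i j : Fin n} (h : i ≠ j) (c : Fin n → F)
    (V : Matrix (Fin n) (Fin n) F[X]) (l) : rop e j c V i l = V i l := by
  simp [rop, h]

theorem rop_eq (e : Fin n → ℕ) (j : Fin n) {J : Finset (Fin n)} (hj : j ∉ J) (c : Fin n → F)
    (hc : ∀ i ∉ J, c i = 0) (V : Matrix (Fin n) (Fin n) F[X]) (l) :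
    rop e j c V j l = V j l + ∑ k ∈ J, C (c k) * X ^ (e j - e k) * V k l := by
  simp only [rop, updateRow_self, Finset.sum_apply, Pi.smul_apply, smul_eq_mul]
  rw [← Finset.add_sum_erase _ _ (Finset.mem_univ j)]
  congr 1
  · simp [rc]
  · symm
    have : J ⊆ Finset.univ.erase j := fun x hx => by
      simp; rintro rfl; exact hj hx
    rw [← Finset.sum_subset this]
    · apply Finset.sum_congr rfl
      intro x hx
      rw [rc, if_neg]; rintro rfl; exact hj hx
    · intro x hx hxJ
      rw [rc, if_neg (Finset.ne_of_mem_erase hx), hc x hxJ]; simp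

theorem coeff_shift (a b : ℕ) (h : b ≤ a) (c : F) (p : F[X]) :
    (C c * X ^ (a - b) * p).coeff a = c * p.coeff b := by
  rw [mul_assoc, coeff_C_mul]
  congr 1
  have := coeff_X_pow_mul p (a - b) b
  rwa [Nat.add_sub_cancel' h] at this

theorem natDegree_shift (a b : ℕ) (h : b ≤ a) (c : F) (p : F[X]) (hp : p.natDegree ≤ b) :
    (C c * X ^ (a - b) * p).natDegree ≤ a := by
  refine natDegree_mul_le.trans ?_
  have := natDegree_C_mul_X_pow_le c (a - b)
  omega

theorem natDegree_pred {p : F[X]} {d : ℕ} (h : p.natDegree ≤ d) (h0 : p.coeff d = 0) :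
    p.natDegree ≤ d - 1 := by
  rw [natDegree_le_iff_coeff_eq_zero] at h ⊢
  intro N hN
  rcases eq_or_ne N d with rfl | hne
  · exact h0
  · exact h N (by omega)

theorem ncard_supp [Fintype F] (J : Finset (Fin n)) :
    {c : Fin n → F | ∀ i ∉ J, c i = 0}.ncard = Fintype.card F ^ J.card := by
  classical
  have : {c : Fin n → F | ∀ i ∉ J, c i = 0} =
    (Fintype.piFinset (fun i => if i ∈ J then (Finset.univ : Finset F) else {0}) : Set (Fin n → F)) := by
    ext c; simp only [Set.mem_ofPred_eq, Finset.mem_coe, Fintype.mem_piFinset]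
    apply forall_congr'; intro i
    split_ifs with h <;> simp [h]
  rw [this, Set.ncard_coe_finset, Fintype.card_piFinset]
  have h2 : ∀ i, (if i ∈ J then (Finset.univ : Finset F) else {0}).card
     = if i ∈ J then Fintype.card F else 1 := by
    intro i; split_ifs <;> simp
  simp only [h2]
  rw [Finset.prod_ite]; simp

theorem lemA [Fintype F] (e : Fin n → ℕ) (J : Finset (Fin n)) (j : Fin n) (hj : j ∉ J)
    (hmax : ∀ i ∈ J, e i ≤ e j) (h1 : 1 ≤ e j) :
    (SS F e J).ncard = (SS F e (insert j J)).ncard +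
      Fintype.card F ^ J.card * (SS F (Function.update e j (e j - 1)) J).ncard := by
  classical
  have hsub : SS F e (insert j J) ⊆ SS F e J := fun U h =>
    ⟨h.1, h.2.1, h.2.2.mono (by simp)⟩
  rw [← Set.ncard_sdiff_add_ncard_of_subset hsub (finite_SS _ _), add_comm, ← ncard_supp (F := F) J,
    mul_comm, ← Set.ncard_prod]
  congr 1
  symm
  set e' := Function.update e j (e j - 1) with he'
  have hne : ∀ {i}, i ∈ J → i ≠ j := fun hi => by rintro rfl; exact hj hi
  have he'ne : ∀ {i}, i ≠ j → e' i = e i := fun h => by simp [he', h]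
  have he'j : e' j = e j - 1 := by simp [he']
  have key : ∀ (V : Matrix (Fin n) (Fin n) F[X]) (c : Fin n → F), (∀ i ∉ J, c i = 0) →
      ∀ l, (rop e j c V j l).coeff (e j) = (V j l).coeff (e j) + ∑ k ∈ J, c k * (V k l).coeff (e k) := by
    intro V c hc l
    rw [rop_eq e j hj c hc, coeff_add, finsetSum_coeff]
    congr 1
    exact Finset.sum_congr rfl fun k hk => coeff_shift _ _ (hmax k hk) _ _
  have indep_iff : ∀ (V W : Matrix (Fin n) (Fin n) F[X]) (a b : Fin n → ℕ), (∀ i ≠ j, ∀ l, V i l = W i l) →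
      (∀ i ≠ j, a i = b i) →
      LinearIndepOn F (fun i l => (V i l).coeff (a i)) (J : Set (Fin n)) →
      LinearIndepOn F (fun i l => (W i l).coeff (b i)) (J : Set (Fin n)) := by
    intro V W a b h1 h2 h
    refine h.congr ?_
    intro i hi
    funext l
    simp only [h1 i (hne hi) l, h2 i (hne hi)]
  refine Set.ncard_congr (fun p _ => rop e j p.2 p.1) ?_ ?_ ?_
  · rintro ⟨V, c⟩ ⟨⟨hV1, hV2, hV3⟩, hc⟩
    simp only [Set.mem_ofPred_eq] at hc hV1 hV2 hV3
    have hVj : ∀ l, (V j l).coeff (e j) = 0 := fun l => by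
      apply coeff_eq_zero_of_natDegree_lt
      have := hV2 j l
      omega
    refine ⟨⟨?_, ?_, ?_⟩, ?_⟩
    · simpa [det_rop] using hV1
    · intro i l
      by_cases hij : i = j
      · subst hij
        rw [rop_eq e i hj c hc]
        refine natDegree_add_le_of_degree_le ((hV2 i l).trans (by omega)) ?_
        refine natDegree_sum_le_of_forall_le _ _ fun k hk => ?_
        refine natDegree_shift _ _ (hmax k hk) _ _ ?_
        exact (hV2 k l).trans (he'ne (hne hk)).le
      · rw [rop_ne e hij]; exact (hV2 i l).trans (he'ne hij).le
    · exact indep_iff V _ e' e (fun i hi l => (rop_ne e hi c V l).symm) (fun i hi => he'ne hi) hV3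
    · intro h
      have h3 := h.2.2
      rw [Finset.coe_insert, linearIndepOn_insert (by simpa using hj)] at h3
      apply h3.2
      rw [Submodule.mem_span_image_finset_iff_exists_fun]
      refine ⟨fun i => c i, ?_⟩
      rw [Finset.sum_coe_sort J (fun i => c i • fun l => (rop e j c V i l).coeff (e i))]
      funext l
      simp only [Finset.sum_apply, Pi.smul_apply, smul_eq_mul]
      rw [key V c hc, hVj, zero_add]
      exact Finset.sum_congr rfl fun k hk => by rw [rop_ne e (hne hk)]
  · rintro ⟨V, c⟩ ⟨V', c'⟩ ⟨⟨hV1, hV2, hV3⟩, hc⟩ ⟨⟨hV1', hV2', hV3'⟩, hc'⟩ heq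
    simp only [Set.mem_ofPred_eq] at hc hV1 hV2 hV3 hc' hV1' hV2' hV3' heq
    have hVj : ∀ l, (V j l).coeff (e j) = 0 := fun l => by
      apply coeff_eq_zero_of_natDegree_lt
      have := hV2 j l
      omega
    have hVj' : ∀ l, (V' j l).coeff (e j) = 0 := fun l => by
      apply coeff_eq_zero_of_natDegree_lt
      have := hV2' j l
      omega
    have hr : ∀ i ≠ j, ∀ l, V i l = V' i l := fun i hi l => by
      rw [← rop_ne e hi c V, heq, rop_ne e hi]
    have hcc : ∀ i ∈ J, c i - c' i = 0 := by
      rw [linearIndepOn_finset_iff] at hV3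
      apply hV3 (fun i => c i - c' i)
      funext l
      have h1 := key V c hc l
      have h2 := key V' c' hc' l
      rw [← heq, h1, hVj, hVj', zero_add, zero_add] at h2
      simp only [Finset.sum_apply, Pi.smul_apply, smul_eq_mul, sub_mul, Finset.sum_sub_distrib,
        Pi.zero_apply]
      rw [sub_eq_zero]
      refine Eq.trans (Finset.sum_congr rfl fun k hk => ?_) (h2.trans (Finset.sum_congr rfl fun k hk => ?_))
      · rw [he'ne (hne hk)]
      · rw [he'ne (hne hk), hr k (hne hk)]
    have hcc' : c = c' := by
      funext i
      by_cases hi : i ∈ J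
      · exact sub_eq_zero.mp (hcc i hi)
      · rw [hc i hi, hc' i hi]
    subst hcc'
    congr 1
    ext1 i l
    by_cases hij : i = j
    · subst hij
      have := congrFun (congrFun heq i) l
      rw [rop_eq e i hj c hc, rop_eq e i hj c hc, 
        Finset.sum_congr rfl fun k hk => by rw [hr k (hne hk)]] at this
      exact add_right_cancel this
    · exact hr i hij l
  · rintro U ⟨⟨hU1, hU2, hU3⟩, hU4⟩
    have hspan : (fun l => (U j l).coeff (e j)) ∈
        Submodule.span F ((fun i l => (U i l).coeff (e i)) '' (J : Set (Fin n))) := by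
      by_contra hcon
      apply hU4
      refine ⟨hU1, hU2, ?_⟩
      rw [Finset.coe_insert, linearIndepOn_insert (by simpa using hj)]
      exact ⟨hU3, hcon⟩
    rw [Submodule.mem_span_image_finset_iff_exists_fun] at hspan
    obtain ⟨c0, hc0⟩ := hspan
    set c : Fin n → F := fun i => if h : i ∈ J then c0 ⟨i, h⟩ else 0 with hcdef
    have hc : ∀ i ∉ J, c i = 0 := fun i hi => by simp [hcdef, hi]
    have hc1 : ∑ i ∈ J, c i • (fun l => (U i l).coeff (e i)) = fun l => (U j l).coeff (e j) := by
      rw [← hc0, ← Finset.sum_coe_sort J (fun i => c i • (fun l => (U i l).coeff (e i)))]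
      refine Finset.sum_congr rfl fun i _ => ?_
      simp [hcdef]
    have hnc : ∀ i ∉ J, (-c) i = 0 := fun i hi => by simp [hc i hi]
    refine ⟨(rop e j (-c) U, c), ⟨⟨?_, ?_, ?_⟩, hc⟩, ?_⟩
    · simpa [det_rop] using hU1
    · intro i l
      by_cases hij : i = j
      · subst hij
        rw [he'j]
        apply natDegree_pred
        · change (rop e i (-c) U i l).natDegree ≤ _
          rw [rop_eq e i hj _ hnc]
          refine natDegree_add_le_of_degree_le (hU2 i l) ?_
          refine natDegree_sum_le_of_forall_le _ _ fun k hk => ?_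
          exact natDegree_shift _ _ (hmax k hk) _ _ (hU2 k l)
        · change (rop e i (-c) U i l).coeff _ = _
          rw [key _ _ hnc]
          have := congrFun hc1 l
          simp only [Finset.sum_apply, Pi.smul_apply, smul_eq_mul] at this
          simp [← this]
      · change (rop e j (-c) U i l).natDegree ≤ _
        rw [rop_ne e hij, he'ne hij]; exact hU2 i l
    · exact indep_iff U _ e e' (fun i hi l => (rop_ne e hi _ U l).symm) (fun i hi => (he'ne hi).symm) hU3
    · ext1 i l
      by_cases hij : i = j
      · subst hij
        change rop e i c (rop e i (-c) U) i l = _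
        rw [rop_eq e i hj c hc, rop_eq e i hj _ hnc, add_assoc, ← Finset.sum_add_distrib,
          Finset.sum_eq_zero, add_zero]
        intro k hk
        rw [rop_ne e (hne hk)]
        simp
      · change rop e j c (rop e j (-c) U) i l = _
        rw [rop_ne e hij, rop_ne e hij]

theorem lemB (e : Fin n → ℕ) (J : Finset (Fin n)) (h0 : ∀ i ∈ J, e i = 0) :
    SS F e J = SS F e ∅ := by
  ext U
  constructor
  · exact fun h => ⟨h.1, h.2.1, h.2.2.mono (by simp)⟩
  · rintro ⟨h1, h2, -⟩
    refine ⟨h1, h2, ?_⟩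
    rw [linearIndepOn_finset_iff]
    intro f hf
    classical
    have hU : ∀ i ∈ J, ∀ l, U i l = C ((U i l).coeff (e i)) := fun i hi l => by
      have := h2 i l
      rw [h0 i hi] at this ⊢
      exact eq_C_of_natDegree_le_zero this
    have := Matrix.eq_zero_of_vecMul_eq_zero (M := U) h1.ne_zero
      (v := fun i => if i ∈ J then C (f i) else 0) (by
        funext l
        simp only [vecMul, dotProduct, ite_mul, zero_mul, Finset.sum_ite_mem, Finset.univ_inter,
          Pi.zero_apply]
        have h3 := congrFun hf l
        simp only [Finset.sum_apply, Pi.smul_apply, smul_eq_mul, Pi.zero_apply] at h3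
        have h4 := congrArg (C : F →+* F[X]) h3
        rw [map_sum, map_zero] at h4
        rw [← h4]
        refine Finset.sum_congr rfl fun i hi => ?_
        rw [map_mul, ← hU i hi])
    intro i hi
    have h5 := congrFun this i
    simpa [hi] using h5

theorem coeff_mul_top {p q : F[X]} {a b : ℕ} (hp : p.natDegree ≤ a) (hq : q.natDegree ≤ b) :
    (p * q).coeff (a + b) = p.coeff a * q.coeff b := by
  exact coeff_mul_add_eq_of_natDegree_le hp hq

theorem coeff_prod_top {ι : Type*} (s : Finset ι) (f : ι → F[X]) (d : ι → ℕ)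
    (h : ∀ i ∈ s, (f i).natDegree ≤ d i) :
    (∏ i ∈ s, f i).coeff (∑ i ∈ s, d i) = ∏ i ∈ s, (f i).coeff (d i) := by
  classical
  induction s using Finset.induction_on with
  | empty => simp
  | insert a s ha ih =>
    rw [Finset.prod_insert ha, Finset.sum_insert ha, Finset.prod_insert ha, coeff_mul_top, ih]
    · exact fun i hi => h i (by simp [hi])
    · exact h a (by simp)
    · exact (natDegree_prod_le _ _).trans (Finset.sum_le_sum fun i hi => h i (by simp [hi]))

theorem natDegree_det_le (U : Matrix (Fin n) (Fin n) F[X]) (d : Fin n → ℕ)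
    (h : ∀ i j, (U i j).natDegree ≤ d j) : U.det.natDegree ≤ ∑ i, d i := by
  rw [Matrix.det_apply']
  refine natDegree_sum_le_of_forall_le _ _ fun σ _ => ?_
  refine natDegree_mul_le.trans ?_
  rw [natDegree_intCast, zero_add]
  exact (natDegree_prod_le _ _).trans (Finset.sum_le_sum fun i hi => h _ i)

theorem coeff_det (U : Matrix (Fin n) (Fin n) F[X]) (d : Fin n → ℕ)
    (h : ∀ i j, (U i j).natDegree ≤ d j) :
    U.det.coeff (∑ i, d i) = (Matrix.of fun i j => (U i j).coeff (d j)).det := by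
  rw [Matrix.det_apply', Matrix.det_apply', finsetSum_coeff]
  refine Finset.sum_congr rfl fun σ _ => ?_
  rw [← Polynomial.C_eq_intCast, coeff_C_mul, coeff_prod_top _ _ _ fun i _ => h _ i]
  simp

theorem lemC (e : Fin n → ℕ) (he : 0 < ∑ i, e i) : SS F e Finset.univ = ∅ := by
  ext U
  simp only [Set.mem_empty_iff_false, iff_false]
  rintro ⟨h1, h2, h3⟩
  have h4 := coeff_det Uᵀ e (fun i j => h2 j i)
  rw [det_transpose] at h4
  have h5 : U.det.coeff (∑ i, e i) = 0 := by
    apply coeff_eq_zero_of_natDegree_lt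
    rwa [natDegree_eq_zero_of_isUnit h1]
  rw [h5] at h4
  obtain ⟨v, hv0, hv⟩ := Matrix.exists_mulVec_eq_zero_iff.mpr h4.symm
  rw [linearIndepOn_finset_iff] at h3
  apply hv0
  funext i
  refine h3 v ?_ i (by simp)
  funext l
  have := congrFun hv l
  simp only [mulVec, dotProduct, of_apply, transpose_apply] at this
  simpa [mul_comm] using this

theorem base [Fintype F] : (SS F (fun _ : Fin n => 0) ∅).ncard = Nat.card (GL (Fin n) F) := by
  symm
  rw [← Set.ncard_univ]
  refine Set.ncard_congr (fun g _ => (g : Matrix (Fin n) (Fin n) F).map C) ?_ ?_ ?_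
  · intro g _
    refine ⟨?_, ?_, by simp⟩
    · have := RingHom.map_det (C : F →+* F[X]) (g : Matrix (Fin n) (Fin n) F)
      change IsUnit ((C : F →+* F[X]).mapMatrix (g : Matrix (Fin n) (Fin n) F)).det
      rw [← this]
      exact ((Matrix.isUnit_iff_isUnit_det _).mp g.isUnit).map _
    · intro i j; simp
  · intro g g' _ _ h
    ext i j
    have := congrFun (congrFun h i) j
    simpa using this
  · rintro U ⟨h1, h2, -⟩
    have hU : U = (U.map (fun p => p.coeff 0)).map C := by
      ext1 i j
      exact eq_C_of_natDegree_le_zero (h2 i j)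
    have hdet : U.det = C (U.map (fun p => p.coeff 0)).det := by
      conv_lhs => rw [hU]
      exact (RingHom.map_det (C : F →+* F[X]) _).symm
    rw [hdet, isUnit_C] at h1
    exact ⟨((Matrix.isUnit_iff_isUnit_det _).mpr h1).unit, trivial, hU.symm⟩

theorem main_count [Fintype F] (hn : 1 ≤ n) (E : ℕ) : ∀ (e : Fin n → ℕ), ∑ i, e i = E → ∀ J,
    ((SS F e J).ncard : ℚ) = Nat.card (GL (Fin n) F) * (Fintype.card F : ℚ) ^ ((n-1) * E) *
      ∏ i ∈ Finset.Ico (J.filter (fun i => e i = 0)).card J.card,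
        (1 - (Fintype.card F : ℚ)^i / (Fintype.card F : ℚ)^(n-1)) := by
  classical
  have hq : (Fintype.card F : ℚ) ≠ 0 := by exact_mod_cast Fintype.card_ne_zero
  induction E with
  | zero =>
    intro e he J
    have he0 : e = fun _ => 0 := by
      funext i
      exact Finset.sum_eq_zero_iff.mp he i (by simp)
    subst he0
    rw [lemB _ _ (by simp), base]
    simp
  | succ E ih =>
    intro e he
    have step : ∀ m : ℕ, ∀ J : Finset (Fin n), J.card = m → 
      ((SS F e J).ncard : ℚ) - (SS F e ∅).ncard =
      Nat.card (GL (Fin n) F) * (Fintype.card F : ℚ) ^ ((n-1) * (E+1)) *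
      (∏ i ∈ Finset.Ico (J.filter (fun i => e i = 0)).card J.card,
        (1 - (Fintype.card F : ℚ)^i / (Fintype.card F : ℚ)^(n-1)) - 1) := by
      intro m
      induction m with
      | zero =>
        intro J hJ
        rw [Finset.card_eq_zero] at hJ
        subst hJ; simp
      | succ m ihm =>
        intro J hJ
        by_cases h0 : ∀ i ∈ J, e i = 0
        · rw [lemB _ _ h0, Finset.filter_true_of_mem h0]; simp
        · have hJne : J.Nonempty := by rw [← Finset.card_pos]; omega
          obtain ⟨j, hjJ, hjmax⟩ := J.exists_max_image e hJne
          have h1 : 1 ≤ e j := by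
            push Not at h0
            obtain ⟨i, hi, hi0⟩ := h0
            have := hjmax i hi
            omega
          set J' := J.erase j with hJ'
          have hjJ' : j ∉ J' := by simp [hJ']
          have hins : insert j J' = J := Finset.insert_erase hjJ
          have hcard : J'.card = m := by rw [hJ', Finset.card_erase_of_mem hjJ]; omega
          have hA := lemA (F := F) e J' j hjJ' (fun i hi => hjmax i (Finset.mem_of_mem_erase hi)) h1
          rw [hins] at hA
          have hA' := congrArg (Nat.cast : ℕ → ℚ) hA
          push_cast at hA'
          have hsum : ∑ i, Function.update e j (e j - 1) i = E := by
            rw [Finset.sum_update_of_mem (Finset.mem_univ j)]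
            rw [← Finset.add_sum_erase _ _ (Finset.mem_univ j), Finset.erase_eq] at he
            omega
          have ih' := ih _ hsum J'
          have hf1 : (J'.filter (fun i => Function.update e j (e j - 1) i = 0)).card
              = (J'.filter (fun i => e i = 0)).card := by
            congr 1
            apply Finset.filter_congr
            intro i hi
            have : i ≠ j := by rintro rfl; exact hjJ' hi
            simp [this]
          have hf2 : (J.filter (fun i => e i = 0)).card = (J'.filter (fun i => e i = 0)).card := by
            rw [← hins, Finset.filter_insert, if_neg (by omega)]
          have ihJ' := ihm J' hcard
          have hle : (J'.filter (fun i => e i = 0)).card ≤ m := by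
            rw [← hcard]; exact Finset.card_filter_le _ _
          rw [hf1, hcard] at ih'
          rw [hcard] at ihJ' hA'
          rw [hf2, hJ, Finset.prod_Ico_succ_top hle]
          set P := ∏ i ∈ Finset.Ico (J'.filter (fun i => e i = 0)).card m,
            (1 - (Fintype.card F : ℚ)^i / (Fintype.card F : ℚ)^(n-1)) with hP
          rw [ih'] at hA'
          have hx : ((SS F e J).ncard : ℚ) = ((SS F e J').ncard : ℚ) -
            (Fintype.card F : ℚ)^m * (Nat.card (GL (Fin n) F) * (Fintype.card F : ℚ) ^ ((n-1) * E) * P) := by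
            linarith
          rw [hx, sub_right_comm, ihJ', mul_add (n-1) E 1, mul_one, pow_add]
          field_simp
          ring
    have huniv := step _ Finset.univ rfl
    rw [lemC e (by omega)] at huniv
    have hz : ∏ i ∈ Finset.Ico ((Finset.univ : Finset (Fin n)).filter (fun i => e i = 0)).card
        (Finset.univ : Finset (Fin n)).card,
        (1 - (Fintype.card F : ℚ)^i / (Fintype.card F : ℚ)^(n-1)) = 0 := by
      apply Finset.prod_eq_zero (i := n - 1)
      · have : ((Finset.univ : Finset (Fin n)).filter (fun i => e i = 0)).card <
            (Finset.univ : Finset (Fin n)).card := by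
          apply Finset.card_lt_card
          rw [Finset.filter_ssubset]
          by_contra hcon
          push Not at hcon
          rw [Finset.sum_eq_zero (fun i hi => hcon i hi)] at he
          omega
        rw [Finset.card_univ, Fintype.card_fin] at this ⊢
        simp only [Finset.mem_Ico]
        omega
      · rw [div_self (pow_ne_zero _ hq), sub_self]
    rw [hz] at huniv
    intro J
    have := step _ J rfl
    simp only [Set.ncard_empty, Nat.cast_zero] at huniv
    linarith

theorem count_unimod [Fintype F] (hn : 1 ≤ n) (e : Fin n → ℕ) :
    {U : Matrix (Fin n) (Fin n) F[X] | IsUnit U.det ∧ ∀ i j, (U i j).natDegree ≤ e i}.ncard =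
      Nat.card (GL (Fin n) F) * Fintype.card F ^ ((n-1) * ∑ i, e i) := by
  have h := main_count (F := F) hn _ e rfl ∅
  have h2 : SS F e ∅ = {U : Matrix (Fin n) (Fin n) F[X] | IsUnit U.det ∧ ∀ i j, (U i j).natDegree ≤ e i} := by
    ext U; simp [SS]
  rw [h2] at h
  simp only [Finset.filter_empty, Finset.card_empty, Finset.Ico_self, Finset.prod_empty, mul_one] at h
  exact_mod_cast h

end MatCount

namespace MatCount
variable {F : Type*} [Field F] {n : ℕ}

theorem exists_reduced (H : Matrix (Fin n) (Fin n) F[X]) (hH : H.det ≠ 0) :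
    ∃ (V : Matrix (Fin n) (Fin n) F[X]) (d : Fin n → ℕ), IsUnit V.det ∧
      (∀ i j, ((H * V) i j).natDegree ≤ d j) ∧
      (Matrix.of fun i j => ((H * V) i j).coeff (d j)).det ≠ 0 := by
  classical
  let Q : ℕ → Prop := fun s => ∃ (V : Matrix (Fin n) (Fin n) F[X]) (d : Fin n → ℕ), IsUnit V.det ∧
      (∀ i j, ((H * V) i j).natDegree ≤ d j) ∧ ∑ j, d j = s
  have hQ : ∃ s, Q s := by
    refine ⟨_, 1, fun j => ∑ i, (H i j).natDegree, by simp, ?_, rfl⟩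
    intro i j
    rw [mul_one]
    exact Finset.single_le_sum (f := fun i => (H i j).natDegree) (fun _ _ => Nat.zero_le _) (Finset.mem_univ i)
  obtain ⟨V, d, hV, hd, hs⟩ := Nat.find_spec hQ
  refine ⟨V, d, hV, hd, fun hdet => ?_⟩
  have hmin := fun m hm => Nat.find_min hQ (m := m) hm
  rw [← hs] at hmin
  obtain ⟨c, hc0, hc⟩ := Matrix.exists_mulVec_eq_zero_iff.mpr hdet
  have hPdet : (H * V).det ≠ 0 := by
    rw [det_mul]; exact mul_ne_zero hH hV.ne_zero
  set P := H * V with hP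
  have hne : (Finset.univ.filter (fun j => c j ≠ 0)).Nonempty := by
    by_contra hcon
    rw [Finset.not_nonempty_iff_eq_empty, Finset.filter_eq_empty_iff] at hcon
    apply hc0
    funext j
    simpa using hcon (Finset.mem_univ j)
  obtain ⟨j, hj, hjmax⟩ := Finset.exists_max_image _ d hne
  simp only [Finset.mem_filter, Finset.mem_univ, true_and] at hj hjmax
  have hcl : ∀ i, ∑ l, c l * (P i l).coeff (d l) = 0 := fun i => by
    have := congrFun hc i
    simpa [mulVec, dotProduct, mul_comm] using this
  let a : Fin n → F[X] := fun l => C (c l) * X ^ (d j - d l)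
  have hcoef : ∀ i, (∑ l, a l * P i l).coeff (d j) = 0 := fun i => by
    rw [finsetSum_coeff, ← hcl i]
    refine Finset.sum_congr rfl fun l _ => ?_
    by_cases hl : c l = 0
    · simp [a, hl]
    · exact coeff_shift _ _ (hjmax l hl) _ _
  have hdeg : ∀ i, (∑ l, a l * P i l).natDegree ≤ d j := fun i => by
    refine natDegree_sum_le_of_forall_le _ _ fun l _ => ?_
    by_cases hl : c l = 0
    · simp [a, hl]
    · exact natDegree_shift _ _ (hjmax l hl) _ _ (hd i l)
  have haj : a j = C (c j) := by simp [a]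
  rcases Nat.eq_zero_or_pos (d j) with h0 | hpos
  · skip
    have : P *ᵥ a = 0 := by
      funext i
      have h1 := eq_C_of_natDegree_le_zero ((hdeg i).trans h0.le)
      rw [← h0, hcoef i, C_0] at h1
      simpa [mulVec, dotProduct, mul_comm] using h1
    have h2 := Matrix.eq_zero_of_mulVec_eq_zero hPdet this
    have h3 := congrFun h2 j
    rw [haj] at h3
    simp at h3
    exact hj h3
  · refine hmin (∑ l, Function.update d j (d j - 1) l) ?_ 
      ⟨V.updateCol j (fun k => ∑ i, a i • V k i), Function.update d j (d j - 1), ?_, ?_, rfl⟩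
    · apply Finset.sum_lt_sum
      · intro i _
        by_cases hij : i = j
        · subst hij; simp
        · simp [hij]
      · exact ⟨j, Finset.mem_univ _, by simp; omega⟩
    · rw [Matrix.det_updateCol_sum, haj, smul_eq_mul]
      exact (isUnit_C.mpr (isUnit_iff_ne_zero.mpr hj)).mul hV
    · intro i l
      by_cases hl : l = j
      · subst hl
        have : (H * V.updateCol l (fun k => ∑ i, a i • V k i)) i l = ∑ m, a m * P i m := by
          simp only [Matrix.mul_apply, updateCol_self, hP, smul_eq_mul, Finset.mul_sum]
          rw [Finset.sum_comm]
          refine Finset.sum_congr rfl fun m _ => Finset.sum_congr rfl fun k _ => ?_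
          ring
        rw [this, Function.update_self]
        exact natDegree_pred (hdeg i) (hcoef i)
      · have : (H * V.updateCol j (fun k => ∑ i, a i • V k i)) i l = P i l := by
          simp only [Matrix.mul_apply, updateCol_ne hl, hP]
        rw [this, Function.update_of_ne hl]
        exact hd i l

theorem predictable (P W : Matrix (Fin n) (Fin n) F[X]) (d : Fin n → ℕ) (k : ℕ)
    (hd : ∀ i j, (P i j).natDegree ≤ d j) (hdk : ∀ j, d j ≤ k)
    (hA : (Matrix.of fun i j => (P i j).coeff (d j)).det ≠ 0) :
    (∀ i j, ((P * W) i j).natDegree ≤ k) ↔ ∀ i j, (W i j).natDegree ≤ k - d i := by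
  constructor
  · intro h i l
    have desc : ∀ m, (∀ j, (W j l).natDegree ≤ k + m - d j) → ∀ j, (W j l).natDegree ≤ k - d j := by
      intro m
      induction m with
      | zero => exact fun h => h
      | succ m ih =>
        intro hm
        apply ih
        have hw := Matrix.eq_zero_of_mulVec_eq_zero hA (v := fun j => (W j l).coeff (k + (m+1) - d j)) (by
          funext i
          simp only [mulVec, dotProduct, of_apply, Pi.zero_apply]
          have h1 : ((P * W) i l).coeff (k + (m+1)) = 0 := by
            apply coeff_eq_zero_of_natDegree_lt
            have := h i l
            omega
          rw [← h1, Matrix.mul_apply, finsetSum_coeff]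
          refine Finset.sum_congr rfl fun j _ => ?_
          have := coeff_mul_top (hd i j) (hm j)
          rw [← this]
          congr 1
          have := hdk j
          omega)
        intro j
        have := natDegree_pred (hm j) (congrFun hw j)
        have := hdk j
        omega
    refine desc (∑ j, (W j l).natDegree) (fun j => ?_) i
    have := Finset.single_le_sum (f := fun j => (W j l).natDegree) (fun _ _ => Nat.zero_le _) (Finset.mem_univ j)
    have := hdk j
    omega
  · intro h i l
    rw [Matrix.mul_apply]
    refine natDegree_sum_le_of_forall_le _ _ fun j _ => ?_
    refine natDegree_mul_le.trans ?_
    have := hd i j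
    have := h j l
    have := hdk j
    omega

theorem count_bases [Fintype F] (hn : 1 ≤ n) (k t : ℕ) (hk : t ≤ k) (H : Matrix (Fin n) (Fin n) F[X])
    (hH : H.det ≠ 0) (ht : H.det.natDegree = t) :
    {U : Matrix (Fin n) (Fin n) F[X] | IsUnit U.det ∧ ∀ i j, ((H * U) i j).natDegree ≤ k}.ncard =
      Nat.card (GL (Fin n) F) * Fintype.card F ^ ((n-1) * (n * k - t)) := by
  obtain ⟨V, d, hV, hd, hA⟩ := exists_reduced H hH
  have hdt : ∑ j, d j = t := by
    have h1 := coeff_det _ d hd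
    have h2 := natDegree_det_le _ d hd
    have h3 : (H * V).det.natDegree = t := by
      rw [det_mul, natDegree_mul hH hV.ne_zero, natDegree_eq_zero_of_isUnit hV, add_zero, ht]
    rw [← h1] at hA
    have := le_natDegree_of_ne_zero hA
    omega
  have hdk : ∀ j, d j ≤ k := fun j => by
    have := Finset.single_le_sum (f := d) (fun _ _ => Nat.zero_le _) (Finset.mem_univ j)
    omega
  have hsum : ∑ j, (k - d j) = n * k - t := by
    have : ∑ j, (k - d j) + ∑ j, d j = n * k := by
      rw [← Finset.sum_add_distrib, Finset.sum_congr rfl fun j _ => Nat.sub_add_cancel (hdk j)]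
      simp
    omega
  rw [← hsum, ← count_unimod hn]
  symm
  refine Set.ncard_congr (fun W _ => V * W) ?_ ?_ ?_
  · rintro W ⟨h1, h2⟩
    refine ⟨by rw [det_mul]; exact hV.mul h1, ?_⟩
    rw [← Matrix.mul_assoc]
    exact (predictable _ _ d k hd hdk hA).mpr h2
  · intro W W' _ _ h
    have := congrArg (fun M => V⁻¹ * M) h
    simpa [← Matrix.mul_assoc, Matrix.nonsing_inv_mul _ hV] using this
  · rintro U ⟨h1, h2⟩
    refine ⟨V⁻¹ * U, ⟨?_, ?_⟩, ?_⟩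
    · rw [det_mul]
      exact (Matrix.isUnit_nonsing_inv_det V hV).mul h1
    · rw [← predictable _ _ d k hd hdk hA]
      rw [Matrix.mul_assoc, ← Matrix.mul_assoc V, Matrix.mul_nonsing_inv _ hV, Matrix.one_mul]
      exact h2
    · rw [← Matrix.mul_assoc, Matrix.mul_nonsing_inv _ hV, Matrix.one_mul]

end MatCount

namespace MatCount
variable {F : Type*} [Field F] {n : ℕ}

/-- column Hermite normal form (lower triangular) -/
def IsHerm (H : Matrix (Fin n) (Fin n) F[X]) : Prop :=
  (∀ i, (H i i).Monic) ∧ (∀ i j, i < j → H i j = 0) ∧ ∀ i j, j < i → (H i j).degree < (H i i).degree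

theorem herm_unique (H H' W W' : Matrix (Fin n) (Fin n) F[X]) (hH : IsHerm H) (hH' : IsHerm H')
    (h1 : H * W = H') (h2 : H' * W' = H) : H = H' := by
  have key : ∀ m : ℕ, ∀ i : Fin n, i.val < m → ∀ j, W i j = (1 : Matrix (Fin n) (Fin n) F[X]) i j ∧
      W' i j = (1 : Matrix (Fin n) (Fin n) F[X]) i j := by
    intro m
    induction m with
    | zero => intro i hi; omega
    | succ m ih =>
      intro i hi
      rcases Nat.lt_succ_iff_lt_or_eq.mp hi with hlt | heq
      · exact ih i hlt
      have exp : ∀ (A B D : Matrix (Fin n) (Fin n) F[X]), IsHerm A → A * B = D →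
          (∀ l : Fin n, l < i → ∀ j, B l j = (1 : Matrix (Fin n) (Fin n) F[X]) l j) → ∀ j,
          D i j = (if j < i then A i j else 0) + A i i * B i j := by
        intro A B D hA hAB hB j
        rw [← hAB, Matrix.mul_apply, ← Finset.add_sum_erase _ _ (Finset.mem_univ i), add_comm]
        congr 1
        have : ∀ l ∈ Finset.univ.erase i, A i l * B l j = if l = j then (if j < i then A i j else 0) else 0 := by
          intro l hl
          have hl' := Finset.ne_of_mem_erase hl
          rcases lt_or_gt_of_ne hl' with h | h
          · rw [hB l h, Matrix.one_apply]
            split_ifs with h3 h4 h4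
            · subst h3; simp
            · subst h3; exact absurd h h4
            · simp
          · rw [hA.2.1 i l h, zero_mul]
            split_ifs with h3 h4
            · subst h3; exact absurd h4 (not_lt.mpr h.le)
            · rfl
            · rfl
        rw [Finset.sum_congr rfl this, Finset.sum_ite_eq']
        split_ifs with h5 h6 h6
        · rfl
        · rfl
        · exact absurd (Finset.mem_erase.mpr ⟨h6.ne, Finset.mem_univ _⟩) h5
        · rfl
      have e1 := exp H W H' hH h1 (fun l hl j => (ih l (by rw [Fin.lt_def] at hl; omega) j).1)
      have e2 := exp H' W' H hH' h2 (fun l hl j => (ih l (by rw [Fin.lt_def] at hl; omega) j).2)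
      have hd : H i i = H' i i := by
        apply eq_of_monic_of_associated (hH.1 i) (hH'.1 i)
        have a1 := e1 i
        have a2 := e2 i
        simp only [lt_self_iff_false, if_false, zero_add] at a1 a2
        exact associated_of_dvd_dvd ⟨_, a1⟩ ⟨_, a2⟩
      have fin : ∀ (A B D : Matrix (Fin n) (Fin n) F[X]), IsHerm A → IsHerm D → A i i = D i i → 
          (∀ j, D i j = (if j < i then A i j else 0) + A i i * B i j) → ∀ j, 
          B i j = (1 : Matrix (Fin n) (Fin n) F[X]) i j := by
        intro A B D hA hD hAD he j
        have h0 : A i i ≠ 0 := (hA.1 i).ne_zero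
        have hj := he j
        rcases lt_trichotomy i j with h | h | h
        · rw [hD.2.1 i j h, if_neg (not_lt.mpr h.le), zero_add] at hj
          rw [Matrix.one_apply_ne h.ne]
          exact (mul_eq_zero.mp hj.symm).resolve_left h0
        · subst h
          rw [if_neg (lt_irrefl _), zero_add, ← hAD] at hj
          rw [Matrix.one_apply_eq]
          exact (mul_left_cancel₀ h0 (by rw [mul_one]; exact hj)).symm
        · rw [if_pos h] at hj
          rw [Matrix.one_apply_ne h.ne']
          by_contra hB
          have h3 : A i i * B i j = D i j - A i j := by rw [hj]; ring
          have h4 : (D i j - A i j).degree < (A i i).degree :=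
            (degree_sub_le _ _).trans_lt (max_lt (by rw [hAD]; exact hD.2.2 i j h) (hA.2.2 i j h))
          rw [← h3] at h4
          exact absurd h4 (not_lt.mpr (degree_le_mul_left _ hB))
      exact fun j => ⟨fin H W H' hH hH' hd e1 j, fin H' W' H hH' hH hd.symm e2 j⟩
  have : W = 1 := by
    ext1 i j; exact (key n i i.2 j).1
  rw [← h1, this, mul_one]

open Classical in
noncomputable def wt (p : F[X]) : ℕ := if p = 0 then 0 else p.natDegree + 1

theorem wt_lt {p q : F[X]} (h : p.degree < q.degree) : wt p < wt q := by
  have hq : q ≠ 0 := by rintro rfl; simp at h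
  unfold wt
  rw [if_neg hq]
  split_ifs with hp
  · omega
  · have := natDegree_lt_natDegree hp h
    omega

theorem vecMul_transv {m : ℕ} (v : Fin m → F[X]) (a b : Fin m) (c : F[X]) (l : Fin m) :
    (v ᵥ* transvection a b c) l = v l + if l = b then c * v a else 0 := by
  simp only [transvection, vecMul_add, vecMul_one, Pi.add_apply]
  congr 1
  simp only [vecMul, dotProduct, Matrix.single_apply]
  split_ifs with h
  · subst h; simp [mul_comm]
  · apply Finset.sum_eq_zero
    intro x _
    rw [if_neg (by rintro ⟨_, h'⟩; exact h h'.symm), mul_zero]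

theorem row_reduce (r : Fin (n+1) → F[X]) :
    ∃ U : Matrix (Fin (n+1)) (Fin (n+1)) F[X], IsUnit U.det ∧ ∀ j, j ≠ 0 → (r ᵥ* U) j = 0 := by
  classical
  let Q : ℕ → Prop := fun s => ∃ U : Matrix (Fin (n+1)) (Fin (n+1)) F[X], IsUnit U.det ∧
    ∑ j, wt ((r ᵥ* U) j) = s
  have hQ : ∃ s, Q s := ⟨_, 1, by simp, rfl⟩
  obtain ⟨U, hU, hs⟩ := Nat.find_spec hQ
  have hmin := fun m hm => Nat.find_min hQ (m := m) hm
  rw [← hs] at hmin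
  have huniq : ∀ a b, a ≠ b → (r ᵥ* U) a ≠ 0 → (r ᵥ* U) b ≠ 0 → 
      (r ᵥ* U) b = 0 ∨ (r ᵥ* U) b ≠ 0 → ¬ (((r ᵥ* U) a).degree ≤ ((r ᵥ* U) b).degree) := by
    intro a b hab ha hb _ hle
    refine hmin _ ?_ ⟨U * transvection a b (-((r ᵥ* U) b / (r ᵥ* U) a)), ?_, rfl⟩
    · rw [← vecMul_vecMul]
      have hb' : ((r ᵥ* U) ᵥ* transvection a b (-((r ᵥ* U) b / (r ᵥ* U) a))) b
          = (r ᵥ* U) b % (r ᵥ* U) a := by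
        rw [vecMul_transv, if_pos rfl, EuclideanDomain.mod_eq_sub_mul_div]
        ring
      have hlt : wt (((r ᵥ* U) ᵥ* transvection a b (-((r ᵥ* U) b / (r ᵥ* U) a))) b) < wt ((r ᵥ* U) b) := by
        rw [hb']
        exact wt_lt ((EuclideanDomain.mod_lt _ ha).trans_le hle)
      apply Finset.sum_lt_sum
      · intro l _
        by_cases hl : l = b
        · subst hl; exact hlt.le
        · rw [vecMul_transv, if_neg hl, add_zero]
      · exact ⟨b, Finset.mem_univ _, hlt⟩
    · rw [det_mul, det_transvection_of_ne _ _ hab, mul_one]; exact hU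
  have huniq2 : ∀ a b, (r ᵥ* U) a ≠ 0 → (r ᵥ* U) b ≠ 0 → a = b := by
    intro a b ha hb
    by_contra hab
    rcases le_total ((r ᵥ* U) a).degree ((r ᵥ* U) b).degree with h | h
    · exact huniq a b hab ha hb (em _) h
    · exact huniq b a (Ne.symm hab) hb ha (em _) h
  by_cases hz : ∃ a, (r ᵥ* U) a ≠ 0
  · obtain ⟨a, ha⟩ := hz
    refine ⟨U.submatrix id (Equiv.swap 0 a), ?_, ?_⟩
    · rw [Matrix.det_permute']
      refine IsUnit.mul ?_ hU
      exact ((Equiv.Perm.sign (Equiv.swap 0 a)).isUnit).map (Int.castRingHom F[X])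
    · intro j hj
      have : (r ᵥ* U.submatrix id (Equiv.swap 0 a)) j = (r ᵥ* U) (Equiv.swap 0 a j) := rfl
      rw [this]
      by_contra hcon
      have := huniq2 _ _ hcon ha
      rw [Equiv.swap_apply_eq_iff, Equiv.swap_apply_right] at this
      exact hj this
  · push Not at hz
    exact ⟨U, hU, fun j _ => hz j⟩

theorem herm_mod (H : Matrix (Fin n) (Fin n) F[X]) (hH : IsHerm H) (c : Fin n → F[X]) :
    ∃ z : Fin n → F[X], ∀ i, (c i + (H *ᵥ z) i).degree < (H i i).degree := by
  classical
  have : ∀ m ≤ n, ∃ z : Fin n → F[X], ∀ i, i.val < m → (c i + (H *ᵥ z) i).degree < (H i i).degree := by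
    intro m
    induction m with
    | zero => exact fun _ => ⟨0, fun i hi => by omega⟩
    | succ m ih =>
      intro hm
      obtain ⟨z, hz⟩ := ih (by omega)
      let a : Fin n := ⟨m, hm⟩
      refine ⟨z + Pi.single a (-((c a + (H *ᵥ z) a) /ₘ H a a)), fun i hi => ?_⟩
      rw [mulVec_add, Pi.add_apply, mulVec_single]
      simp only [Pi.smul_apply, MulOpposite.smul_eq_mul_unop, MulOpposite.unop_op, col_apply]
      rcases Nat.lt_succ_iff_lt_or_eq.mp hi with hlt | heq
      · rw [hH.2.1 i a (by rw [Fin.lt_def]; exact hlt)]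
        simpa using hz i hlt
      · have : i = a := Fin.ext heq
        rw [this]
        have h2 := modByMonic_add_div (c a + (H *ᵥ z) a) (H a a)
        have h3 : c a + ((H *ᵥ z) a + H a a * -((c a + (H *ᵥ z) a) /ₘ H a a)) = 
            (c a + (H *ᵥ z) a) %ₘ H a a := by
          linear_combination -h2
        rw [h3]
        exact degree_modByMonic_lt _ (hH.1 a)
  obtain ⟨z, hz⟩ := this n le_rfl
  exact ⟨z, fun i => hz i i.2⟩

theorem herm_exists : ∀ {n : ℕ} (M : Matrix (Fin n) (Fin n) F[X]), M.det ≠ 0 →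
    ∃ U : Matrix (Fin n) (Fin n) F[X], IsUnit U.det ∧ IsHerm (M * U) := by
  intro n
  induction n with
  | zero =>
    intro M _
    exact ⟨1, by simp, fun i => i.elim0, fun i => i.elim0, fun i => i.elim0⟩
  | succ n ih =>
    intro M hM
    obtain ⟨U, hU, hrow⟩ := row_reduce (M 0)
    have hrow' : ∀ j : Fin n, (M * U) 0 j.succ = 0 := fun j => hrow _ (Fin.succ_ne_zero j)
    have hdet : (M * U).det ≠ 0 := by rw [det_mul]; exact mul_ne_zero hM hU.ne_zero
    set M1 := M * U with hM1
    have hd : M1.det = M1 0 0 * (M1.submatrix Fin.succ Fin.succ).det := by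
      rw [Matrix.det_succ_row_zero, Fin.sum_univ_succ]
      simp [hrow']
    rw [hd] at hdet
    have hg : M1 0 0 ≠ 0 := left_ne_zero_of_mul hdet
    obtain ⟨V, hV, hH⟩ := ih _ (right_ne_zero_of_mul hdet)
    set H := M1.submatrix Fin.succ Fin.succ * V with hHdef
    set s : F[X] := C (M1 0 0).leadingCoeff⁻¹ with hs
    obtain ⟨z, hz⟩ := herm_mod H hH (fun i => M1 i.succ 0 * s)
    let W : Matrix (Fin (n+1)) (Fin (n+1)) F[X] :=
      Matrix.of (Fin.cons (Fin.cons s 0) (fun i => Fin.cons ((V *ᵥ z) i) (V i)))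
    have W00 : W 0 0 = s := rfl
    have W0s : ∀ j : Fin n, W 0 j.succ = 0 := fun j => rfl
    have Ws0 : ∀ i : Fin n, W i.succ 0 = (V *ᵥ z) i := fun i => rfl
    have Wss : ∀ i j : Fin n, W i.succ j.succ = V i j := fun i j => rfl
    have hWdet : W.det = s * V.det := by
      rw [Matrix.det_succ_row_zero, Fin.sum_univ_succ]
      have : W.submatrix Fin.succ Fin.succ = V := by ext1 i j; exact Wss i j
      simp [W0s, W00, this]
    have P00 : (M1 * W) 0 0 = M1 0 0 * s := by
      rw [Matrix.mul_apply, Fin.sum_univ_succ]; simp [hrow', W00]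
    have P0s : ∀ j : Fin n, (M1 * W) 0 j.succ = 0 := fun j => by
      rw [Matrix.mul_apply, Fin.sum_univ_succ]; simp [hrow', W0s]
    have Pss : ∀ i j : Fin n, (M1 * W) i.succ j.succ = H i j := fun i j => by
      rw [Matrix.mul_apply, Fin.sum_univ_succ]; simp [W0s, Wss, hHdef, Matrix.mul_apply]
    have Ps0 : ∀ i : Fin n, (M1 * W) i.succ 0 = M1 i.succ 0 * s + (H *ᵥ z) i := fun i => by
      rw [Matrix.mul_apply, Fin.sum_univ_succ, W00, hHdef, ← mulVec_mulVec]
      congr 1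
    refine ⟨U * W, ?_, ?_⟩
    · rw [det_mul, hWdet]
      refine hU.mul (IsUnit.mul ?_ hV)
      exact isUnit_C.mpr (isUnit_iff_ne_zero.mpr (inv_ne_zero (leadingCoeff_ne_zero.mpr hg)))
    · rw [← Matrix.mul_assoc]
      change IsHerm (M1 * W)
      refine ⟨fun i => ?_, fun i j => ?_, fun i j => ?_⟩
      · refine Fin.cases ?_ (fun i => ?_) i
        · rw [P00]; exact monic_mul_leadingCoeff_inv hg
        · rw [Pss]; exact hH.1 i
      · refine Fin.cases ?_ (fun i => ?_) i
        · refine Fin.cases ?_ (fun j => ?_) j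
          · intro h; exact absurd h (lt_irrefl _)
          · intro _; exact P0s j
        · refine Fin.cases ?_ (fun j => ?_) j
          · intro h; exact absurd h (Fin.not_lt_zero _)
          · intro h; rw [Pss]; exact hH.2.1 i j (Fin.succ_lt_succ_iff.mp h)
      · refine Fin.cases ?_ (fun i => ?_) i
        · intro h; exact absurd h (Fin.not_lt_zero _)
        · refine Fin.cases ?_ (fun j => ?_) j
          · intro _; rw [Ps0, Pss]; exact hz i
          · intro h; rw [Pss, Pss]; exact hH.2.2 i j (Fin.succ_lt_succ_iff.mp h)

theorem herm_det {H : Matrix (Fin n) (Fin n) F[X]} (hH : IsHerm H) :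
    H.det ≠ 0 ∧ H.det.natDegree = ∑ i, (H i i).natDegree := by
  have : H.det = ∏ i, H i i := Matrix.det_of_isLowerTriangular H (fun i j h => hH.2.1 i j h)
  rw [this]
  exact ⟨Finset.prod_ne_zero_iff.mpr fun i _ => (hH.1 i).ne_zero,
    natDegree_prod_of_monic _ _ fun i _ => hH.1 i⟩

theorem card_lt [Fintype F] (d : ℕ) : Nat.card {p : F[X] // p.degree < d} = Fintype.card F ^ d := by
  have e1 : {p : F[X] // p.degree < d} ≃ degreeLT F d :=
    Equiv.subtypeEquivRight fun p => mem_degreeLT.symm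
  rw [Nat.card_congr (e1.trans (degreeLTEquiv F d).toEquiv)]
  simp

theorem card_monic [Fintype F] (d : ℕ) :
    Nat.card {p : F[X] // p.Monic ∧ p.natDegree = d} = Fintype.card F ^ d := by
  rw [← card_lt]
  symm
  refine Nat.card_congr ⟨fun p => ⟨X ^ d + p.1, monic_X_pow_add p.2, ?_⟩, fun p => ⟨p.1 - X ^ d, ?_⟩,
    fun p => ?_, fun p => ?_⟩
  · rw [natDegree_add_eq_left_of_degree_lt, natDegree_X_pow]
    rw [degree_X_pow]; exact p.2
  · obtain ⟨p, hp, hd⟩ := p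
    have hdeg : p.degree = d := by rw [degree_eq_natDegree hp.ne_zero, hd]
    have := degree_sub_lt (p := p) (q := X ^ d) (by rw [hdeg, degree_X_pow]) hp.ne_zero
      (by rw [hp.leadingCoeff, (monic_X_pow d).leadingCoeff])
    rwa [hdeg] at this
  · ext1; simp
  · ext1; simp

def HermEntry (f : Fin n → ℕ) (i j : Fin n) (p : F[X]) : Prop :=
  (i = j ∧ p.Monic ∧ p.natDegree = f i) ∨ (i < j ∧ p = 0) ∨ (j < i ∧ p.degree < f i)

theorem card_entry [Fintype F] (f : Fin n → ℕ) (i j : Fin n) :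
    Nat.card {p : F[X] // HermEntry f i j p} = if j ≤ i then Fintype.card F ^ f i else 1 := by
  rcases lt_trichotomy i j with h | h | h
  · rw [if_neg (not_le.mpr h)]
    have : ∀ p : F[X], HermEntry f i j p ↔ p = 0 := fun p => by
      simp [HermEntry, h, h.ne, h.not_gt]
    rw [Nat.card_congr (Equiv.subtypeEquivRight this)]
    simp
  · subst h
    rw [if_pos le_rfl, ← card_monic]
    refine Nat.card_congr (Equiv.subtypeEquivRight fun p => ?_)
    simp [HermEntry]
  · rw [if_pos h.le, ← card_lt]
    refine Nat.card_congr (Equiv.subtypeEquivRight fun p => ?_)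
    simp [HermEntry, h, h.ne', h.not_gt]

theorem herm_iff (f : Fin n → ℕ) (H : Matrix (Fin n) (Fin n) F[X]) :
    (IsHerm H ∧ ∀ i, (H i i).natDegree = f i) ↔ ∀ i j, HermEntry f i j (H i j) := by
  constructor
  · rintro ⟨h, hf⟩ i j
    rcases lt_trichotomy i j with hij | hij | hij
    · exact Or.inr (Or.inl ⟨hij, h.2.1 i j hij⟩)
    · subst hij; exact Or.inl ⟨rfl, h.1 i, hf i⟩
    · refine Or.inr (Or.inr ⟨hij, ?_⟩)
      have := h.2.2 i j hij
      rwa [degree_eq_natDegree (h.1 i).ne_zero, hf i] at this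
  · intro h
    have hd : ∀ i, (H i i).Monic ∧ (H i i).natDegree = f i := fun i => by
      have := h i i
      simpa [HermEntry] using this
    refine ⟨⟨fun i => (hd i).1, fun i j hij => ?_, fun i j hij => ?_⟩, fun i => (hd i).2⟩
    · have := h i j
      simpa [HermEntry, hij, hij.ne, hij.not_gt] using this
    · rw [degree_eq_natDegree (hd i).1.ne_zero, (hd i).2]
      have := h i j
      simpa [HermEntry, hij, hij.ne', hij.not_gt] using this

/-- Hermite forms with prescribed diagonal degrees -/
def HF (F : Type*) [Field F] {n : ℕ} (f : Fin n → ℕ) : Type _ :=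
  {H : Matrix (Fin n) (Fin n) F[X] // IsHerm H ∧ ∀ i, (H i i).natDegree = f i}

theorem card_HF [Fintype F] (f : Fin n → ℕ) :
    Nat.card (HF F f) = Fintype.card F ^ (∑ i : Fin n, ((i : ℕ) + 1) * f i) := by
  have e1 : HF F f ≃ ∀ i j, {p : F[X] // HermEntry f i j p} :=
    (Equiv.subtypeEquivRight (herm_iff f)).trans
      ((Equiv.subtypePiEquivPi (β := fun _ => Fin n → F[X])
        (p := fun i r => ∀ j, HermEntry f i j (r j))).trans
        (Equiv.piCongrRight fun i => Equiv.subtypePiEquivPi))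
  rw [Nat.card_congr e1, Nat.card_pi, ← Finset.prod_pow_eq_pow_sum]
  refine Finset.prod_congr rfl fun i _ => ?_
  rw [Nat.card_pi]
  simp only [card_entry]
  rw [Finset.prod_ite, Finset.prod_const, Finset.prod_const_one, mul_one, ← pow_mul]
  have : (Finset.univ.filter (fun j => j ≤ i)).card = (i : ℕ) + 1 := by
    rw [← Fin.card_Iic]; congr 1; ext; simp
  rw [this, mul_comm]

theorem finite_HF [Fintype F] (f : Fin n → ℕ) : Finite (HF F f) := by
  apply Nat.finite_of_card_ne_zero
  rw [card_HF]
  exact pow_ne_zero _ Fintype.card_ne_zero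

theorem final [Fintype F] (t : ℕ) (hn : 1 ≤ n) (k : ℕ) (hk : t ≤ k) :
    {M : Matrix (Fin n) (Fin n) F[X] |
        M.det ≠ 0 ∧ M.det.natDegree = t ∧ ∀ i j, (M i j).degree ≤ (k : ℕ)}.ncard
      = (∑ f ∈ Finset.Nat.antidiagonalTuple n t,
          Fintype.card F ^ (∑ i : Fin n, ((i : ℕ) + 1) * f i)) *
        (Nat.card (GL (Fin n) F) * Fintype.card F ^ ((n - 1) * (n * k - t))) := by
  classical
  let I := Σ f : ↥(Finset.Nat.antidiagonalTuple n t), HF F f.1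
  have : ∀ f : ↥(Finset.Nat.antidiagonalTuple n t), Finite (HF F f.1) := fun f => finite_HF f.1
  have hIf : Finite I := inferInstanceAs (Finite (Σ f : ↥(Finset.Nat.antidiagonalTuple n t), HF F f.1))
  have : Fintype I := Fintype.ofFinite I
  let B : Matrix (Fin n) (Fin n) F[X] → Set (Matrix (Fin n) (Fin n) F[X]) := fun H =>
    {U | IsUnit U.det ∧ ∀ i j, ((H * U) i j).natDegree ≤ k}
  have hI : Nat.card I = ∑ f ∈ Finset.Nat.antidiagonalTuple n t,
          Fintype.card F ^ (∑ i : Fin n, ((i : ℕ) + 1) * f i) := by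
    rw [Nat.card_sigma]
    simp only [card_HF]
    exact Finset.sum_coe_sort (Finset.Nat.antidiagonalTuple n t)
      (fun f => Fintype.card F ^ (∑ i : Fin n, ((i : ℕ) + 1) * f i))
  have hdt : ∀ p : I, p.2.1.det.natDegree = t := fun p => by
    rw [(herm_det p.2.2.1).2, Finset.sum_congr rfl fun i _ => p.2.2.2 i]
    exact Finset.Nat.mem_antidiagonalTuple.mp p.1.2
  have hB : ∀ p : I, Nat.card (B p.2.1) =
      Nat.card (GL (Fin n) F) * Fintype.card F ^ ((n - 1) * (n * k - t)) := fun p => by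
    rw [Nat.card_coe_set_eq]
    exact count_bases hn k t hk p.2.1 (herm_det p.2.2.1).1 (hdt p)
  have hpos : Nat.card (GL (Fin n) F) * Fintype.card F ^ ((n - 1) * (n * k - t)) ≠ 0 :=
    mul_ne_zero Nat.card_pos.ne' (pow_ne_zero _ Fintype.card_ne_zero)
  have hBf : ∀ p : I, Finite (B p.2.1) := fun p => Nat.finite_of_card_ne_zero (by rw [hB]; exact hpos)
  have hsig : Nat.card (Σ p : I, B p.2.1) = (∑ f ∈ Finset.Nat.antidiagonalTuple n t,
          Fintype.card F ^ (∑ i : Fin n, ((i : ℕ) + 1) * f i)) *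
        (Nat.card (GL (Fin n) F) * Fintype.card F ^ ((n - 1) * (n * k - t))) := by
    rw [Nat.card_sigma, Finset.sum_congr rfl fun p _ => hB p, Finset.sum_const, Finset.card_univ,
      ← Nat.card_eq_fintype_card, hI, smul_eq_mul]
  rw [← hsig, ← Nat.card_coe_set_eq]
  symm
  refine Nat.card_congr (Equiv.ofBijective (fun p => ⟨p.1.2.1 * p.2.1, ?_, ?_, ?_⟩) ⟨?_, ?_⟩)
  · rw [det_mul]
    exact mul_ne_zero (herm_det p.1.2.2.1).1 p.2.2.1.ne_zero
  · rw [det_mul, natDegree_mul (herm_det p.1.2.2.1).1 p.2.2.1.ne_zero,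
      natDegree_eq_zero_of_isUnit p.2.2.1, add_zero, hdt p.1]
  · intro i j
    rw [← natDegree_le_iff_degree_le]
    exact p.2.2.2 i j
  · rintro ⟨⟨⟨f, hf⟩, ⟨H, hH⟩⟩, ⟨U, hU⟩⟩ ⟨⟨⟨f', hf'⟩, ⟨H', hH'⟩⟩, ⟨U', hU'⟩⟩ h
    have h1 : H * U = H' * U' := congrArg Subtype.val h
    have hu : IsUnit U.det := hU.1
    have hu' : IsUnit U'.det := hU'.1
    have hHH : H = H' := by
      refine herm_unique H H' (U * U'⁻¹) (U' * U⁻¹) hH.1 hH'.1 ?_ ?_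
      · rw [← Matrix.mul_assoc, h1, Matrix.mul_assoc, Matrix.mul_nonsing_inv _ hu', Matrix.mul_one]
      · rw [← Matrix.mul_assoc, ← h1, Matrix.mul_assoc, Matrix.mul_nonsing_inv _ hu, Matrix.mul_one]
    subst hHH
    have hff : f = f' := by
      funext i; exact (hH.2 i).symm.trans (hH'.2 i)
    subst hff
    have hHdet : H.det ≠ 0 := (herm_det hH.1).1
    have hUU : U = U' := by
      ext1 i j
      have h2 : H *ᵥ (fun i => U i j - U' i j) = 0 := by
        funext l
        have h3 := congrFun (congrFun h1 l) j
        rw [Matrix.mul_apply, Matrix.mul_apply] at h3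
        simp only [mulVec, dotProduct, mul_sub, Finset.sum_sub_distrib, Pi.zero_apply]
        rw [h3, sub_self]
      have h4 := congrFun (Matrix.eq_zero_of_mulVec_eq_zero hHdet h2) i
      exact sub_eq_zero.mp h4
    subst hUU
    rfl
  · rintro ⟨M, hM0, hMt, hMk⟩
    obtain ⟨U, hU, hH⟩ := herm_exists M hM0
    have hinv : M * U * U⁻¹ = M := by
      rw [Matrix.mul_assoc, Matrix.mul_nonsing_inv _ hU, Matrix.mul_one]
    have hmem : (fun i => ((M * U) i i).natDegree) ∈ Finset.Nat.antidiagonalTuple n t := by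
      rw [Finset.Nat.mem_antidiagonalTuple, ← (herm_det hH).2, det_mul, natDegree_mul hM0 hU.ne_zero,
        natDegree_eq_zero_of_isUnit hU, add_zero, hMt]
    refine ⟨⟨⟨⟨_, hmem⟩, ⟨M * U, hH, fun _ => rfl⟩⟩, ⟨U⁻¹, Matrix.isUnit_nonsing_inv_det U hU, ?_⟩⟩, ?_⟩
    · intro i j
      rw [natDegree_le_iff_degree_le]
      change ((M * U * U⁻¹) i j).degree ≤ _
      rw [hinv]
      exact hMk i j
    · exact Subtype.ext hinv

end MatCount

/-- The number of `n × n` matrices over `F[x]` with nonzero determinant of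
degree `t` and all entries of degree at most `k` (for `k ≥ t`) equals
`c_{n,t} · #GL_n(F) · q^((n-1)(nk - t))`, where
`c_{n,t} = Σ_{t₁+⋯+tₙ = t} q^{t₁ + 2 t₂ + ⋯ + n tₙ}`. -/
theorem stmt_1 (F : Type*) [Field F] [Fintype F] (q : ℕ) (hq : Fintype.card F = q)
    (n t : ℕ) (hn : 1 ≤ n) (k : ℕ) (hk : t ≤ k) :
    {X : Matrix (Fin n) (Fin n) F[X] |
        X.det ≠ 0 ∧ X.det.natDegree = t ∧ ∀ i j, (X i j).degree ≤ (k : ℕ)}.ncard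
      = (∑ f ∈ Finset.Nat.antidiagonalTuple n t, q ^ (∑ i : Fin n, ((i : ℕ) + 1) * f i)) *
        Nat.card (GL (Fin n) F) * q ^ ((n - 1) * (n * k - t)) := by
  subst hq
  rw [mul_assoc]
  exact MatCount.final t hn k hk
end

section
/- Let F be a finite field with q elements, let 1 ≤ l ≤ n, and let M be an n×n upper-triangular matrix over F[x] with det(M) ≠ 0, written in block form M = [[D, *],[0, *]] where D is the top-left l×l block. Then there exists an upper-triangular n×n matrix M' = [[D', *],[0, *]] over F[x] such that D' (the top-left l×l block of M') is a diagonal matrix, deg(det(D')) ≥ deg(det(D)), deg(det(M')) = deg(det(M)), and for every natural number k, the number of g ∈ GL_n(F[x]) such that gM satisfies P(k) equals the number of g ∈ GL_n(F[x]) such that gM' satisfies P(k). -/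
open Polynomial Matrix

section Helpers

variable {F : Type*} [Field F]

lemma aux_coeff_prod {ι : Type*} (s : Finset ι) (f : ι → F[X]) (d : ι → ℕ)
    (h : ∀ i ∈ s, (f i).natDegree ≤ d i) :
    (∏ i ∈ s, f i).natDegree ≤ ∑ i ∈ s, d i ∧
    (∏ i ∈ s, f i).coeff (∑ i ∈ s, d i) = ∏ i ∈ s, (f i).coeff (d i) := by
  refine ⟨(natDegree_prod_le s f).trans (Finset.sum_le_sum h), ?_⟩
  classical
  induction s using Finset.induction_on with
  | empty => simp
  | insert a s ha ih =>
    have hsub : ∀ i ∈ s, (f i).natDegree ≤ d i := fun i hi => h i (Finset.mem_insert_of_mem hi)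
    rw [Finset.prod_insert ha, Finset.sum_insert ha, Finset.prod_insert ha,
      coeff_mul_add_eq_of_natDegree_le (h a (Finset.mem_insert_self _ _))
        ((natDegree_prod_le s f).trans (Finset.sum_le_sum hsub)), ih hsub]

/-- Degree and top coefficient of a determinant with row degree bounds. -/
lemma aux_det {m : ℕ} (A : Matrix (Fin m) (Fin m) F[X]) (d : Fin m → ℕ)
    (h : ∀ i j, (A i j).natDegree ≤ d i) :
    A.det.natDegree ≤ ∑ i, d i ∧
    A.det.coeff (∑ i, d i) = (Matrix.of fun i j => (A i j).coeff (d i)).det := by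
  have hs : ∀ σ : Equiv.Perm (Fin m), ∑ i, d (σ i) = ∑ i, d i := fun σ => Equiv.sum_comp σ d
  constructor
  · rw [Matrix.det_apply]
    refine natDegree_sum_le_of_forall_le _ _ fun σ _ => ?_
    refine (natDegree_smul_le _ _).trans ?_
    rw [← hs σ]
    exact (aux_coeff_prod _ (fun i => A (σ i) i) (fun i => d (σ i)) fun i _ => h _ _).1
  · rw [Matrix.det_apply, Matrix.det_apply, finsetSum_coeff]
    refine Finset.sum_congr rfl fun σ _ => ?_
    have := (aux_coeff_prod Finset.univ (fun i => A (σ i) i) (fun i => d (σ i))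
      fun i _ => h _ _).2
    rw [hs σ] at this
    rw [coeff_smul, this]
    rfl

lemma aux_coeff_mul (p r : F[X]) (d m : ℕ) (hr : r.natDegree ≤ d)
    (hp : p = 0 ∨ p.natDegree + d ≤ m) :
    (p * r).coeff m = p.coeff (m - d) * r.coeff d := by
  rcases hp with rfl | hp
  · simp
  · have := coeff_mul_add_eq_of_natDegree_le (f := p) (g := r) (df := m - d) (dg := d)
      (by omega) hr
    rwa [Nat.sub_add_cancel (by omega)] at this

/-- Predictable degree property. -/
lemma aux_predict {n : ℕ} (R : Matrix (Fin n) (Fin n) F[X]) (d : Fin n → ℕ)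
    (h : ∀ i j, (R i j).natDegree ≤ d i)
    (hL : (Matrix.of fun i j => (R i j).coeff (d i)).det ≠ 0) (p : Fin n → F[X]) (k : ℕ) :
    (∀ j, ((p ᵥ* R) j).degree ≤ (k : ℕ)) ↔ ∀ i, p i = 0 ∨ (p i).natDegree + d i ≤ k := by
  constructor
  · intro hk
    classical
    by_contra! hcon
    obtain ⟨i1, hi1, hi1k⟩ := hcon
    obtain ⟨i0, hi0, hmax⟩ := Finset.exists_max_image
      (Finset.univ.filter fun i => p i ≠ 0) (fun i => (p i).natDegree + d i)
      ⟨i1, by simpa using hi1⟩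
    simp only [Finset.mem_filter, Finset.mem_univ, true_and] at hi0 hmax
    set m := (p i0).natDegree + d i0 with hm
    have hkm : k < m := lt_of_lt_of_le hi1k (hmax i1 hi1)
    apply hL
    rw [← Matrix.exists_vecMul_eq_zero_iff]
    refine ⟨fun i => (p i).coeff (m - d i), ?_, ?_⟩
    · intro h0
      have := congrFun h0 i0
      simp only [hm, Nat.add_sub_cancel, Pi.zero_apply] at this
      exact hi0 (leadingCoeff_eq_zero.mp this)
    · funext j
      have h1 : ((p ᵥ* R) j).coeff m = 0 :=
        coeff_eq_zero_of_degree_lt (lt_of_le_of_lt (hk j) (by exact_mod_cast hkm))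
      simp only [Matrix.vecMul, dotProduct, finsetSum_coeff] at h1 ⊢
      rw [Pi.zero_apply, ← h1]
      refine Finset.sum_congr rfl fun i _ => ?_
      rw [aux_coeff_mul _ _ (d i) m (h i j)
        (by by_cases hp : p i = 0
            · exact Or.inl hp
            · exact Or.inr (hmax i hp))]
      rfl
  · intro hk j
    simp only [Matrix.vecMul, dotProduct]
    refine (degree_sum_le _ _).trans (Finset.sup_le fun i _ => ?_)
    rcases hk i with h0 | h0
    · simp [h0]
    · refine degree_le_of_natDegree_le (natDegree_mul_le.trans ?_)
      have := h i j
      omega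

/-- Existence of a row-reduced form. -/
lemma aux_reduce {n : ℕ} (M : Matrix (Fin n) (Fin n) F[X]) (hdet : M.det ≠ 0) :
    ∃ (U : Matrix (Fin n) (Fin n) F[X]) (d : Fin n → ℕ), IsUnit U.det ∧
      (∀ i j, ((U * M) i j).natDegree ≤ d i) ∧
      (Matrix.of fun i j => ((U * M) i j).coeff (d i)).det ≠ 0 := by
  let Q : ℕ → Prop := fun s => ∃ (U : Matrix (Fin n) (Fin n) F[X]) (d : Fin n → ℕ),
    IsUnit U.det ∧ (∀ i j, ((U * M) i j).natDegree ≤ d i) ∧ ∑ i, d i = s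
  have hQ : ∃ s, Q s := by
    refine ⟨_, 1, fun i => Finset.univ.sup fun j => (M i j).natDegree, by simp, ?_, rfl⟩
    intro i j
    rw [one_mul]
    exact Finset.le_sup (f := fun j => (M i j).natDegree) (Finset.mem_univ j)
  classical
  obtain ⟨U, d, hU, hd, hsum⟩ := Nat.find_spec hQ
  refine ⟨U, d, hU, hd, fun hL => ?_⟩
  rw [← Matrix.exists_vecMul_eq_zero_iff] at hL
  obtain ⟨v, hv, hvL⟩ := hL
  obtain ⟨i1, hi1⟩ := Function.ne_iff.mp hv
  obtain ⟨i0, hi0, hmax⟩ := Finset.exists_max_image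
      (Finset.univ.filter fun i => v i ≠ 0) d ⟨i1, by simpa using hi1⟩
  simp only [Finset.mem_filter, Finset.mem_univ, true_and] at hi0 hmax
  let c : Fin n → F[X] := fun i => C (v i) * X ^ (d i0 - d i)
  have hc : ∀ i, c i = 0 ∨ (c i).natDegree + d i ≤ d i0 := by
    intro i
    by_cases hvi : v i = 0
    · left; simp [c, hvi]
    · right
      have := hmax i hvi
      simp only [c, natDegree_C_mul_X_pow _ _ hvi]
      omega
  have hcoef : ∀ i, (c i).coeff (d i0 - d i) = v i := by
    intro i; simp [c]
  let Unew := U.updateRow i0 (∑ k, c k • U k)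
  have hUnew : IsUnit Unew.det := by
    simp only [Unew, Matrix.det_updateRow_sum, smul_eq_mul]
    refine IsUnit.mul ?_ hU
    simp only [c, Nat.sub_self, pow_zero, mul_one]
    exact isUnit_C.mpr (isUnit_iff_ne_zero.mpr hi0)
  have hrow : ∀ j, (Unew * M) i0 j = ∑ i, c i * (U * M) i j := by
    intro j
    simp only [Unew, Matrix.updateRow_mul, Matrix.updateRow_self]
    have : (∑ k, c k • U k) = c ᵥ* U := by
      funext j; simp [Matrix.vecMul, dotProduct]
    rw [this, Matrix.vecMul_vecMul]
    rfl
  have hother : ∀ i, i ≠ i0 → ∀ j, (Unew * M) i j = (U * M) i j := by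
    intro i hi j
    simp only [Unew, Matrix.updateRow_mul, Matrix.updateRow_ne hi]
  have hdeg : ∀ j, ((Unew * M) i0 j).natDegree ≤ d i0 := by
    intro j
    rw [hrow]
    refine natDegree_sum_le_of_forall_le _ _ fun i _ => ?_
    rcases hc i with h0 | h0
    · simp [h0]
    · refine natDegree_mul_le.trans ?_
      have := hd i j
      omega
  have hco : ∀ j, ((Unew * M) i0 j).coeff (d i0) = 0 := by
    intro j
    rw [hrow, finsetSum_coeff]
    have := congrFun hvL j
    simp only [Matrix.vecMul, dotProduct, Pi.zero_apply] at this
    rw [← this]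
    refine Finset.sum_congr rfl fun i _ => ?_
    rw [aux_coeff_mul _ _ (d i) (d i0) (hd i j) (hc i), hcoef]
    rfl
  have hne : (Unew * M).det ≠ 0 := by
    rw [Matrix.det_mul]
    exact mul_ne_zero hUnew.ne_zero hdet
  have hpos : 0 < d i0 := by
    by_contra h0
    have h0 : d i0 = 0 := by omega
    apply hne
    refine Matrix.det_eq_zero_of_row_eq_zero i0 fun j => ?_
    have h1 := hdeg j
    have h2 := hco j
    rw [h0] at h1 h2
    rw [eq_C_of_natDegree_le_zero h1, h2, C_0]
  have hlt : ∑ i, Function.update d i0 (d i0 - 1) i < Nat.find hQ := by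
    rw [← hsum]
    refine Finset.sum_lt_sum (fun i _ => ?_) ⟨i0, Finset.mem_univ _, ?_⟩
    · by_cases hi : i = i0
      · subst hi; simp
      · simp [Function.update_of_ne hi]
    · simp; omega
  refine Nat.find_min hQ hlt ⟨Unew, _, hUnew, ?_, rfl⟩
  intro i j
  by_cases hi : i = i0
  · subst hi
    rw [Function.update_self]
    refine natDegree_le_iff_coeff_eq_zero.mpr fun N hN => ?_
    rcases (show d i ≤ N by omega).eq_or_lt with h1 | h1
    · rw [← h1]; exact hco j
    · exact coeff_eq_zero_of_natDegree_lt (lt_of_le_of_lt (hdeg j) h1)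
  · rw [Function.update_of_ne hi, hother i hi]
    exact hd i j

/-- Some `l` rows of the first `l` columns have nonzero minor. -/
lemma aux_minor {n : ℕ} (A : Matrix (Fin n) (Fin n) F[X]) (hA : A.det ≠ 0) (l : ℕ)
    (hln : l ≤ n) :
    ∃ f : Fin l → Fin n, Function.Injective f ∧
      (A.submatrix f (Fin.castLE hln)).det ≠ 0 := by
  induction hln using Nat.decreasingInduction with
  | self => exact ⟨id, Function.injective_id, by simpa using hA⟩
  | of_succ k hk ih =>
    obtain ⟨f, hf, hd⟩ := ih
    rw [Matrix.det_succ_column _ (Fin.last k)] at hd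
    obtain ⟨i, -, hi⟩ := Finset.exists_ne_zero_of_sum_ne_zero hd
    refine ⟨f ∘ i.succAbove, hf.comp Fin.succAbove_right_injective, ?_⟩
    have := right_ne_zero_of_mul hi
    rw [Matrix.submatrix_submatrix] at this
    convert this using 3
    funext j
    ext
    simp

end Helpers

/-- Given `1 ≤ l ≤ n` and an upper-triangular `n × n` matrix `M` over `F[x]`
with `det M ≠ 0`, there is an upper-triangular matrix `M'` whose top-left `l × l` block is
diagonal, with `deg det D' ≥ deg det D`, `deg det M' = deg det M`, and such that for every `k`
the number of `g ∈ GL_n(F[x])` with `gM` satisfying `P(k)` equals the number of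
`g ∈ GL_n(F[x])` with `gM'` satisfying `P(k)`. -/
theorem stmt_2 (F : Type*) [Field F] [Fintype F]
    (n l : ℕ) (hl1 : 1 ≤ l) (hln : l ≤ n)
    (M : Matrix (Fin n) (Fin n) F[X])
    (hMtri : ∀ i j : Fin n, (j : ℕ) < (i : ℕ) → M i j = 0)
    (hdet : M.det ≠ 0) :
    ∃ M' : Matrix (Fin n) (Fin n) F[X],
      (∀ i j : Fin n, (j : ℕ) < (i : ℕ) → M' i j = 0) ∧
      (∀ i j : Fin l, i ≠ j →
        M' (Fin.castLE hln i) (Fin.castLE hln j) = 0) ∧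
      (Matrix.det (fun i j : Fin l => M (Fin.castLE hln i) (Fin.castLE hln j))).degree ≤
        (Matrix.det (fun i j : Fin l => M' (Fin.castLE hln i) (Fin.castLE hln j))).degree ∧
      (M'.det).degree = M.det.degree ∧
      ∀ k : ℕ,
        {g : GL (Fin n) F[X] |
            ∀ i j, (((g : Matrix (Fin n) (Fin n) F[X]) * M) i j).degree ≤ (k : ℕ)}.ncard =
        {g : GL (Fin n) F[X] |
            ∀ i j, (((g : Matrix (Fin n) (Fin n) F[X]) * M') i j).degree ≤ (k : ℕ)}.ncard := by
  obtain ⟨U₀, d₀, hU₀, hd₀, hL₀⟩ := aux_reduce M hdet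
  obtain ⟨f, hf, hfd⟩ := aux_minor U₀ hU₀.ne_zero l hln
  obtain ⟨σ, hσ⟩ := Equiv.Perm.exists_extending_pair (Fin.castLE hln) f
    (Fin.castLE_injective hln) hf
  obtain ⟨U, hUdef⟩ : ∃ U, U = U₀.submatrix σ id := ⟨_, rfl⟩
  obtain ⟨d, hddef⟩ : ∃ d, d = d₀ ∘ σ := ⟨_, rfl⟩
  have hUM : ∀ i j, (U * M) i j = (U₀ * M) (σ i) j := by
    intro i j; subst hUdef; rfl
  have hU : IsUnit U.det := by
    rw [hUdef, Matrix.det_permute]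
    refine IsUnit.mul ?_ hU₀
    exact_mod_cast ((Equiv.Perm.sign σ).isUnit.map (Int.castRingHom F[X]))
  have hd : ∀ i j, ((U * M) i j).natDegree ≤ d i := by
    intro i j; rw [hUM, hddef]; exact hd₀ _ _
  have hL : (Matrix.of fun i j => ((U * M) i j).coeff (d i)).det ≠ 0 := by
    have : (Matrix.of fun i j => ((U * M) i j).coeff (d i)) =
        (Matrix.of fun i j => ((U₀ * M) i j).coeff (d₀ i)).submatrix σ id := by
      ext i j
      simp [hUM, hddef]
    rw [this, Matrix.det_permute]
    refine mul_ne_zero ?_ hL₀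
    exact (((Equiv.Perm.sign σ).isUnit.map (Int.castRingHom F))).ne_zero
  have hminor : (U.submatrix (Fin.castLE hln) (Fin.castLE hln)).det ≠ 0 := by
    convert hfd using 2
    ext1 i j
    have : σ (Fin.castLE hln i) = f i := by simpa using hσ i
    simp [hUdef, this]
  have hdegM : M.det.degree = ((∑ i, d i : ℕ) : WithBot ℕ) := by
    obtain ⟨h1, h2⟩ := aux_det _ d hd
    have h3 : (U * M).det.degree = ((∑ i, d i : ℕ) : WithBot ℕ) := by
      refine le_antisymm (degree_le_of_natDegree_le h1) (le_degree_of_ne_zero ?_)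
      rw [h2]; exact hL
    rw [← h3, Matrix.det_mul, degree_mul, degree_eq_zero_of_isUnit hU, zero_add]
  refine ⟨Matrix.diagonal fun i => X ^ d i, ?_, ?_, ?_, ?_, ?_⟩
  · intro i j hij
    exact Matrix.diagonal_apply_ne _ (by rintro rfl; exact lt_irrefl _ hij)
  · intro i j hij
    exact Matrix.diagonal_apply_ne _ (fun h => hij (Fin.castLE_injective hln h))
  · have e1 : (fun i j : Fin l => (Matrix.diagonal fun i : Fin n => (X : F[X]) ^ d i)
        (Fin.castLE hln i) (Fin.castLE hln j)) =
        Matrix.diagonal fun i : Fin l => (X : F[X]) ^ d (Fin.castLE hln i) := by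
      funext i j
      by_cases h : i = j
      · subst h; simp
      · rw [Matrix.diagonal_apply_ne _ h,
          Matrix.diagonal_apply_ne _ (fun hsub => h (Fin.castLE_injective hln hsub))]
    have e2 : ((U * M).submatrix (Fin.castLE hln) (Fin.castLE hln)) =
        U.submatrix (Fin.castLE hln) (Fin.castLE hln) *
          (M.submatrix (Fin.castLE hln) (Fin.castLE hln)) := by
      ext1 i j
      simp only [Matrix.submatrix_apply, Matrix.mul_apply]
      symm
      refine Finset.sum_of_injOn (Fin.castLE hln) (Fin.castLE_injective hln).injOn
        (fun _ _ => Finset.mem_coe.mpr (Finset.mem_univ _)) ?_ (fun _ _ => rfl)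
      intro a _ ha
      rw [hMtri a (Fin.castLE hln j), mul_zero]
      by_contra hlt
      apply ha
      have hal : (a : ℕ) < l := by
        have h1 := j.isLt
        simp only [Fin.val_castLE] at hlt
        omega
      exact ⟨⟨a, hal⟩, by simp, by ext; simp⟩
    rw [e1, Matrix.det_diagonal, Finset.prod_pow_eq_pow_sum, degree_X_pow]
    obtain ⟨h1, -⟩ := aux_det ((U * M).submatrix (Fin.castLE hln) (Fin.castLE hln))
      (fun i => d (Fin.castLE hln i)) (fun i j => hd _ _)
    rw [e2, Matrix.det_mul] at h1
    have h2 := degree_le_of_natDegree_le h1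
    refine le_trans ?_ h2
    rw [mul_comm]
    exact degree_le_mul_left _ hminor
  · rw [Matrix.det_diagonal, Finset.prod_pow_eq_pow_sum, degree_X_pow, hdegM]
  · intro k
    obtain ⟨u, hu⟩ : ∃ u : GL (Fin n) F[X], (u : Matrix (Fin n) (Fin n) F[X]) = U :=
      ⟨Matrix.GeneralLinearGroup.mk'' U hU, rfl⟩
    have hdiag : ∀ i j, ((Matrix.diagonal fun i : Fin n => (X : F[X]) ^ d i) i j).natDegree
        ≤ d i := by
      intro i j
      by_cases h : i = j
      · subst h; simp
      · simp [Matrix.diagonal_apply_ne _ h]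
    have hdiagL : (Matrix.of fun i j =>
        ((Matrix.diagonal fun i : Fin n => (X : F[X]) ^ d i) i j).coeff (d i)).det ≠ 0 := by
      have : (Matrix.of fun i j =>
        ((Matrix.diagonal fun i : Fin n => (X : F[X]) ^ d i) i j).coeff (d i)) = 1 := by
        ext i j
        by_cases h : i = j
        · subst h; simp
        · simp [h]
      rw [this]; simp
    have key : ∀ g : Matrix (Fin n) (Fin n) F[X],
        (∀ i j, ((g * (U * M)) i j).degree ≤ (k : ℕ)) ↔
        (∀ i j, ((g * (Matrix.diagonal fun i : Fin n => (X : F[X]) ^ d i)) i j).degree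
          ≤ (k : ℕ)) := by
      intro g
      refine forall_congr' fun i => ?_
      exact (aux_predict _ d hd hL (g i) k).trans (aux_predict _ d hdiag hdiagL (g i) k).symm
    refine (Set.ncard_congr (fun g _ => g * u) ?_ ?_ ?_).symm
    · intro g hg
      have := (key g).mpr hg
      rw [← hu, ← Matrix.mul_assoc] at this
      simpa using this
    · intro a b _ _ h
      exact mul_right_cancel h
    · intro b hb
      refine ⟨b * u⁻¹, ?_, by simp⟩
      refine (key _).mp ?_
      rw [← hu, ← Matrix.mul_assoc, ← Units.val_mul, inv_mul_cancel_right]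
      exact hb
end

section
/- Let F be a finite field with q elements and let k_1, …, k_n be natural numbers. Then the number of matrices A = (a_{i,j}) ∈ GL_n(F[x]) such that deg(a_{i,j}) ≤ k_j for all 1 ≤ i, j ≤ n and whose constant-term matrix A(0) equals the identity matrix I_n is exactly q^{(n-1)(k_1 + k_2 + ⋯ + k_n)}. -/
open Polynomial Matrix

namespace NilCount

variable {F V : Type*} [Field F] [AddCommGroup V] [Module F V]

/-- The largest `T`-invariant subspace inside `K`. -/
def unobs (T : V →ₗ[F] V) (K : Submodule F V) : Submodule F V where
  carrier := {z | ∀ i : ℕ, (T ^ i) z ∈ K}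
  add_mem' := by
    intro a b ha hb i
    rw [map_add]
    exact K.add_mem (ha i) (hb i)
  zero_mem' := by intro i; simp
  smul_mem' := by
    intro c x hx i
    rw [map_smul]
    exact K.smul_mem c (hx i)

theorem mem_unobs {T : V →ₗ[F] V} {K : Submodule F V} {z : V} :
    z ∈ unobs T K ↔ ∀ i : ℕ, (T ^ i) z ∈ K := Iff.rfl

theorem unobs_le (T : V →ₗ[F] V) (K : Submodule F V) : unobs T K ≤ K := by
  intro z hz
  simpa using hz 0

theorem unobs_inv {T : V →ₗ[F] V} {K : Submodule F V} {z : V} (hz : z ∈ unobs T K) :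
    T z ∈ unobs T K := by
  intro i
  have := hz (i + 1)
  rwa [pow_succ, Module.End.mul_apply] at this

theorem pow_mem_of_inv {T : V →ₗ[F] V} {P : Submodule F V} (hP : ∀ z ∈ P, T z ∈ P) (i : ℕ) :
    ∀ z ∈ P, (T ^ i) z ∈ P := by
  induction i with
  | zero => intro z hz; simpa using hz
  | succ i ih =>
    intro z hz
    rw [pow_succ, Module.End.mul_apply]
    exact ih _ (hP z hz)

theorem le_unobs {T : V →ₗ[F] V} {K P : Submodule F V} (hPK : P ≤ K)
    (hP : ∀ z ∈ P, T z ∈ P) : P ≤ unobs T K := fun z hz i => hPK (pow_mem_of_inv hP i z hz)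

def NilOn (T : V →ₗ[F] V) (P : Submodule F V) : Prop := ∀ z ∈ P, ∃ N : ℕ, (T ^ N) z = 0

/-- rank one perturbation -/
def pert (T : V →ₗ[F] V) (φ : V →ₗ[F] F) (y : V) : V →ₗ[F] V := T + φ.smulRight y

theorem pert_apply (T : V →ₗ[F] V) (φ : V →ₗ[F] F) (y z : V) :
    pert T φ y z = T z + φ z • y := by simp [pert]

theorem pert_pert (T : V →ₗ[F] V) (φ : V →ₗ[F] F) (y y' : V) :
    pert (pert T φ y) φ y' = pert T φ (y + y') := by
  ext z
  simp [pert_apply, add_assoc]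

theorem pert_zero (T : V →ₗ[F] V) (φ : V →ₗ[F] F) : pert T φ 0 = T := by
  ext z
  simp [pert_apply]

theorem unobs_pert_ker_le (T : V →ₗ[F] V) (φ : V →ₗ[F] F) (y : V) (K : Submodule F V) :
    unobs T (K ⊓ LinearMap.ker φ) ≤ unobs (pert T φ y) (K ⊓ LinearMap.ker φ) := by
  apply le_unobs (unobs_le _ _)
  intro z hz
  have h : φ z = 0 := (unobs_le _ _ hz).2
  rw [pert_apply, h, zero_smul, add_zero]
  exact unobs_inv hz

theorem unobs_pert_ker (T : V →ₗ[F] V) (φ : V →ₗ[F] F) (y : V) (K : Submodule F V) :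
    unobs (pert T φ y) (K ⊓ LinearMap.ker φ) = unobs T (K ⊓ LinearMap.ker φ) := by
  apply le_antisymm _ (unobs_pert_ker_le T φ y K)
  have := unobs_pert_ker_le (pert T φ y) φ (-y) K
  rwa [pert_pert, add_neg_cancel, pert_zero] at this

theorem unobs_mono (T : V →ₗ[F] V) {K L : Submodule F V} (h : K ≤ L) :
    unobs T K ≤ unobs T L := fun _ hz i => h (hz i)

theorem pow_eq_of_eqOn {T T' : V →ₗ[F] V} {P : Submodule F V} (hP : ∀ z ∈ P, T z ∈ P)
    (h : ∀ z ∈ P, T z = T' z) (i : ℕ) : ∀ z ∈ P, (T ^ i) z = (T' ^ i) z := by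
  induction i with
  | zero => intro z _; simp
  | succ i ih =>
    intro z hz
    rw [pow_succ, Module.End.mul_apply, pow_succ, Module.End.mul_apply, ih _ (hP z hz), h z hz]

theorem nilOn_congr {T T' : V →ₗ[F] V} {P : Submodule F V} (hP : ∀ z ∈ P, T z ∈ P)
    (h : ∀ z ∈ P, T z = T' z) (hn : NilOn T P) : NilOn T' P := by
  intro z hz
  obtain ⟨N, hN⟩ := hn z hz
  exact ⟨N, by rw [← pow_eq_of_eqOn hP h N z hz, hN]⟩

theorem nilOn_pert_ker {T : V →ₗ[F] V} {φ : V →ₗ[F] F} (y : V) {K : Submodule F V}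
    (hn : NilOn T (unobs T (K ⊓ LinearMap.ker φ))) :
    NilOn (pert T φ y) (unobs T (K ⊓ LinearMap.ker φ)) := by
  refine nilOn_congr (fun z hz => unobs_inv hz) ?_ hn
  intro z hz
  have h : φ z = 0 := (unobs_le _ _ hz).2
  rw [pert_apply, h, zero_smul, add_zero]

/-- Translating by an element of the invariant subspace does not change it. -/
theorem unobs_pert_le (T : V →ₗ[F] V) (φ : V →ₗ[F] F) (K : Submodule F V) (y : V)
    (hy : y ∈ unobs T K) : unobs T K ≤ unobs (pert T φ y) K := by
  apply le_unobs (unobs_le _ _)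
  intro z hz
  rw [pert_apply]
  exact Submodule.add_mem _ (unobs_inv hz) (Submodule.smul_mem _ _ hy)

theorem unobs_pert (T : V →ₗ[F] V) (φ : V →ₗ[F] F) (K : Submodule F V) (y : V)
    (hy : y ∈ unobs T K) : unobs (pert T φ y) K = unobs T K := by
  apply le_antisymm _ (unobs_pert_le T φ K y hy)
  have := unobs_pert_le (pert T φ y) φ K (-y)
    (Submodule.neg_mem _ (unobs_pert_le T φ K y hy hy))
  rwa [pert_pert, add_neg_cancel, pert_zero] at this

/-- If `T'` and `T` agree modulo an invariant subspace `I`, so do their powers. -/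
theorem pow_sub_mem {T T' : V →ₗ[F] V} {I : Submodule F V} (hI : ∀ z ∈ I, T' z ∈ I)
    (h : ∀ z, T' z - T z ∈ I) (i : ℕ) (z : V) : (T' ^ i) z - (T ^ i) z ∈ I := by
  induction i with
  | zero => simp
  | succ i ih =>
    rw [pow_succ', Module.End.mul_apply, pow_succ', Module.End.mul_apply]
    have h1 := hI _ ih
    have h2 := h ((T ^ i) z)
    have := I.add_mem h1 h2
    rw [map_sub] at this
    simpa using this

theorem nilOn_pert_add {T : V →ₗ[F] V} {φ : V →ₗ[F] F} {K : Submodule F V}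
    {P : Submodule F V} {u : V}
    (hn : NilOn T (unobs T (K ⊓ LinearMap.ker φ)))
    (hu : u ∈ unobs T (K ⊓ LinearMap.ker φ)) (hP : NilOn T P) : NilOn (pert T φ u) P := by
  intro z hz
  obtain ⟨N, hN⟩ := hP z hz
  have h1 : (pert T φ u ^ N) z - (T ^ N) z ∈ unobs T (K ⊓ LinearMap.ker φ) := by
    apply pow_sub_mem
    · intro z hz
      rw [pert_apply]
      exact Submodule.add_mem _ (unobs_inv hz) (Submodule.smul_mem _ _ hu)
    · intro z
      rw [pert_apply, add_sub_cancel_left]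
      exact Submodule.smul_mem _ _ hu
  rw [hN, sub_zero] at h1
  obtain ⟨M, hM⟩ := nilOn_pert_ker u hn _ h1
  exact ⟨M + N, by rw [pow_add, Module.End.mul_apply, hM]⟩

theorem pert_pow_succ (T : V →ₗ[F] V) (φ : V →ₗ[F] F) (p : V) (z : V) (k : ℕ) :
    (pert T φ p ^ (k + 1)) z = (T ^ (k + 1)) z +
      ∑ x ∈ Finset.HasAntidiagonal.antidiagonal k, φ ((T ^ x.2) z) • (pert T φ p ^ x.1) p := by
  induction k with
  | zero => simp [pert_apply]
  | succ k ih =>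
    rw [pow_succ', Module.End.mul_apply, ih, map_add, map_sum, pert_apply,
      Finset.Nat.antidiagonal_succ, Finset.sum_cons, Finset.sum_map]
    rw [add_assoc, ← Module.End.mul_apply, ← pow_succ']
    congr 1
    simp [pow_succ']

theorem unique_aux (T : V →ₗ[F] V) (φ : V →ₗ[F] F) (P : Submodule F V) (p : V) (hp : p ∈ P)
    (h1 : NilOn T P) (h2 : NilOn (pert T φ p) P) (i : ℕ) : φ ((T ^ i) p) = 0 := by
  obtain ⟨a, ha⟩ := h1 p hp
  obtain ⟨b, hb⟩ := h2 p hp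
  have key : ∀ (S : V →ₗ[F] V) (N : ℕ), (S ^ N) p = 0 →
      ∃ f : F[X], ∀ i, f.coeff i = φ ((S ^ i) p) := by
    intro S N hN
    refine ⟨∑ i ∈ Finset.range N, monomial i (φ ((S ^ i) p)), fun i => ?_⟩
    simp only [finsetSum_coeff, coeff_monomial, Finset.sum_ite_eq', Finset.mem_range]
    split_ifs with h
    · rfl
    · obtain ⟨c, rfl⟩ := Nat.exists_eq_add_of_le (not_lt.mp h)
      rw [add_comm, pow_add, Module.End.mul_apply, hN, map_zero, map_zero]
  obtain ⟨f, hf⟩ := key T a ha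
  obtain ⟨g, hg⟩ := key (pert T φ p) b hb
  have e : g = f + X * (g * f) := by
    ext i
    cases i with
    | zero => simp [hf, hg]
    | succ k =>
      rw [coeff_add, coeff_X_mul, coeff_mul, hg, pert_pow_succ, map_add, hf, map_sum]
      congr 1
      apply Finset.sum_congr rfl
      intro x _
      rw [hg, hf, map_smul, smul_eq_mul, mul_comm]
  have e2 : (1 - X * f) * (1 + X * g) = 1 := by
    linear_combination X * e
  have e3 : IsUnit (1 - X * f) := IsUnit.of_mul_eq_one _ e2
  have e4 := Polynomial.natDegree_eq_zero_of_isUnit e3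
  rw [← hf]
  have e5 : (1 - X * f).coeff (i + 1) = 0 :=
    Polynomial.coeff_eq_zero_of_natDegree_lt (by omega)
  rw [coeff_sub, coeff_X_mul, coeff_one] at e5
  simpa using e5

/-- Existence of a nilpotent rank one perturbation. -/
theorem exists_nil [FiniteDimensional F V] (T : V →ₗ[F] V) (φ : V →ₗ[F] F) (K : Submodule F V)
    (hn : NilOn T (unobs T (K ⊓ LinearMap.ker φ))) :
    ∃ p ∈ unobs T K, NilOn (pert T φ p) (unobs T K) := by
  set P := unobs T K with hPdef
  have hPinv : ∀ p ∈ P, ∀ z ∈ P, pert T φ p z ∈ P := by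
    intro p hp z hz
    rw [pert_apply]
    exact P.add_mem (unobs_inv hz) (P.smul_mem _ hp)
  have key : ∀ r : ℕ, ∀ p ∈ P, ∀ m : ℕ,
      Module.finrank F (P.map (pert T φ p ^ m)) ≤ r →
      ∃ p ∈ P, NilOn (pert T φ p) P := by
    intro r
    induction r with
    | zero =>
      intro p hp m hm
      have : P.map (pert T φ p ^ m) = ⊥ := Submodule.finrank_eq_zero.mp (by omega)
      refine ⟨p, hp, fun z hz => ⟨m, ?_⟩⟩
      have h2 := Submodule.mem_map_of_mem (f := pert T φ p ^ m) hz
      rw [this] at h2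
      simpa using h2
    | succ r ih =>
      intro p hp m hm
      set S := pert T φ p with hS
      set I := P.map (S ^ m) with hI
      have hIP : I ≤ P := by
        rintro _ ⟨z, hz, rfl⟩
        exact pow_mem_of_inv (hPinv p hp) m z hz
      have hSI : P.map (S ^ (m + 1)) = I.map S := by
        rw [hI, ← Submodule.map_comp, pow_succ']
        rfl
      have hSI' : I.map S = P.map (S ^ (m + 1)) := hSI.symm
      have hle : I.map S ≤ I := by
        rw [hSI', hI]
        rintro _ ⟨z, hz, rfl⟩
        refine ⟨S z, hPinv p hp z hz, ?_⟩
        rw [pow_succ, Module.End.mul_apply]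
      by_cases hlt : I.map S = I
      swap
      · apply ih p hp (m + 1)
        have := Submodule.finrank_lt_finrank_of_lt (lt_of_le_of_ne hle hlt)
        rw [hSI]
        omega
      by_cases hφ : ∃ v ∈ I, φ v ≠ 0
      · obtain ⟨v, hv, hφv⟩ := hφ
        have hSv : S v ∈ I := hle (Submodule.mem_map_of_mem hv)
        set w := (-(φ v)⁻¹) • S v with hw
        have hwI : w ∈ I := I.smul_mem _ hSv
        have hS' : pert S φ w = pert T φ (p + w) := pert_pert _ _ _ _
        have hinv : ∀ z ∈ I, pert S φ w z ∈ I := by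
          intro z hz
          rw [pert_apply]
          exact I.add_mem (hle (Submodule.mem_map_of_mem hz)) (I.smul_mem _ hwI)
        have hv0 : pert S φ w v = 0 := by
          rw [pert_apply, hw, smul_smul, mul_neg, mul_inv_cancel₀ hφv]
          simp
        apply ih (p + w) (P.add_mem hp (hIP hwI)) (m + 1)
        rw [← hS']
        have hsub : P.map (pert S φ w ^ (m + 1)) ≤ I.map (pert S φ w) := by
          rintro _ ⟨z, hz, rfl⟩
          refine ⟨(pert S φ w ^ m) z, ?_, ?_⟩
          · have h1 := pow_sub_mem (T := S) hinv (fun z => by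
              rw [pert_apply, add_sub_cancel_left]; exact I.smul_mem _ hwI) m z
            have h2 : (S ^ m) z ∈ I := Submodule.mem_map_of_mem hz
            simpa using I.add_mem h1 h2
          · rw [pow_succ', Module.End.mul_apply]
        have hlt2 : Module.finrank F (I.map (pert S φ w)) < Module.finrank F I := by
          have hrn := LinearMap.finrank_range_add_finrank_ker ((pert S φ w).domRestrict I)
          rw [LinearMap.range_domRestrict] at hrn
          have : 0 < Module.finrank F (LinearMap.ker ((pert S φ w).domRestrict I)) := by
            apply Nat.pos_of_ne_zero
            intro h0
            have h1 := Submodule.finrank_eq_zero.mp h0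
            have h2 : (⟨v, hv⟩ : I) ∈ LinearMap.ker ((pert S φ w).domRestrict I) := by
              simpa using hv0
            rw [h1, Submodule.mem_bot] at h2
            have h3 : v = 0 := congrArg Subtype.val h2
            exact hφv (by rw [h3, map_zero])
          omega
        have := Submodule.finrank_mono hsub
        omega
      · push Not at hφ
        have hIU : I ≤ unobs T (K ⊓ LinearMap.ker φ) := by
          rw [← unobs_pert_ker T φ p K]
          apply le_unobs
          · intro z hz
            exact ⟨unobs_le _ _ (hIP hz), hφ z hz⟩
          · intro z hz
            exact hle (Submodule.mem_map_of_mem hz)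
        refine ⟨p, hp, fun z hz => ?_⟩
        obtain ⟨N, hN⟩ := nilOn_pert_ker p hn ((S ^ m) z)
          (hIU (Submodule.mem_map_of_mem hz))
        exact ⟨N + m, by rw [pow_add, Module.End.mul_apply]; exact hN⟩
  exact key _ 0 P.zero_mem 0 le_rfl

theorem card_nil [FiniteDimensional F V] (T : V →ₗ[F] V) (φ : V →ₗ[F] F) (K : Submodule F V)
    (hn : NilOn T (unobs T (K ⊓ LinearMap.ker φ))) :
    Nat.card {p : V // p ∈ unobs T K ∧ NilOn (pert T φ p) (unobs T K)}
      = Nat.card (unobs T (K ⊓ LinearMap.ker φ)) := by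
  obtain ⟨p₀, hp₀, h₀⟩ := exists_nil T φ K hn
  have hle : unobs T (K ⊓ LinearMap.ker φ) ≤ unobs T K := unobs_mono T inf_le_left
  refine Nat.card_congr ((Equiv.subRight p₀).subtypeEquiv ?_)
  intro p
  rw [Equiv.subRight_apply]
  constructor
  · rintro ⟨hp, h⟩
    have hd := Submodule.sub_mem _ hp hp₀
    have h' : NilOn (pert (pert T φ p₀) φ (p - p₀)) (unobs T K) := by
      rw [pert_pert, add_sub_cancel]; exact h
    have hu := unique_aux (pert T φ p₀) φ _ (p - p₀) hd h₀ h'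
    rw [← unobs_pert_ker T φ p₀ K]
    intro i
    refine ⟨?_, hu i⟩
    have : p - p₀ ∈ unobs (pert T φ p₀) K := by rw [unobs_pert T φ K p₀ hp₀]; exact hd
    exact this i
  · intro h
    have hp : p ∈ unobs T K := by
      have := Submodule.add_mem _ (hle h) hp₀
      simpa using this
    refine ⟨hp, ?_⟩
    have := nilOn_pert_add (T := pert T φ p₀) (φ := φ) (K := K) (P := unobs T K) (u := p - p₀)
      (by rw [unobs_pert_ker]; exact nilOn_pert_ker _ hn) (by rw [unobs_pert_ker]; exact h) h₀
    rwa [pert_pert, add_sub_cancel] at this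

open Classical in
noncomputable def wt (T : V →ₗ[F] V) (K : Submodule F V) : ℕ :=
  if NilOn T (unobs T K) then Nat.card (unobs T K) else 0

open Classical in
theorem sum_wt [FiniteDimensional F V] [Fintype V] (T : V →ₗ[F] V) (φ : V →ₗ[F] F)
    (K : Submodule F V) :
    ∑ y : V, wt (pert T φ y) K = Fintype.card V * wt T (K ⊓ LinearMap.ker φ) := by
  by_cases hn : NilOn T (unobs T (K ⊓ LinearMap.ker φ))
  · have e1 : ∀ y : V, wt (pert T φ y) K = ∑ y' : V,
        if y' - y ∈ unobs (pert T φ y) K ∧ NilOn (pert T φ y) (unobs (pert T φ y) K)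
          then 1 else 0 := by
      intro y
      unfold wt
      split_ifs with h
      · simp only [h, and_true]
        rw [← Finset.card_filter, ← Fintype.card_subtype, ← Nat.card_eq_fintype_card]
        exact (Nat.card_congr ((Equiv.subRight y).subtypeEquiv (fun _ => Iff.rfl))).symm
      · simp [h]
    simp_rw [e1]
    rw [Finset.sum_comm]
    have e2 : ∀ y' : V, (∑ y : V,
        if y' - y ∈ unobs (pert T φ y) K ∧ NilOn (pert T φ y) (unobs (pert T φ y) K)
          then 1 else 0) = wt T (K ⊓ LinearMap.ker φ) := by
      intro y'
      have hn' : NilOn (pert T φ y') (unobs (pert T φ y') (K ⊓ LinearMap.ker φ)) := by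
        rw [unobs_pert_ker]; exact nilOn_pert_ker _ hn
      have := card_nil (pert T φ y') φ K hn'
      rw [unobs_pert_ker] at this
      rw [wt, if_pos hn, ← this, ← Finset.card_filter, ← Fintype.card_subtype,
        ← Nat.card_eq_fintype_card]
      refine Nat.card_congr ((Equiv.subRight y').subtypeEquiv ?_)
      intro y
      rw [Equiv.subRight_apply, pert_pert, add_sub_cancel]
      constructor
      · rintro ⟨h1, h2⟩
        have h3 := unobs_pert (pert T φ y) φ K _ h1
        rw [pert_pert, add_sub_cancel] at h3
        rw [h3]
        refine ⟨?_, h2⟩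
        rw [← neg_sub]
        exact Submodule.neg_mem _ h1
      · rintro ⟨h1, h2⟩
        have h3 := unobs_pert (pert T φ y') φ K _ h1
        rw [pert_pert, add_sub_cancel] at h3
        rw [h3]
        refine ⟨?_, h2⟩
        rw [← neg_sub]
        exact Submodule.neg_mem _ h1
    simp_rw [e2]
    simp
  · have h2 : wt T (K ⊓ LinearMap.ker φ) = 0 := by rw [wt, if_neg hn]
    rw [h2, mul_zero]
    apply Finset.sum_eq_zero
    intro y _
    rw [wt, if_neg]
    intro h
    apply hn
    have h3 : NilOn (pert T φ y) (unobs (pert T φ y) (K ⊓ LinearMap.ker φ)) :=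
      fun z hz => h z (unobs_mono _ inf_le_left hz)
    have h4 := nilOn_pert_ker (-y) h3
    rwa [pert_pert, add_neg_cancel, pert_zero, unobs_pert_ker] at h4

theorem sum_wt_fin [FiniteDimensional F V] [Fintype V] (n : ℕ) (T : V →ₗ[F] V)
    (φ : Fin n → (V →ₗ[F] F)) (K : Submodule F V) :
    ∑ y : Fin n → V, wt (T + ∑ l, (φ l).smulRight (y l)) K
      = Fintype.card V ^ n * wt T (K ⊓ ⨅ l, LinearMap.ker (φ l)) := by
  induction n generalizing T K with
  | zero => simp
  | succ n ih =>
    rw [← (Fin.consEquiv (fun _ : Fin (n + 1) => V)).sum_comp, Fintype.sum_prod_type_right]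
    have e : ∀ (y : Fin n → V) (v : V),
        T + ∑ l, (φ l).smulRight ((Fin.consEquiv (fun _ : Fin (n + 1) => V)) (v, y) l)
          = pert (T + ∑ l : Fin n, (φ l.succ).smulRight (y l)) (φ 0) v := by
      intro y v
      rw [Fin.sum_univ_succ, pert]
      simp only [Fin.consEquiv_apply, Fin.cons_zero, Fin.cons_succ]
      abel
    simp_rw [e, sum_wt]
    rw [← Finset.mul_sum, ih, ← mul_assoc, ← pow_succ']
    congr 2
    rw [inf_assoc]
    congr 1
    ext z
    simp only [Submodule.mem_inf, Submodule.mem_iInf, Fin.forall_fin_succ]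

open Classical in
theorem card_nilpotent [FiniteDimensional F V] [Fintype V] (n : ℕ) (T : V →ₗ[F] V)
    (φ : Fin n → (V →ₗ[F] F)) (h : ∀ z, (∀ l i, φ l ((T ^ i) z) = 0) → z = 0) :
    Nat.card {y : Fin n → V // IsNilpotent (T + ∑ l, (φ l).smulRight (y l))} * Fintype.card V
      = Fintype.card V ^ n := by
  have h1 := sum_wt_fin n T φ ⊤
  have h2 : unobs T (⊤ ⊓ ⨅ l, LinearMap.ker (φ l)) = ⊥ := by
    rw [eq_bot_iff]
    intro z hz
    refine h z (fun l i => ?_)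
    have := (hz i).2
    simp only [SetLike.mem_coe, Submodule.mem_iInf, LinearMap.mem_ker] at this
    exact this l
  have h3 : wt T (⊤ ⊓ ⨅ l, LinearMap.ker (φ l)) = 1 := by
    rw [wt, h2, if_pos]
    · simp
    · intro z hz
      exact ⟨0, by simpa using hz⟩
  have h4 : ∀ S : V →ₗ[F] V, wt S ⊤ = if IsNilpotent S then Fintype.card V else 0 := by
    intro S
    have e : unobs S ⊤ = ⊤ := by
      rw [eq_top_iff]
      intro z _ i
      trivial
    rw [wt, e]
    have : NilOn S ⊤ ↔ IsNilpotent S := by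
      constructor
      · intro hS
        choose N hN using fun z => hS z trivial
        refine ⟨∑ z, N z, ?_⟩
        ext z
        rw [← Finset.sum_erase_add _ _ (Finset.mem_univ z), pow_add, Module.End.mul_apply, hN]
        simp
      · rintro ⟨N, hN⟩ z _
        exact ⟨N, by rw [hN]; rfl⟩
    simp [this, Nat.card_eq_fintype_card]
  simp_rw [h4] at h1
  rw [h3, mul_one, ← Finset.sum_filter, Finset.sum_const, smul_eq_mul] at h1
  rw [← h1, Nat.card_eq_fintype_card, Fintype.card_subtype]

end NilCount

namespace NilCount

section companion

variable {F : Type*} [Field F] {n : ℕ} (k : Fin n → ℕ)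

/-- index set of the state space -/
abbrev Idx := (Σ j : Fin n, Fin (k j))

def shiftM (F : Type*) [Field F] : Matrix (Idx k) (Idx k) F :=
  Matrix.of fun s t => if s.1 = t.1 ∧ s.2.val = t.2.val + 1 then 1 else 0

def outM (F : Type*) [Field F] : Matrix (Fin n) (Idx k) F :=
  Matrix.of fun j t => if t.1 = j ∧ t.2.val + 1 = k t.1 then 1 else 0

noncomputable def resM (F : Type*) [Field F] : Matrix (Fin n) (Idx k) F[X] :=
  Matrix.of fun j t => if t.1 = j then X ^ (k t.1 - 1 - t.2.val) else 0

theorem resM_mul : resM k F * (1 - (X : F[X]) • (shiftM k F).map C) = (outM k F).map C := by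
  rw [Matrix.mul_sub, Matrix.mul_one, Matrix.mul_smul]
  ext1 j t
  obtain ⟨t1, t2⟩ := t
  rw [Matrix.sub_apply, Matrix.smul_apply, Matrix.mul_apply]
  by_cases h : t2.val + 1 < k t1
  · rw [Finset.sum_eq_single (⟨t1, ⟨t2.val + 1, h⟩⟩ : Idx k)]
    · have e : k t1 - 1 - t2.val = (k t1 - 1 - (t2.val + 1)) + 1 := by omega
      by_cases hj : t1 = j
      · simp [resM, shiftM, outM, hj]
        subst hj
        rw [if_neg (by omega), e, pow_succ', sub_self]
      · simp [resM, shiftM, outM, hj]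
    · rintro ⟨s1, s2⟩ _ hs
      have : ¬ (s1 = t1 ∧ s2.val = t2.val + 1) := by
        rintro ⟨rfl, h2⟩
        apply hs
        congr 1
        exact Fin.ext h2
      simp [shiftM, this]
    · simp
  · rw [Finset.sum_eq_zero]
    · have h2 : t2.val + 1 = k t1 := by have := t2.2; omega
      have h3 : k t1 - 1 - t2.val = 0 := by omega
      simp only [resM, outM, Matrix.of_apply, Matrix.map_apply, h2, h3]
      by_cases hj : t1 = j <;> simp [hj]
    · rintro ⟨s1, s2⟩ _
      have : ¬ (s1 = t1 ∧ s2.val = t2.val + 1) := by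
        rintro ⟨rfl, h2⟩
        have := s2.2
        omega
      simp [shiftM, this]

theorem shiftM_apply (z : Idx k → F) (j : Fin n) (i : Fin (k j)) :
    Matrix.toLin' (shiftM k F) z ⟨j, i⟩ =
      if 1 ≤ i.val then z ⟨j, ⟨i.val - 1, by omega⟩⟩ else 0 := by
  rw [Matrix.toLin'_apply, Matrix.mulVec, dotProduct]
  split_ifs with h
  · rw [Finset.sum_eq_single (⟨j, ⟨i.val - 1, by omega⟩⟩ : Idx k)]
    · have : i.val = i.val - 1 + 1 := by omega
      simp [shiftM, ← this]
    · rintro ⟨s1, s2⟩ _ hs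
      have : ¬ (j = s1 ∧ i.val = s2.val + 1) := by
        rintro ⟨rfl, h2⟩
        apply hs
        congr 1
        apply Fin.ext
        simp [h2]
      simp [shiftM, this]
    · simp
  · apply Finset.sum_eq_zero
    rintro ⟨s1, s2⟩ _
    have : ¬ (j = s1 ∧ i.val = s2.val + 1) := by
      rintro ⟨rfl, h2⟩
      omega
    simp [shiftM, this]

theorem shiftM_pow_apply (m : ℕ) (z : Idx k → F) (j : Fin n) (i : Fin (k j)) :
    (Matrix.toLin' (shiftM k F) ^ m) z ⟨j, i⟩ =
      if m ≤ i.val then z ⟨j, ⟨i.val - m, by omega⟩⟩ else 0 := by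
  induction m generalizing i with
  | zero => simp
  | succ m ih =>
    rw [pow_succ', Module.End.mul_apply, shiftM_apply]
    by_cases h : 1 ≤ i.val
    · rw [if_pos h, ih]
      by_cases h2 : m + 1 ≤ i.val
      · rw [if_pos h2, if_pos (by simp; omega)]
        congr 3
        simp
        omega
      · rw [if_neg h2, if_neg (by simp; omega)]
    · rw [if_neg h, if_neg (by omega)]

noncomputable def outF (F : Type*) [Field F] (l : Fin n) : (Idx k → F) →ₗ[F] F :=
  LinearMap.proj l ∘ₗ Matrix.toLin' (outM k F)

theorem outF_apply (z : Idx k → F) (l : Fin n) (h : 0 < k l) :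
    outF k F l z = z ⟨l, ⟨k l - 1, by omega⟩⟩ := by
  rw [outF, LinearMap.comp_apply, LinearMap.proj_apply, Matrix.toLin'_apply, Matrix.mulVec,
    dotProduct, Finset.sum_eq_single (⟨l, ⟨k l - 1, by omega⟩⟩ : Idx k)]
  · have : k l - 1 + 1 = k l := by omega
    simp [outM, this]
  · rintro ⟨s1, s2⟩ _ hs
    have : ¬ (s1 = l ∧ s2.val + 1 = k s1) := by
      rintro ⟨rfl, h2⟩
      apply hs
      congr 1
      apply Fin.ext
      simp [← h2]
    simp [outM, this]
  · simp

theorem observable (z : Idx k → F)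
    (h : ∀ l i, outF k F l ((Matrix.toLin' (shiftM k F) ^ i) z) = 0) : z = 0 := by
  funext s
  obtain ⟨j, i⟩ := s
  have hi := i.2
  have := h j (k j - 1 - i.val)
  rw [outF_apply k _ j (by omega), shiftM_pow_apply, if_pos (by simp)] at this
  rw [Pi.zero_apply, ← this]
  congr 2
  apply Fin.ext
  simp
  omega

theorem isNilpotent_shiftM : IsNilpotent (shiftM k F) := by
  rw [← Matrix.isNilpotent_toLin'_iff]
  refine ⟨∑ j, k j, ?_⟩
  apply LinearMap.ext
  intro z
  funext s
  obtain ⟨j, i⟩ := s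
  rw [shiftM_pow_apply, if_neg]
  · rfl
  · have := Finset.single_le_sum (f := k) (fun _ _ => Nat.zero_le _) (Finset.mem_univ j)
    have := i.2
    omega

def colM (y : Fin n → Idx k → F) : Matrix (Idx k) (Fin n) F := Matrix.of fun s l => y l s

theorem toLin_eq (y : Fin n → Idx k → F) :
    Matrix.toLin' (shiftM k F) + ∑ l, (outF k F l).smulRight (y l)
      = Matrix.toLin' (shiftM k F + colM k y * outM k F) := by
  rw [map_add]
  congr 1
  apply LinearMap.ext
  intro z
  funext s
  rw [Matrix.toLin'_mul, LinearMap.comp_apply, Matrix.toLin'_apply, Matrix.mulVec, dotProduct]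
  simp [colM, outF, mul_comm]

theorem isNilpotent_iff_charpolyRev {ι : Type*} [Fintype ι] [DecidableEq ι] (M : Matrix ι ι F) :
    IsNilpotent M ↔ IsUnit M.charpolyRev := by
  refine ⟨Matrix.isUnit_charpolyRev_of_isNilpotent, fun h => ?_⟩
  rw [← Matrix.reverse_charpoly] at h
  have h1 := natDegree_eq_zero_of_isUnit h
  rw [reverse_natDegree] at h1
  have h2 : M.charpoly = X ^ M.charpoly.natDegree := by
    ext i
    rw [coeff_X_pow]
    split_ifs with hi
    · rw [hi]; exact M.charpoly_monic
    · rcases lt_or_gt_of_ne hi with h3 | h3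
      · exact coeff_eq_zero_of_lt_natTrailingDegree (by omega)
      · exact coeff_eq_zero_of_natDegree_lt h3
  refine ⟨M.charpoly.natDegree, ?_⟩
  have h3 := Matrix.aeval_self_charpoly M
  rw [h2] at h3
  simpa using h3

noncomputable def polyMat (y : Fin n → Idx k → F) : Matrix (Fin n) (Fin n) F[X] :=
  (1 - (X : F[X]) • (resM k F * (colM k y).map C))ᵀ

theorem isUnit_polyMat (y : Fin n → Idx k → F) :
    IsUnit (polyMat k y) ↔
      IsNilpotent (Matrix.toLin' (shiftM k F) + ∑ l, (outF k F l).smulRight (y l)) := by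
  rw [toLin_eq, Matrix.isNilpotent_toLin'_iff, isNilpotent_iff_charpolyRev,
    Matrix.isUnit_iff_isUnit_det, polyMat, Matrix.det_transpose, ← Matrix.smul_mul,
    Matrix.det_one_sub_mul_comm, Matrix.mul_smul]
  have e : (1 - (X : F[X]) • ((colM k y).map C * resM k F)) *
      (1 - (X : F[X]) • (shiftM k F).map C)
      = 1 - (X : F[X]) • (shiftM k F + colM k y * outM k F).map C := by
    rw [Matrix.sub_mul, Matrix.smul_mul, Matrix.mul_assoc, resM_mul, Matrix.one_mul,
      Matrix.map_add _ (by simp), Matrix.map_mul, smul_add, sub_sub]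
  have h := Matrix.isUnit_charpolyRev_of_isNilpotent (isNilpotent_shiftM (F := F) k)
  rw [Matrix.charpolyRev, ← e, Matrix.det_mul]
  rw [Matrix.charpolyRev] at h
  rw [IsUnit.mul_iff]
  exact ⟨fun h' => ⟨h', h⟩, fun h' => h'.1⟩

theorem coeff_polyMat (y : Fin n → Idx k → F) (l j : Fin n) (m : ℕ) :
    (polyMat k y l j).coeff m = if m = 0 then (if j = l then 1 else 0) else
      if h : 1 ≤ m ∧ m ≤ k j then - y l ⟨j, ⟨k j - m, by omega⟩⟩ else 0 := by
  rw [polyMat, Matrix.transpose_apply, Matrix.sub_apply, Matrix.smul_apply, Matrix.mul_apply,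
    smul_eq_mul, coeff_sub]
  cases m with
  | zero =>
    rw [if_pos rfl, mul_coeff_zero, Matrix.one_apply]
    split_ifs <;> simp
  | succ m =>
    rw [coeff_X_mul, if_neg (by omega), finsetSum_coeff]
    have e1 : ((1 : Matrix (Fin n) (Fin n) F[X]) j l).coeff (m + 1) = 0 := by
      rw [Matrix.one_apply]
      split_ifs <;> simp [coeff_one]
    rw [e1, zero_sub]
    split_ifs with h
    · rw [Finset.sum_eq_single (⟨j, ⟨k j - (m + 1), by omega⟩⟩ : Idx k)]
      · have : m = k j - 1 - (k j - (m + 1)) := by omega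
        simp [resM, colM, coeff_X_pow, ← this]
      · rintro ⟨s1, s2⟩ _ hs
        have : ¬ (s1 = j ∧ m = k s1 - 1 - s2.val) := by
          rintro ⟨rfl, h2⟩
          apply hs
          congr 1
          apply Fin.ext
          have := s2.2
          simp only
          omega
        by_cases h1 : s1 = j
        · have h2 : ¬ (m = k s1 - 1 - s2.val) := fun h2 => this ⟨h1, h2⟩
          simp only [resM, colM, Matrix.of_apply, Matrix.map_apply, if_pos h1, coeff_mul_C,
            coeff_X_pow, if_neg h2, zero_mul]
        · simp [resM, h1]
      · simp
    · rw [Finset.sum_eq_zero, neg_zero]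
      rintro ⟨s1, s2⟩ _
      by_cases h1 : s1 = j
      · have h2 : ¬ (m = k s1 - 1 - s2.val) := by
          subst h1
          have := s2.2
          omega
        simp only [resM, colM, Matrix.of_apply, Matrix.map_apply, if_pos h1, coeff_mul_C,
          coeff_X_pow, if_neg h2, zero_mul]
      · simp [resM, h1]

end companion

end NilCount

open NilCount in
/-- The number of `A ∈ GL_n(F[x])` with `deg a_{i,j} ≤ k_j` for all `i, j`
and constant-term matrix equal to the identity is exactly `q^((n-1)(k₁ + ⋯ + kₙ))`. -/
theorem stmt_3 (F : Type*) [Field F] [Fintype F] (q : ℕ) (hq : Fintype.card F = q)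
    (n : ℕ) (k : Fin n → ℕ) :
    {A : GL (Fin n) F[X] |
        (∀ i j, ((A : Matrix (Fin n) (Fin n) F[X]) i j).degree ≤ (k j : ℕ)) ∧
        (A : Matrix (Fin n) (Fin n) F[X]).map (fun p => p.coeff 0) = 1}.ncard
      = q ^ ((n - 1) * ∑ j, k j) := by
  classical
  set S := {A : GL (Fin n) F[X] |
        (∀ i j, ((A : Matrix (Fin n) (Fin n) F[X]) i j).degree ≤ (k j : ℕ)) ∧
        (A : Matrix (Fin n) (Fin n) F[X]).map (fun p => p.coeff 0) = 1} with hS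
  have hcard := card_nilpotent n (Matrix.toLin' (shiftM k F)) (outF k F) (observable k)
  let f : GL (Fin n) F[X] → (Fin n → Idx k → F) := fun A l s =>
    -((A : Matrix (Fin n) (Fin n) F[X]) l s.1).coeff (k s.1 - s.2.val)
  have hf : ∀ A ∈ S, (A : Matrix (Fin n) (Fin n) F[X]) = polyMat k (f A) := by
    rintro A ⟨h1, h2⟩
    ext l j m
    rw [coeff_polyMat]
    split_ifs with h3 h4 h5
    · have := congrFun (congrFun h2 l) j
      rw [Matrix.map_apply, Matrix.one_apply, if_pos h4.symm] at this
      rw [h3]; exact this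
    · have := congrFun (congrFun h2 l) j
      rw [Matrix.map_apply, Matrix.one_apply, if_neg (Ne.symm h4)] at this
      rw [h3]; exact this
    · have : k j - (k j - m) = m := by omega
      simp [f, this]
    · apply coeff_eq_zero_of_degree_lt
      refine lt_of_le_of_lt (h1 l j) ?_
      exact_mod_cast (by omega : k j < m)
  have hinj : Set.InjOn f S := by
    intro A hA B hB hAB
    apply Units.ext
    rw [hf A hA, hf B hB, hAB]
  have himg : f '' S = {y | IsNilpotent
      (Matrix.toLin' (shiftM k F) + ∑ l, (outF k F l).smulRight (y l))} := by
    ext y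
    constructor
    · rintro ⟨A, hA, rfl⟩
      rw [Set.mem_ofPred_eq, ← isUnit_polyMat, ← hf A hA]
      exact A.isUnit
    · intro hy
      rw [Set.mem_ofPred_eq, ← isUnit_polyMat] at hy
      refine ⟨hy.unit, ⟨?_, ?_⟩, ?_⟩
      · intro i j
        rw [IsUnit.unit_spec, degree_le_iff_coeff_zero]
        intro m hm
        have hm' : k j < m := by exact_mod_cast hm
        rw [coeff_polyMat, if_neg (by omega), dif_neg (by omega)]
      · ext i j
        rw [IsUnit.unit_spec, Matrix.map_apply, coeff_polyMat, if_pos rfl, Matrix.one_apply]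
        simp only [eq_comm]
      · funext l s
        obtain ⟨j, i⟩ := s
        have hi := i.2
        simp only [f, IsUnit.unit_spec]
        rw [coeff_polyMat, if_neg (by omega), dif_pos (by omega), neg_neg]
        congr 2
        apply Fin.ext
        simp only
        omega
  rw [← Set.InjOn.ncard_image hinj, himg]
  change Nat.card {y : Fin n → Idx k → F // IsNilpotent
      (Matrix.toLin' (shiftM k F) + ∑ l, (outF k F l).smulRight (y l))} = _
  have hV : Fintype.card (Idx k → F) = q ^ ∑ j, k j := by
    rw [Fintype.card_fun, hq, Fintype.card_sigma]
    simp
  rw [hV] at hcard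
  have hqpos : 0 < q := hq ▸ Fintype.card_pos
  apply Nat.eq_of_mul_eq_mul_right (pow_pos hqpos (∑ j, k j))
  rw [hcard, ← pow_mul, ← pow_add]
  congr 1
  cases n with
  | zero => simp
  | succ n => rw [Nat.add_sub_cancel]; ring
end

section
/- Let F be a finite field with q elements and let k_1, …, k_n be natural numbers. Then the number of matrices A = (a_{i,j}) ∈ GL_n(F[x]) such that deg(a_{i,j}) ≤ k_j for all 1 ≤ i, j ≤ n equals #GL_n(F) · q^{(n-1)(k_1 + k_2 + ⋯ + k_n)}, where #GL_n(F) is the number of invertible n×n matrices over F. -/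
open Polynomial Matrix

namespace CountGL

/-- leading coefficient rows with respect to the row degree bounds `k`. -/
noncomputable def lead {F : Type*} [Field F] {n : ℕ} (k : Fin n → ℕ)
    (B : Matrix (Fin n) (Fin n) F[X]) (j : Fin n) : Fin n → F := fun i => (B j i).coeff (k j)

/-- invertible matrices with row degrees bounded by `k`, and independent leading rows on `T`. -/
def S (F : Type*) [Field F] {n : ℕ} (T : Finset (Fin n)) (k : Fin n → ℕ) :
    Set (Matrix (Fin n) (Fin n) F[X]) :=
  {B | IsUnit B.det ∧ (∀ j i, (B j i).natDegree ≤ k j) ∧ LinearIndepOn F (lead k B) (T : Set (Fin n))}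

variable {F : Type*} [Field F] {n : ℕ}

lemma finite_deg [Finite F] (k : Fin n → ℕ) :
    {B : Matrix (Fin n) (Fin n) F[X] | ∀ j i, (B j i).natDegree ≤ k j}.Finite := by
  have h1 : ∀ d : ℕ, {p : F[X] | p.natDegree ≤ d}.Finite := by
    intro d
    refine Set.Finite.of_finite_image (f := fun p : F[X] => fun i : Fin (d+1) => p.coeff i)
      (Set.toFinite _) ?_
    intro p hp r hr h
    ext m
    by_cases hm : m < d + 1
    · exact congrFun h ⟨m, hm⟩
    · simp only [Set.mem_ofPred_eq] at hp hr
      rw [coeff_eq_zero_of_natDegree_lt (by omega), coeff_eq_zero_of_natDegree_lt (by omega)]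
  have := Set.Finite.pi' (fun j : Fin n => Set.Finite.pi' (fun _ : Fin n => h1 (k j)))
  exact this

lemma finite_S [Finite F] (T : Finset (Fin n)) (k : Fin n → ℕ) : (S F T k).Finite :=
  (finite_deg k).subset fun _ h => h.2.1

lemma indep_of_zero {B : Matrix (Fin n) (Fin n) F[X]} (k : Fin n → ℕ) (hB : IsUnit B.det)
    (hd : ∀ j i, (B j i).natDegree ≤ k j) (T : Finset (Fin n)) (hT : ∀ i ∈ T, k i = 0) :
    LinearIndepOn F (lead k B) (T : Set (Fin n)) := by
  have hli : LinearIndependent F[X] B.row := by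
    apply Matrix.linearIndependent_rows_of_det_ne_zero hB.ne_zero
  rw [linearIndepOn_finset_iff]
  intro f hf i hi
  have h2 : LinearIndepOn F[X] B.row (T : Set (Fin n)) := hli.linearIndepOn _
  rw [linearIndepOn_finset_iff] at h2
  have := h2 (fun i => C (f i)) ?_ i hi
  · simpa using this
  · ext1 c
    have h3 := congrFun hf c
    simp only [Finset.sum_apply, Pi.smul_apply, smul_eq_mul, Pi.zero_apply, lead] at h3 ⊢
    have : ∀ x ∈ T, C (f x) * B.row x c = C (f x * (B x c).coeff (k x)) := by
      intro x hx
      rw [C_mul, hT x hx]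
      congr 1
      apply eq_C_of_natDegree_le_zero
      have := hd x c
      rwa [hT x hx] at this
    rw [Finset.sum_congr rfl this, ← map_sum, h3, map_zero]

lemma coeff_prod_aux {ι : Type*} (s : Finset ι) (f : ι → F[X]) (k : ι → ℕ)
    (h : ∀ i ∈ s, (f i).natDegree ≤ k i) :
    (∏ i ∈ s, f i).coeff (∑ i ∈ s, k i) = ∏ i ∈ s, (f i).coeff (k i) := by
  classical
  induction s using Finset.induction_on with
  | empty => simp
  | insert a s ha ih =>
    rw [Finset.prod_insert ha, Finset.sum_insert ha, Finset.prod_insert ha,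
      coeff_mul_add_eq_of_natDegree_le (h a (by simp)), ih (fun i hi => h i (by simp [hi]))]
    refine (natDegree_prod_le _ _).trans ?_
    exact Finset.sum_le_sum fun i hi => h i (by simp [hi])

lemma coeff_det {B : Matrix (Fin n) (Fin n) F[X]} (k : Fin n → ℕ)
    (hd : ∀ j i, (B j i).natDegree ≤ k j) :
    B.det.coeff (∑ j, k j) = (Matrix.of (lead k B)).det := by
  rw [← Matrix.det_transpose B, ← Matrix.det_transpose (Matrix.of _), Matrix.det_apply,
    Matrix.det_apply, finsetSum_coeff]
  refine Finset.sum_congr rfl fun σ _ => ?_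
  rw [Polynomial.coeff_smul]
  congr 1
  exact coeff_prod_aux Finset.univ (fun i => B i (σ i)) k (fun i _ => hd i _)

lemma S_univ_empty (k : Fin n → ℕ) (hk : 0 < ∑ j, k j) : S F Finset.univ k = ∅ := by
  rw [Set.eq_empty_iff_forall_notMem]
  rintro B ⟨h1, h2, h3⟩
  have h4 := coeff_det k h2
  have h5 : B.det.coeff (∑ j, k j) = 0 :=
    coeff_eq_zero_of_natDegree_lt (by rwa [natDegree_eq_zero_of_isUnit h1])
  rw [h5] at h4
  have h6 : LinearIndependent F (Matrix.of (lead k B)).row := by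
    rw [Finset.coe_univ, linearIndepOn_univ_iff] at h3
    exact h3
  rw [Matrix.linearIndependent_rows_iff_isUnit, Matrix.isUnit_iff_isUnit_det, ← h4] at h6
  exact not_isUnit_zero h6

/-- row combination -/
noncomputable def addRows (k : Fin n → ℕ) (T : Finset (Fin n)) (j : Fin n) (v : Fin n → F)
    (B : Matrix (Fin n) (Fin n) F[X]) : Matrix (Fin n) (Fin n) F[X] :=
  B.updateRow j (B j + ∑ i ∈ T, (C (v i) * X ^ (k j - k i)) • B i)

lemma det_addRows (k : Fin n → ℕ) (T : Finset (Fin n)) (j : Fin n) (hj : j ∉ T) (v : Fin n → F)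
    (B : Matrix (Fin n) (Fin n) F[X]) : (addRows k T j v B).det = B.det := by
  have := Matrix.det_updateRow_sum B j
    (fun i => if i = j then 1 else if i ∈ T then C (v i) * X ^ (k j - k i) else 0)
  simp only [if_true, one_smul] at this
  rw [← this, addRows]
  congr 2
  rw [← Finset.add_sum_erase _ _ (Finset.mem_univ j)]
  simp only [if_true, one_smul]
  congr 1
  refine Finset.sum_subset_zero_on_sdiff ?_ ?_ ?_
  · intro i hi
    rw [Finset.mem_erase]
    exact ⟨by rintro rfl; exact hj hi, Finset.mem_univ _⟩
  · intro i hi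
    simp only [Finset.mem_sdiff, Finset.mem_erase] at hi
    rw [if_neg hi.1.1, if_neg hi.2, zero_smul]
  · intro i hi
    rw [if_neg (by rintro rfl; exact hj hi), if_pos hi]

lemma addRows_ne (k : Fin n → ℕ) (T : Finset (Fin n)) (j i : Fin n) (hij : i ≠ j) (v : Fin n → F)
    (B : Matrix (Fin n) (Fin n) F[X]) : addRows k T j v B i = B i := by
  simp [addRows, hij]

lemma addRows_same (k : Fin n → ℕ) (T : Finset (Fin n)) (j : Fin n) (v : Fin n → F)
    (B : Matrix (Fin n) (Fin n) F[X]) (c : Fin n) : addRows k T j v B j c =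
      B j c + ∑ i ∈ T, (C (v i) * X ^ (k j - k i)) * B i c := by
  simp [addRows]

lemma addRows_neg (k : Fin n → ℕ) (T : Finset (Fin n)) (j : Fin n) (hj : j ∉ T) (v : Fin n → F)
    (B : Matrix (Fin n) (Fin n) F[X]) : addRows k T j v (addRows k T j (-v) B) = B := by
  ext1 i c
  by_cases hi : i = j
  · subst hi
    rw [addRows_same, addRows_same, add_assoc, ← Finset.sum_add_distrib, Finset.sum_eq_zero,
      add_zero]
    intro x hx
    rw [addRows_ne _ _ _ _ (by rintro rfl; exact hj hx)]
    simp
  · rw [addRows_ne _ _ _ _ hi, addRows_ne _ _ _ _ hi]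

lemma deg_term (k : Fin n → ℕ) (j i : Fin n) (hij : k i ≤ k j) (a : F) (p : F[X])
    (hp : p.natDegree ≤ k i) : (C a * X ^ (k j - k i) * p).natDegree ≤ k j := by
  refine natDegree_mul_le.trans ?_
  have := natDegree_C_mul_X_pow_le a (k j - k i)
  omega

lemma coeff_term (k : Fin n → ℕ) (j i : Fin n) (hij : k i ≤ k j) (a : F) (p : F[X]) :
    (C a * X ^ (k j - k i) * p).coeff (k j) = a * p.coeff (k i) := by
  rw [mul_assoc, coeff_C_mul, coeff_X_pow_mul', if_pos (by omega)]
  congr 2; omega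

lemma addRows_natDegree (k : Fin n → ℕ) (T : Finset (Fin n)) (j : Fin n)
    (hm : ∀ i ∈ T, k i ≤ k j) (v : Fin n → F)
    (B : Matrix (Fin n) (Fin n) F[X]) (hB : ∀ j i, (B j i).natDegree ≤ k j) (c : Fin n) :
    (addRows k T j v B j c).natDegree ≤ k j := by
  rw [addRows_same]
  refine (natDegree_add_le _ _).trans (max_le (hB _ _) ?_)
  exact natDegree_sum_le_of_forall_le _ _ fun i hi => deg_term k j i (hm i hi) _ _ (hB i c)

lemma addRows_lead (k : Fin n → ℕ) (T : Finset (Fin n)) (j : Fin n)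
    (hm : ∀ i ∈ T, k i ≤ k j) (v : Fin n → F)
    (B : Matrix (Fin n) (Fin n) F[X]) :
    lead k (addRows k T j v B) j = lead k B j + ∑ i ∈ T, v i • lead k B i := by
  ext c
  simp only [lead, addRows_same, coeff_add, finsetSum_coeff, Pi.add_apply, Finset.sum_apply,
    Pi.smul_apply, smul_eq_mul]
  congr 1
  exact Finset.sum_congr rfl fun i hi => coeff_term k j i (hm i hi) _ _

/-- extension by zero -/
def ext0 (T : Finset (Fin n)) (v : T → F) (i : Fin n) : F := if h : i ∈ T then v ⟨i, h⟩ else 0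

lemma addRows_congr (k : Fin n → ℕ) (T : Finset (Fin n)) (j : Fin n) (v w : Fin n → F)
    (h : ∀ i ∈ T, v i = w i) (B : Matrix (Fin n) (Fin n) F[X]) :
    addRows k T j v B = addRows k T j w B := by
  unfold addRows
  congr 2
  exact Finset.sum_congr rfl fun i hi => by rw [h i hi]

lemma image_eq (k : Fin n → ℕ) (T : Finset (Fin n)) (j : Fin n) (hj : j ∉ T)
    (hm : ∀ i ∈ T, k i ≤ k j) (hpos : 0 < k j) :
    (fun p : (T → F) × Matrix (Fin n) (Fin n) F[X] => addRows k T j (ext0 T p.1) p.2) ''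
      (Set.univ ×ˢ S F T (Function.update k j (k j - 1))) = S F T k \ S F (insert j T) k := by
  have hneT : ∀ i ∈ T, i ≠ j := by rintro i hi rfl; exact hj hi
  ext B
  constructor
  · rintro ⟨⟨v, B⟩, ⟨-, h1, h2, h3⟩, rfl⟩
    simp only at h1 h2 h3 ⊢
    have hB : ∀ j i, (B j i).natDegree ≤ k j := by
      intro i c
      have := h2 i c
      by_cases hi : i = j
      · subst hi; rw [Function.update_self] at this; omega
      · rwa [Function.update_of_ne hi] at this
    have hl : lead k B j = 0 := by
      ext c
      have := h2 j c
      rw [Function.update_self] at this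
      exact coeff_eq_zero_of_natDegree_lt (by omega)
    have hlT : ∀ i ∈ T, lead k (addRows k T j (ext0 T v) B) i
        = lead (Function.update k j (k j - 1)) B i := by
      intro i hi
      ext c
      simp only [lead]
      rw [addRows_ne _ _ _ _ (hneT i hi), Function.update_of_ne (hneT i hi)]
    have hlT' : ∀ i ∈ T, lead k B i = lead k (addRows k T j (ext0 T v) B) i := by
      intro i hi
      ext c
      simp only [lead]
      rw [addRows_ne _ _ _ _ (hneT i hi)]
    refine ⟨⟨by rwa [det_addRows _ _ _ hj], ?_, ?_⟩, ?_⟩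
    · intro i c
      by_cases hi : i = j
      · subst hi; exact addRows_natDegree k T i hm _ B hB c
      · rw [addRows_ne _ _ _ _ hi]; exact hB i c
    · exact (linearIndepOn_congr (fun i hi => (hlT i hi))).mpr h3
    · rintro ⟨-, -, h⟩
      rw [Finset.coe_insert, linearIndepOn_insert (by simpa using hj)] at h
      apply h.2
      rw [addRows_lead _ _ _ hm, hl, zero_add]
      refine Submodule.sum_mem _ fun i hi => Submodule.smul_mem _ _ (Submodule.subset_span ?_)
      rw [hlT' i hi]
      exact ⟨i, hi, rfl⟩
  · rintro ⟨⟨h1, h2, h3⟩, h4⟩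
    have h5 : lead k B j ∈ Submodule.span F (lead k B '' (T : Set (Fin n))) := by
      by_contra h
      apply h4
      refine ⟨h1, h2, ?_⟩
      rw [Finset.coe_insert, linearIndepOn_insert (by simpa using hj)]
      exact ⟨h3, h⟩
    rw [Submodule.mem_span_image_finset_iff_exists_fun] at h5
    obtain ⟨w', hw'⟩ := h5
    obtain ⟨w, hw⟩ : ∃ w : Fin n → F, ∑ i ∈ T, w i • lead k B i = lead k B j := by
      refine ⟨ext0 T w', ?_⟩
      rw [← hw', ← Finset.sum_coe_sort T]
      refine Finset.sum_congr rfl fun i _ => ?_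
      simp [ext0]
    have hwe : ∀ i ∈ T, ext0 T (fun i : T => w i) i = w i := by
      intro i hi; simp [ext0, hi]
    refine ⟨(fun i : T => w i, addRows k T j (-w) B), ⟨Set.mem_univ _, ?_, ?_, ?_⟩, ?_⟩
    · simpa only [det_addRows _ _ _ hj] using h1
    · intro i c
      by_cases hi : i = j
      · subst hi
        rw [Function.update_self]
        have e1 := addRows_natDegree k T i hm (-w) B h2 c
        have e2 := congrFun (addRows_lead k T i hm (-w) B) c
        have e3 : lead k B i + ∑ i ∈ T, (-w) i • lead k B i = 0 := by
          rw [← hw]; simp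
        rw [e3] at e2
        simp only [lead, Pi.zero_apply] at e2
        exact natDegree_le_pred e1 e2
      · rw [Function.update_of_ne hi]
        simp only
        rw [addRows_ne _ _ _ _ hi]; exact h2 i c
    · refine (linearIndepOn_congr (fun i hi => ?_)).mpr h3
      ext c
      simp only [lead]
      rw [addRows_ne _ _ _ _ (hneT i hi), Function.update_of_ne (hneT i hi)]
    · simp only
      rw [addRows_congr k T j _ w hwe, addRows_neg _ _ _ hj]

lemma injOn (k : Fin n → ℕ) (T : Finset (Fin n)) (j : Fin n) (hj : j ∉ T)
    (hm : ∀ i ∈ T, k i ≤ k j) (hpos : 0 < k j) :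
    Set.InjOn (fun p : (T → F) × Matrix (Fin n) (Fin n) F[X] => addRows k T j (ext0 T p.1) p.2)
      (Set.univ ×ˢ S F T (Function.update k j (k j - 1))) := by
  have hneT : ∀ i ∈ T, i ≠ j := by rintro i hi rfl; exact hj hi
  have hl0 : ∀ B ∈ S F T (Function.update k j (k j - 1)), lead k B j = 0 := by
    intro B hB
    ext c
    have := hB.2.1 j c
    rw [Function.update_self] at this
    exact coeff_eq_zero_of_natDegree_lt (by omega)
  rintro ⟨v, B⟩ ⟨-, hB⟩ ⟨w, B'⟩ ⟨-, hB'⟩ h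
  simp only at h hB hB'
  have hrow : ∀ i, i ≠ j → B i = B' i := by
    intro i hi
    have := congrFun h i
    rwa [addRows_ne _ _ _ _ hi, addRows_ne _ _ _ _ hi] at this
  have hl := congrArg (fun M => lead k M j) h
  simp only [addRows_lead _ _ _ hm, hl0 B hB, hl0 B' hB', zero_add] at hl
  have hlead : ∀ i ∈ T, lead k B' i = lead k B i := by
    intro i hi
    ext c
    simp only [lead, hrow i (hneT i hi)]
  rw [Finset.sum_congr rfl (fun i hi => by rw [hlead i hi] :
    ∀ i ∈ T, ext0 T w i • lead k B' i = ext0 T w i • lead k B i)] at hl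
  have hli : LinearIndepOn F (lead k B) (T : Set (Fin n)) := by
    refine (linearIndepOn_congr (fun i hi => ?_)).mpr hB.2.2
    ext c
    simp only [lead]
    rw [Function.update_of_ne (hneT i hi)]
  rw [linearIndepOn_finset_iff] at hli
  have hvw : v = w := by
    ext ⟨i, hi⟩
    have := hli (fun i => ext0 T v i - ext0 T w i)
      (by simp only [sub_smul, Finset.sum_sub_distrib, hl, sub_self]) i hi
    simpa [ext0, hi, sub_eq_zero] using this
  subst hvw
  have : B = B' := by
    ext1 i c
    by_cases hi : i = j
    · subst hi
      have := congrFun (congrFun h i) c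
      rw [addRows_same, addRows_same, Finset.sum_congr rfl (fun x hx => by
        rw [hrow x (hneT x hx)] : ∀ x ∈ T, (C (ext0 T v x) * X ^ (k i - k x)) * B x c =
          (C (ext0 T v x) * X ^ (k i - k x)) * B' x c)] at this
      exact add_right_cancel this
    · rw [hrow i hi]
  rw [this]

lemma recur [Fintype F] (k : Fin n → ℕ) (T : Finset (Fin n)) (j : Fin n) (hj : j ∉ T)
    (hm : ∀ i ∈ T, k i ≤ k j) (hpos : 0 < k j) :
    (S F T k).ncard = (S F (insert j T) k).ncard +
      Fintype.card F ^ T.card * (S F T (Function.update k j (k j - 1))).ncard := by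
  have hsub : S F (insert j T) k ⊆ S F T k := fun B h =>
    ⟨h.1, h.2.1, h.2.2.mono (by simp)⟩
  rw [← Set.ncard_sdiff_add_ncard_of_subset hsub (finite_S T k), ← image_eq k T j hj hm hpos,
    Set.ncard_image_of_injOn (injOn k T j hj hm hpos), Set.ncard_prod, add_comm]
  simp [Set.ncard_univ]

lemma recur0 (k : Fin n → ℕ) (T : Finset (Fin n)) (hT : ∀ i ∈ T, k i = 0) :
    S F T k = S F ∅ k := by
  ext B
  constructor
  · rintro ⟨h1, h2, -⟩
    exact ⟨h1, h2, by simp⟩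
  · rintro ⟨h1, h2, -⟩
    exact ⟨h1, h2, indep_of_zero k h1 h2 T hT⟩

lemma base (k : Fin n → ℕ) (hk : ∀ i, k i = 0) :
    (S F ∅ k).ncard = Nat.card (GL (Fin n) F) := by
  have : S F ∅ k = (fun A : GL (Fin n) F => (A : Matrix (Fin n) (Fin n) F).map C) '' Set.univ := by
    ext B
    constructor
    · rintro ⟨h1, h2, -⟩
      have hB : B = (B.map (fun p => p.coeff 0)).map C := by
        ext1 i j
        simp only [Matrix.map_apply]
        apply eq_C_of_natDegree_le_zero
        have := h2 i j
        rwa [hk] at this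
      have hd : IsUnit (B.map (fun p => p.coeff 0)).det := by
        rw [hB, ← RingHom.mapMatrix_apply, ← RingHom.map_det] at h1
        exact Polynomial.isUnit_C.mp h1
      exact ⟨Matrix.GeneralLinearGroup.mk'' _ hd, Set.mem_univ _, hB.symm⟩
    · rintro ⟨A, -, rfl⟩
      refine ⟨?_, ?_, by simp⟩
      · simp only
        rw [← RingHom.mapMatrix_apply, ← RingHom.map_det]
        exact ((Matrix.isUnit_iff_isUnit_det _).mp A.isUnit).map C
      · intro j i; simp
  rw [this, Set.ncard_image_of_injective, Set.ncard_univ]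
  intro A A' h
  apply Units.ext
  exact Matrix.map_injective C_injective h

/-- the closed form -/
noncomputable def f (g q : ℚ) (T : Finset (Fin n)) (k : Fin n → ℕ) : ℚ :=
  g * q ^ ((n - 1) * ∑ j, k j) *
    ∏ i ∈ Finset.Ico (T.filter (fun i => k i = 0)).card T.card, (1 - q ^ i / q ^ (n - 1))

lemma sum_update (k : Fin n → ℕ) (j : Fin n) (hpos : 0 < k j) :
    ∑ i, k i = ∑ i, Function.update k j (k j - 1) i + 1 := by
  rw [Finset.sum_update_of_mem (Finset.mem_univ j)]
  have := Finset.add_sum_erase Finset.univ k (Finset.mem_univ j)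
  rw [Finset.sdiff_singleton_eq_erase]
  omega

lemma f_recur (g q : ℚ) (hq : q ≠ 0) (k : Fin n → ℕ) (T : Finset (Fin n)) (j : Fin n) (hj : j ∉ T)
    (hpos : 0 < k j) :
    f g q T k = f g q (insert j T) k + q ^ T.card * f g q T (Function.update k j (k j - 1)) := by
  have h1 : ((insert j T).filter (fun i => k i = 0)) = T.filter (fun i => k i = 0) := by
    rw [Finset.filter_insert, if_neg (by omega)]
  have h2 : (T.filter (fun i => Function.update k j (k j - 1) i = 0))
      = T.filter (fun i => k i = 0) := by
    apply Finset.filter_congr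
    intro i hi
    rw [Function.update_of_ne (by rintro rfl; exact hj hi)]
  have h3 := sum_update k j hpos
  unfold f
  rw [h1, h2, Finset.card_insert_of_notMem hj, Finset.prod_Ico_succ_top (Finset.card_filter_le _ _),
    h3, mul_add, pow_add, mul_one]
  have := pow_ne_zero (n - 1) hq
  field_simp
  ring

lemma main [Fintype F] (m : ℕ) : ∀ (k : Fin n → ℕ), ∑ j, k j = m → ∀ T,
    ((S F T k).ncard : ℚ) = f (Nat.card (GL (Fin n) F)) (Fintype.card F) T k := by
  have hq : (Fintype.card F : ℚ) ≠ 0 := by exact_mod_cast Fintype.card_ne_zero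
  induction m with
  | zero =>
    intro k hk T
    have hk' : ∀ i, k i = 0 := by simpa using hk
    rw [recur0 k T (fun i _ => hk' i), base k hk']
    simp [f, hk']
  | succ m ih =>
    intro k hk
    set g : ℚ := ((Nat.card (GL (Fin n) F) : ℕ) : ℚ)
    set q : ℚ := ((Fintype.card F : ℕ) : ℚ) with hqdef
    have key : ∀ c : ℕ, ∀ T : Finset (Fin n), T.card = c →
        ((S F T k).ncard : ℚ) - f g q T k = (S F ∅ k).ncard - f g q ∅ k := by
      intro c
      induction c with
      | zero => intro T hT; rw [Finset.card_eq_zero.mp hT]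
      | succ c ihc =>
        intro T hT
        obtain ⟨j, hjT, hmax⟩ := Finset.exists_max_image T k (Finset.card_pos.mp (by omega))
        by_cases hj0 : k j = 0
        · have hT0 : ∀ i ∈ T, k i = 0 := fun i hi => by have := hmax i hi; omega
          rw [recur0 k T hT0]
          simp [f, Finset.filter_true_of_mem hT0]
        · have hpos : 0 < k j := by omega
          have hj : j ∉ T.erase j := by simp
          have hm : ∀ i ∈ T.erase j, k i ≤ k j := fun i hi => hmax i (Finset.mem_of_mem_erase hi)
          have e1 := recur (F := F) k (T.erase j) j hj hm hpos
          have e2 := f_recur g q hq k (T.erase j) j hj hpos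
          rw [Finset.insert_erase hjT] at e1 e2
          have e3 := ihc (T.erase j) (by rw [Finset.card_erase_of_mem hjT]; omega)
          have h3 : ∑ i, Function.update k j (k j - 1) i = m := by
            have := sum_update k j hpos
            omega
          have e4 := ih _ h3 (T.erase j)
          rw [← e4] at e2
          have e1' : ((S F (T.erase j) k).ncard : ℚ) = _ := congrArg Nat.cast e1
          push_cast at e1'
          rw [← hqdef] at e1'
          linarith
    have hu : ((S F Finset.univ k).ncard : ℚ) - f g q Finset.univ k = 0 := by
      rw [S_univ_empty k (by omega)]
      have : f g q Finset.univ k = 0 := by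
        unfold f
        apply mul_eq_zero_of_right
        apply Finset.prod_eq_zero (i := n - 1)
        · have hne : ∃ j, k j ≠ 0 := by
            by_contra! h
            simp [h] at hk
          obtain ⟨j, hj⟩ := hne
          have : (Finset.univ.filter (fun i => k i = 0)).card < (Finset.univ : Finset (Fin n)).card :=
            Finset.card_lt_card (Finset.filter_ssubset.mpr ⟨j, Finset.mem_univ _, hj⟩)
          rw [Finset.card_univ, Fintype.card_fin] at *
          rw [Finset.mem_Ico]
          omega
        · rw [div_self (pow_ne_zero _ hq), sub_self]
      simp [this]
    intro T
    have e1 := key _ T rfl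
    have e2 := key _ Finset.univ rfl
    linarith

end CountGL

/-- The number of `A ∈ GL_n(F[x])` with `deg a_{i,j} ≤ k_j` for all `i, j`
equals `#GL_n(F) · q^((n-1)(k₁ + ⋯ + kₙ))`. -/
theorem stmt_4 (F : Type*) [Field F] [Fintype F] (q : ℕ) (hq : Fintype.card F = q)
    (n : ℕ) (k : Fin n → ℕ) :
    {A : GL (Fin n) F[X] |
        ∀ i j, ((A : Matrix (Fin n) (Fin n) F[X]) i j).degree ≤ (k j : ℕ)}.ncard
      = Nat.card (GL (Fin n) F) * q ^ ((n - 1) * ∑ j, k j) := by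
  have h := CountGL.main (F := F) _ k rfl ∅
  have hS : CountGL.S F ∅ k = (fun A : GL (Fin n) F[X] => (A : Matrix (Fin n) (Fin n) F[X])ᵀ) ''
    {A : GL (Fin n) F[X] |
        ∀ i j, ((A : Matrix (Fin n) (Fin n) F[X]) i j).degree ≤ (k j : ℕ)} := by
    ext B
    constructor
    · rintro ⟨h1, h2, -⟩
      have hd : IsUnit Bᵀ.det := by rwa [Matrix.det_transpose]
      refine ⟨Matrix.GeneralLinearGroup.mk'' _ hd, ?_, Matrix.transpose_transpose B⟩
      intro i j
      exact Polynomial.natDegree_le_iff_degree_le.mp (h2 j i)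
    · rintro ⟨A, hA, rfl⟩
      refine ⟨?_, ?_, by simp⟩
      · simp only
        rw [Matrix.det_transpose]
        exact (Matrix.isUnit_iff_isUnit_det _).mp A.isUnit
      · intro j i
        exact Polynomial.natDegree_le_iff_degree_le.mpr (hA i j)
  rw [hS, Set.ncard_image_of_injective] at h
  · rw [hq] at h
    simp only [CountGL.f, Finset.filter_empty, Finset.card_empty, Finset.Ico_self,
      Finset.prod_empty, mul_one] at h
    exact_mod_cast h
  · intro A A' h
    apply Units.ext
    exact Matrix.transpose_injective h
end

section
/- Let F be a finite field with q elements and let k_1 ≥ k_2 ≥ ⋯ ≥ k_n ≥ 1 be integers. Then #P_{n;k_1,k_2,…,k_n} = q^{n-1} · #P_{n;k_1−1,k_2,…,k_n}. -/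
open Polynomial Matrix

/-- `P_{n;k₁,…,kₙ}`: the set of `A ∈ GL_n(F[x])` with `deg a_{i,j} ≤ k_j` for all `i, j` and
constant-term matrix equal to the identity. -/
def Pset (F : Type*) [Field F] (n : ℕ) (k : Fin n → ℕ) : Set (GL (Fin n) F[X]) :=
  {A | (∀ i j, ((A : Matrix (Fin n) (Fin n) F[X]) i j).degree ≤ (k j : ℕ)) ∧
       (A : Matrix (Fin n) (Fin n) F[X]).map (fun p => p.coeff 0) = 1}

section aux
variable {F : Type*} [Field F] {n : ℕ}

/-- Leading column vectors. -/
def lcol (k : Fin n → ℕ) (A : Matrix (Fin n) (Fin n) F[X]) (j : Fin n) : Fin n → F :=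
  fun r => (A r j).coeff (k j)

/-- Invertible matrices with bounded column degrees, with the leading columns in `T` independent. -/
def Gset (F : Type*) [Field F] {n : ℕ} (k : Fin n → ℕ) (T : Finset (Fin n)) :
    Set (Matrix (Fin n) (Fin n) F[X]) :=
  {A | IsUnit A.det ∧ (∀ i j, (A i j).natDegree ≤ k j) ∧ LinearIndepOn F (lcol k A) (T : Set (Fin n))}

lemma Gset_finite [Fintype F] (k : Fin n → ℕ) (T : Finset (Fin n)) : (Gset F k T).Finite := by
  have h1 : ∀ m : ℕ, {p : F[X] | p.natDegree ≤ m}.Finite := by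
    intro m
    have : Finite (Polynomial.degreeLT F (m+1)) :=
      Finite.of_equiv _ (Polynomial.degreeLTEquiv F (m+1)).toEquiv.symm
    refine (Set.toFinite (Polynomial.degreeLT F (m+1) : Set F[X])).subset ?_
    intro p hp
    simp only [SetLike.mem_coe, Polynomial.mem_degreeLT]
    have : p.natDegree ≤ m := hp
    exact lt_of_le_of_lt (Polynomial.natDegree_le_iff_degree_le.1 this) (by exact_mod_cast Nat.lt_succ_self m)
  have h2 : (Set.pi Set.univ (fun _ : Fin n => Set.pi Set.univ
      (fun j : Fin n => {p : F[X] | p.natDegree ≤ k j}))).Finite :=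
    Set.Finite.pi fun _ => Set.Finite.pi fun j => h1 _
  refine h2.subset ?_
  intro A hA i _ j _
  exact hA.2.1 i j

/-- The column operation. -/
noncomputable def cop (k : Fin n → ℕ) (T : Finset (Fin n)) (i : Fin n)
    (A : Matrix (Fin n) (Fin n) F[X]) (c : T → F) : Matrix (Fin n) (Fin n) F[X] :=
  A.updateCol i (fun r => A r i + ∑ j : T, C (c j) * (X ^ (k i - k j) * A r j))

lemma cop_ne (k : Fin n → ℕ) (T : Finset (Fin n)) (i : Fin n)
    (A : Matrix (Fin n) (Fin n) F[X]) (c : T → F) {j : Fin n} (hj : j ≠ i) (r : Fin n) :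
    cop k T i A c r j = A r j := by
  simp [cop, hj]

lemma cop_self (k : Fin n → ℕ) (T : Finset (Fin n)) (i : Fin n)
    (A : Matrix (Fin n) (Fin n) F[X]) (c : T → F) (r : Fin n) :
    cop k T i A c r i = A r i + ∑ j : T, C (c j) * (X ^ (k i - k j) * A r j) := by
  simp [cop]

lemma cop_det (k : Fin n → ℕ) (T : Finset (Fin n)) (i : Fin n) (hi : i ∉ T)
    (A : Matrix (Fin n) (Fin n) F[X]) (c : T → F) : (cop k T i A c).det = A.det := by
  classical
  let w : Fin n → F[X] := fun j => if h : j ∈ T then C (c ⟨j, h⟩) * X ^ (k i - k j)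
    else if j = i then 1 else 0
  have h := Matrix.det_updateCol_sum A i w
  have hw : w i = 1 := by simp [w, hi]
  rw [hw, one_smul] at h
  rw [← h, cop]
  congr 2
  funext r
  rw [← Finset.sum_add_sum_compl T, add_comm]
  congr 1
  · rw [← Finset.sum_coe_sort T]
    refine Finset.sum_congr rfl fun j _ => ?_
    simp [w, mul_assoc]
  · rw [Finset.sum_eq_single i]
    · simp [hw]
    · intro b hb hbi
      have : b ∉ T := by simpa using hb
      simp [w, this, hbi]
    · intro h; simp [hi] at h

lemma lcol_cop_ne (k : Fin n → ℕ) (T : Finset (Fin n)) (i : Fin n)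
    (A : Matrix (Fin n) (Fin n) F[X]) (c : T → F) {j : Fin n} (hj : j ≠ i) :
    lcol k (cop k T i A c) j = lcol k A j := by
  funext r; simp [lcol, cop_ne k T i A c hj]

lemma lcol_cop_self (k : Fin n → ℕ) (T : Finset (Fin n)) (i : Fin n)
    (hk : ∀ j ∈ T, k j ≤ k i)
    (A : Matrix (Fin n) (Fin n) F[X]) (c : T → F) :
    lcol k (cop k T i A c) i = lcol k A i + ∑ j : T, c j • lcol k A j := by
  funext r
  simp only [lcol, cop_self, coeff_add, finset_sum_coeff, coeff_C_mul, Pi.add_apply,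
    Finset.sum_apply, Pi.smul_apply, smul_eq_mul]
  congr 1
  refine Finset.sum_congr rfl fun j _ => ?_
  have := hk j j.2
  rw [coeff_X_pow_mul', if_pos (by omega)]
  congr 2; omega

lemma linIndep_cop (k : Fin n → ℕ) (T : Finset (Fin n)) (i : Fin n) (hi : i ∉ T)
    (A : Matrix (Fin n) (Fin n) F[X]) (c : T → F) :
    LinearIndepOn F (lcol k (cop k T i A c)) (T : Set (Fin n)) ↔
      LinearIndepOn F (lcol k A) (T : Set (Fin n)) := by
  apply linearIndepOn_congr
  intro j hj
  exact lcol_cop_ne k T i A c (by rintro rfl; exact hi hj)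

lemma cop_mem (k : Fin n → ℕ) (T : Finset (Fin n)) (i : Fin n) (hi : i ∉ T)
    (hk : ∀ j ∈ T, k j ≤ k i)
    (A : Matrix (Fin n) (Fin n) F[X]) (c : T → F) (hA : A ∈ Gset F k T) :
    cop k T i A c ∈ Gset F k T := by
  refine ⟨by rw [cop_det k T i hi]; exact hA.1, ?_, (linIndep_cop k T i hi A c).2 hA.2.2⟩
  intro r j
  by_cases hj : j = i
  · subst hj
    rw [cop_self]
    refine (natDegree_add_le _ _).trans (max_le (hA.2.1 _ _) ?_)
    refine natDegree_sum_le_of_forall_le _ _ fun l _ => ?_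
    refine (natDegree_C_mul_le _ _).trans (natDegree_mul_le.trans ?_)
    have h1 := hA.2.1 r l
    have h2 := hk l l.2
    rw [natDegree_X_pow]
    omega
  · rw [cop_ne k T i A c hj]; exact hA.2.1 _ _

lemma cop_neg (k : Fin n → ℕ) (T : Finset (Fin n)) (i : Fin n) (hi : i ∉ T)
    (A : Matrix (Fin n) (Fin n) F[X]) (c : T → F) :
    cop k T i (cop k T i A (-c)) c = A := by
  ext1 r j
  by_cases hj : j = i
  · subst hj
    rw [cop_self, cop_self]
    have : ∀ l : T, cop k T j A (-c) r l = A r l := fun l =>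
      cop_ne k T j A (-c) (by intro h; exact hi (h ▸ l.2)) r
    simp [this]
  · rw [cop_ne _ _ _ _ _ hj, cop_ne _ _ _ _ _ hj]

lemma ncard_step [Fintype F] (k : Fin n → ℕ) (T : Finset (Fin n)) (i : Fin n) (hi : i ∉ T)
    (hk : ∀ j ∈ T, k j ≤ k i) :
    (Gset F k T).ncard = (Gset F k (insert i T)).ncard
      + Fintype.card F ^ T.card * {A ∈ Gset F k T | lcol k A i = 0}.ncard := by
  classical
  have hsub : Gset F k (insert i T) ⊆ Gset F k T := fun A hA =>
    ⟨hA.1, hA.2.1, hA.2.2.mono (by simp)⟩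
  rw [← Set.ncard_sdiff_add_ncard_of_subset hsub (Gset_finite k T), add_comm]
  congr 1
  have himg : Gset F k T \ Gset F k (insert i T) =
      (fun p : (Matrix (Fin n) (Fin n) F[X]) × (T → F) => cop k T i p.1 p.2) ''
        ({A ∈ Gset F k T | lcol k A i = 0} ×ˢ Set.univ) := by
    ext B
    constructor
    · rintro ⟨hB, hB'⟩
      have hs : lcol k B i ∈ Submodule.span F (lcol k B '' (T : Set (Fin n))) := by
        by_contra hns
        apply hB'
        refine ⟨hB.1, hB.2.1, ?_⟩
        rw [Finset.coe_insert]
        exact (linearIndepOn_insert (by simpa using hi)).2 ⟨hB.2.2, hns⟩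
      obtain ⟨c, hc⟩ := (Submodule.mem_span_image_finset_iff_exists_fun F).1 hs
      refine ⟨(cop k T i B (-c), c), ⟨⟨cop_mem k T i hi hk B _ hB, ?_⟩, trivial⟩,
        cop_neg k T i hi B c⟩
      rw [lcol_cop_self k T i hk, ← hc]
      simp
    · rintro ⟨⟨A, c⟩, ⟨⟨hA, hA0⟩, -⟩, rfl⟩
      refine ⟨cop_mem k T i hi hk A c hA, ?_⟩
      rintro ⟨-, -, h⟩
      rw [Finset.coe_insert, linearIndepOn_insert (by simpa using hi)] at h
      apply h.2
      rw [Submodule.mem_span_image_finset_iff_exists_fun]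
      refine ⟨c, ?_⟩
      dsimp only at hA0 ⊢
      rw [lcol_cop_self k T i hk, hA0, zero_add]
      refine Finset.sum_congr rfl fun j _ => ?_
      rw [lcol_cop_ne k T i A c (by intro h; exact hi (h ▸ j.2))]
  rw [himg, Set.ncard_image_of_injOn, Set.ncard_prod, Set.ncard_univ, mul_comm]
  · simp
  · rintro ⟨A, c⟩ ⟨⟨hA, hA0⟩, -⟩ ⟨B, d⟩ ⟨⟨hB, hB0⟩, -⟩ h
    dsimp only at h hA hA0 hB hB0
    have hne : ∀ r j, j ≠ i → A r j = B r j := fun r j hj => by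
      rw [← cop_ne k T i A c hj, h, cop_ne k T i B d hj]
    have hl : ∀ j : T, lcol k B j = lcol k A j := fun j => by
      funext r; simp only [lcol]; rw [hne]; intro h; exact hi (h ▸ j.2)
    have hcd : c = d := by
      have h1 := congrArg (fun M => lcol k M i) h
      simp only [lcol_cop_self k T i hk, hA0, hB0, zero_add, hl] at h1
      have h2 := Fintype.linearIndependent_iff.1 hA.2.2 (c - d) (by
        simp only [Pi.sub_apply, sub_smul, Finset.sum_sub_distrib]
        exact sub_eq_zero.2 h1)
      funext j
      exact sub_eq_zero.1 (h2 j)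
    subst hcd
    have : A = B := by
      have h3 := congrArg (fun M => cop k T i M (-c)) h
      have h4 : ∀ M : Matrix (Fin n) (Fin n) F[X], cop k T i (cop k T i M c) (-c) = M := fun M => by
        have := cop_neg k T i hi M (-c)
        rwa [neg_neg] at this
      simpa only [h4] using h3
    rw [this]

lemma Gset_zero (k : Fin n → ℕ) (T : Finset (Fin n)) (i : Fin n) (hki : k i = 0) :
    {A ∈ Gset F k T | lcol k A i = 0} = ∅ := by
  ext A
  simp only [Set.mem_ofPred_eq, Set.mem_empty_iff_false, iff_false, not_and]
  intro hA h0
  have : A.det = 0 := by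
    apply Matrix.det_eq_zero_of_column_eq_zero i
    intro r
    have h1 := hA.2.1 r i
    have h2 := congrFun h0 r
    simp only [lcol, hki, Pi.zero_apply] at h1 h2
    rw [eq_C_of_natDegree_le_zero h1, h2, C_0]
  exact hA.1.ne_zero this

lemma Gset_pos (k : Fin n → ℕ) (T : Finset (Fin n)) (i : Fin n) (hi : i ∉ T) (hki : 1 ≤ k i) :
    {A ∈ Gset F k T | lcol k A i = 0} = Gset F (Function.update k i (k i - 1)) T := by
  ext A
  have hT : LinearIndepOn F (lcol (Function.update k i (k i - 1)) A) (T : Set (Fin n)) ↔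
      LinearIndepOn F (lcol k A) (T : Set (Fin n)) := by
    apply linearIndepOn_congr
    intro j hj
    have : j ≠ i := by rintro rfl; exact hi hj
    funext r
    simp [lcol, this]
  simp only [Set.mem_ofPred_eq, Gset, hT]
  have hd : ((∀ r j, (A r j).natDegree ≤ k j) ∧ lcol k A i = 0) ↔
      ∀ r j, (A r j).natDegree ≤ Function.update k i (k i - 1) j := by
    constructor
    · rintro ⟨h1, h2⟩ r j
      by_cases hj : j = i
      · subst hj
        rw [Function.update_self]
        have h3 : (A r j).coeff (k j) = 0 := congrFun h2 r
        have h4 := h1 r j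
        rcases h4.lt_or_eq with h | h
        · omega
        · rw [← h] at h3
          have h5 : A r j = 0 := leadingCoeff_eq_zero.1 h3
          rw [h5]; simp
      · rw [Function.update_of_ne hj]; exact h1 r j
    · intro h
      constructor
      · intro r j
        have := h r j
        by_cases hj : j = i
        · subst hj
          rw [Function.update_self] at this
          omega
        · rwa [Function.update_of_ne hj] at this
      · funext r
        have := h r i
        rw [Function.update_self] at this
        exact coeff_eq_zero_of_natDegree_lt (by omega)
  tauto

lemma coeff_prod_sum {ι : Type*} (s : Finset ι) (f : ι → F[X]) (k : ι → ℕ)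
    (h : ∀ j, (f j).natDegree ≤ k j) :
    (∏ j ∈ s, f j).coeff (∑ j ∈ s, k j) = ∏ j ∈ s, (f j).coeff (k j) := by
  classical
  induction s using Finset.induction_on with
  | empty => simp
  | insert a s ha ih =>
    rw [Finset.prod_insert ha, Finset.sum_insert ha, Finset.prod_insert ha,
      coeff_mul_add_eq_of_natDegree_le (h a), ih]
    exact (natDegree_prod_le _ _).trans (Finset.sum_le_sum fun j _ => h j)

lemma Gset_univ (k : Fin n → ℕ) (hk : 0 < ∑ j, k j) : Gset F k Finset.univ = ∅ := by
  ext A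
  simp only [Set.mem_empty_iff_false, iff_false]
  rintro ⟨h1, h2, h3⟩
  let L : Matrix (Fin n) (Fin n) F := Matrix.of fun r j => (A r j).coeff (k j)
  have hL : L.det = A.det.coeff (∑ j, k j) := by
    rw [Matrix.det_apply', Matrix.det_apply', finset_sum_coeff]
    refine Finset.sum_congr rfl fun σ _ => ?_
    rw [← C_eq_intCast, coeff_C_mul, coeff_prod_sum]
    · rfl
    · intro j; exact h2 _ _
  have hd : A.det.natDegree = 0 := natDegree_eq_zero_of_isUnit h1
  rw [coeff_eq_zero_of_natDegree_lt (by omega)] at hL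
  rw [Finset.coe_univ, linearIndepOn_univ] at h3
  have h4 : LinearIndependent F L.col := h3
  rw [Matrix.linearIndependent_cols_iff_isUnit, Matrix.isUnit_iff_isUnit_det, hL] at h4
  simp at h4

lemma main_count [Fintype F] (i0 : Fin n) (N : ℕ) : ∀ k : Fin n → ℕ, ∑ j, k j = N →
    1 ≤ k i0 → (∀ j, k j ≤ k i0) → ∀ T : Finset (Fin n), i0 ∉ T →
    (Gset F k T).ncard =
      Fintype.card F ^ (n - 1) * (Gset F (Function.update k i0 (k i0 - 1)) T).ncard := by
  classical
  induction N using Nat.strong_induction_on with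
  | _ N IH =>
  intro k hN h1 hmax
  have key : ∀ m : ℕ, ∀ T : Finset (Fin n), T.card = m → i0 ∉ T →
      (((Gset F k T).ncard =
        Fintype.card F ^ (n - 1) * (Gset F (Function.update k i0 (k i0 - 1)) T).ncard) ↔
      ((Gset F k ∅).ncard =
        Fintype.card F ^ (n - 1) * (Gset F (Function.update k i0 (k i0 - 1)) ∅).ncard)) := by
    intro m
    induction m with
    | zero =>
      intro T hT _
      rw [Finset.card_eq_zero.1 hT]
    | succ m ih =>
      intro T hT h0
      have hne : T.Nonempty := by rw [← Finset.card_pos]; omega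
      obtain ⟨i, hiT, hi⟩ := T.exists_max_image k hne
      have hii : i0 ≠ i := by rintro rfl; exact h0 hiT
      obtain ⟨S, hiS, rfl⟩ : ∃ S, i ∉ S ∧ T = insert i S :=
        ⟨T.erase i, by simp, (Finset.insert_erase hiT).symm⟩
      have h0S : i0 ∉ S := fun h => h0 (by simp [h])
      rw [← ih S (by rw [Finset.card_insert_of_notMem hiS] at hT; omega) h0S]
      have hk1 : ∀ j ∈ S, k j ≤ k i := fun j hj => hi j (by simp [hj])
      have hk2 : ∀ j ∈ S, Function.update k i0 (k i0 - 1) j ≤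
          Function.update k i0 (k i0 - 1) i := fun j hj => by
        rw [Function.update_of_ne hii.symm, Function.update_of_ne (by rintro rfl; exact h0S hj)]
        exact hk1 j hj
      rw [ncard_step k S i hiS hk1, ncard_step _ S i hiS hk2]
      have h5 : {A ∈ Gset F k S | lcol k A i = 0}.ncard = Fintype.card F ^ (n - 1) *
          {A ∈ Gset F (Function.update k i0 (k i0 - 1)) S |
            lcol (Function.update k i0 (k i0 - 1)) A i = 0}.ncard := by
        rcases Nat.eq_zero_or_pos (k i) with hz | hp
        · rw [Gset_zero k S i hz, Gset_zero _ S i (by rw [Function.update_of_ne hii.symm, hz])]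
          simp
        · rw [Gset_pos k S i hiS hp, Gset_pos _ S i hiS (by rwa [Function.update_of_ne hii.symm])]
          have := IH (∑ j, Function.update k i (k i - 1) j) (by
              rw [← hN]
              apply Finset.sum_lt_sum
              · intro j _
                by_cases hj : j = i
                · subst hj; simp
                · simp [hj]
              · exact ⟨i, Finset.mem_univ _, by simp; omega⟩)
            (Function.update k i (k i - 1)) rfl (by rwa [Function.update_of_ne hii]) (by
              intro j
              rw [Function.update_of_ne hii]
              by_cases hj : j = i
              · subst hj
                have := hmax j
                simp; omega
              · simp [hj, hmax j]) S h0S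
          rw [this, Function.update_of_ne hii, Function.update_of_ne hii.symm,
            Function.update_comm hii]
      rw [h5, mul_add, mul_left_comm (Fintype.card F ^ (n - 1))]
      omega
  intro T hT
  rw [key _ T rfl hT]
  rw [← key _ (Finset.univ.erase i0) rfl (by simp)]
  rw [ncard_step k _ i0 (by simp) (fun j _ => hmax j), Finset.insert_erase (Finset.mem_univ _),
    Gset_univ, Gset_pos k _ i0 (by simp) h1]
  · simp [Finset.card_erase_of_mem]
  · exact lt_of_lt_of_le h1 (Finset.single_le_sum (f := k) (fun _ _ => Nat.zero_le _) (Finset.mem_univ i0))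

lemma Gset_Pset [Fintype F] (k : Fin n → ℕ) :
    (Gset F k ∅).ncard = Nat.card (GL (Fin n) F) * (Pset F n k).ncard := by
  classical
  have himg : Gset F k ∅ =
      (fun p : GL (Fin n) F × GL (Fin n) F[X] =>
        (p.1 : Matrix (Fin n) (Fin n) F).map C * (p.2 : Matrix (Fin n) (Fin n) F[X])) ''
        (Set.univ ×ˢ Pset F n k) := by
    have hdeg : ∀ (U : Matrix (Fin n) (Fin n) F) (A : Matrix (Fin n) (Fin n) F[X]),
        (∀ i j, (A i j).natDegree ≤ k j) → ∀ i j, ((U.map C * A) i j).natDegree ≤ k j := by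
      intro U A hA i j
      rw [Matrix.mul_apply]
      refine natDegree_sum_le_of_forall_le _ _ fun l _ => ?_
      rw [Matrix.map_apply]
      exact (natDegree_C_mul_le _ _).trans (hA l j)
    ext B
    constructor
    · rintro ⟨h1, h2, -⟩
      have hB0 : IsUnit (B.map (constantCoeff : F[X] →+* F)).det := by
        have := h1.map (constantCoeff : F[X] →+* F)
        rwa [RingHom.map_det] at this
      let U : GL (Fin n) F := Matrix.GeneralLinearGroup.mkOfDetNeZero _ hB0.ne_zero
      have hUi : IsUnit ((U⁻¹ : GL (Fin n) F) : Matrix (Fin n) (Fin n) F).det :=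
        (Matrix.isUnit_iff_isUnit_det _).1 (Units.isUnit _)
      have hCi : IsUnit ((((U⁻¹ : GL (Fin n) F) : Matrix (Fin n) (Fin n) F)).map C * B).det := by
        rw [Matrix.det_mul]
        refine IsUnit.mul ?_ h1
        have := hUi.map (C : F →+* F[X])
        rwa [RingHom.map_det] at this
      let A : GL (Fin n) F[X] := ((Matrix.isUnit_iff_isUnit_det _).2 hCi).unit
      refine ⟨(U, A), ⟨trivial, ?_, ?_⟩, ?_⟩
      · intro i j
        exact natDegree_le_iff_degree_le.1 (hdeg _ B h2 i j)
      · change ((((U⁻¹ : GL (Fin n) F) : Matrix (Fin n) (Fin n) F)).map C * B).map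
          (constantCoeff : F[X] →+* F) = 1
        rw [Matrix.map_mul, Matrix.map_map]
        have : (constantCoeff : F[X] →+* F) ∘ (C : F →+* F[X]) = id := by
          funext x; simp
        rw [this, Matrix.map_id]
        change ((U⁻¹ : GL (Fin n) F) : Matrix (Fin n) (Fin n) F) * (U : Matrix (Fin n) (Fin n) F) = 1
        simp
      · change (U : Matrix (Fin n) (Fin n) F).map C *
          ((((U⁻¹ : GL (Fin n) F) : Matrix (Fin n) (Fin n) F)).map C * B) = B
        rw [← Matrix.mul_assoc, ← Matrix.map_mul]
        simp
    · rintro ⟨⟨U, A⟩, ⟨-, h1, h2⟩, rfl⟩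
      refine ⟨?_, hdeg _ _ fun i j => natDegree_le_iff_degree_le.2 (h1 i j), by simp⟩
      have hU : IsUnit (U : Matrix (Fin n) (Fin n) F).det :=
        (Matrix.isUnit_iff_isUnit_det _).1 (Units.isUnit _)
      have hA : IsUnit (A : Matrix (Fin n) (Fin n) F[X]).det :=
        (Matrix.isUnit_iff_isUnit_det _).1 (Units.isUnit _)
      rw [Matrix.det_mul]
      refine IsUnit.mul ?_ hA
      have := hU.map (C : F →+* F[X])
      rwa [RingHom.map_det] at this
  rw [himg, Set.ncard_image_of_injOn, Set.ncard_prod, Set.ncard_univ]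
  rintro ⟨U, A⟩ ⟨-, -, hA⟩ ⟨V, B⟩ ⟨-, -, hB⟩ h
  dsimp only at h hA hB
  have hmap : ∀ (U : GL (Fin n) F) (A : GL (Fin n) F[X]),
      (A : Matrix (Fin n) (Fin n) F[X]).map (fun p => p.coeff 0) = 1 →
      ((U : Matrix (Fin n) (Fin n) F).map C * (A : Matrix (Fin n) (Fin n) F[X])).map
        (constantCoeff : F[X] →+* F) = U := by
    intro U A hA
    rw [Matrix.map_mul, Matrix.map_map]
    have : (constantCoeff : F[X] →+* F) ∘ (C : F →+* F[X]) = id := by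
      funext x; simp
    rw [this, Matrix.map_id]
    have h2 : (A : Matrix (Fin n) (Fin n) F[X]).map (constantCoeff : F[X] →+* F) = 1 := hA
    rw [h2, mul_one]
  have hUV : U = V := by
    ext1
    rw [← hmap U A hA, h, hmap V B hB]
  subst hUV
  have hAB : A = B := by
    apply Units.ext
    have h3 := congrArg (fun M => (((U⁻¹ : GL (Fin n) F) : Matrix (Fin n) (Fin n) F)).map C * M) h
    simp only [← Matrix.mul_assoc, ← Matrix.map_mul] at h3
    simpa using h3
  rw [hAB]

end aux

/-- For `k₁ ≥ k₂ ≥ ⋯ ≥ kₙ ≥ 1`,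
`#P_{n;k₁,…,kₙ} = q^{n-1} · #P_{n;k₁-1,k₂,…,kₙ}`. -/
theorem stmt_7 (F : Type*) [Field F] [Fintype F] (q : ℕ) (hq : Fintype.card F = q)
    (n : ℕ) (hn : 0 < n) (k : Fin n → ℕ)
    (hdesc : ∀ i j : Fin n, i ≤ j → k j ≤ k i)
    (hpos : ∀ j : Fin n, 1 ≤ k j) :
    (Pset F n k).ncard
      = q ^ (n - 1) * (Pset F n (Function.update k ⟨0, hn⟩ (k ⟨0, hn⟩ - 1))).ncard := by
  subst hq
  have h := main_count (F := F) ⟨0, hn⟩ _ k rfl (hpos _)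
    (fun j => hdesc _ j (Fin.mk_le_of_le_val (Nat.zero_le _))) ∅ (by simp)
  rw [Gset_Pset, Gset_Pset, mul_left_comm] at h
  exact Nat.eq_of_mul_eq_mul_left Nat.card_pos h
end
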